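/- For every integer r ≥ 2 and every ε > 0 there exists d₀ = d₀(r, ε) such that for every fixed integer d ≥ d₀ the following holds with high probability: |α(H_r(n,d)) − Y·n| ≤ ε·Y·n, where Y := (r log d/((r−1)d))^{1/(r−1)}. -/

import Mathlib

open Finset Filter Real

open scoped Classical

/-- A set of vertices is independent if it contains no edge. -/
def IndepSet {n : ℕ} (E : Finset (Finset (Fin n))) (S : Finset (Fin n)) : Prop :=
  ∀ e ∈ E, ¬ e ⊆ S

/-- The independence number of the hypergraph with edge set `E`. -/
noncomputable def independenceNumber {n : ℕ} (E : Finset (Finset (Fin n))) : ℕ :=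
  sSup {s : ℕ | ∃ S : Finset (Fin n), S.card = s ∧ IndepSet E S}

/-- The family of all `d`-regular `r`-uniform hypergraphs on vertex set `Fin n`. -/
noncomputable def regularFamily (n r d : ℕ) : Finset (Finset (Finset (Fin n))) :=
  Finset.univ.filter (fun E : Finset (Finset (Fin n)) =>
    (∀ e ∈ E, e.card = r) ∧ ∀ v : Fin n, (E.filter (fun e => v ∈ e)).card = d)

/-- The probability that a uniformly random element of `family` satisfies `P`. -/
noncomputable def uniformProb {α : Type*} (family : Finset α) (P : α → Prop) : ℝ :=
  ((family.filter (fun x => P x)).card : ℝ) / (family.card : ℝ)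

/-!
A `d`-regular `(q + 1)`-uniform hypergraph on `n` vertices is spelled by a word with `q + 1` letters
in each row in which every vertex occurs `d` times. A uniform such word is simple (its rows spell
distinct edges of full size) with inverse-polynomial probability: the few coincidences of a
typical word are repaired by swaps. Exponentially unlikely events for words are therefore unlikely
for regular hypergraphs.

Write `Y` for the threshold density. Above `Y`, a union bound over vertex sets suffices. Below it,
the second moment of the number of independent sets of density about `(1 - ε) * Y` only shows that
one exists with probability at least `exp (-ε² Y² n / (128 d))`, up to a polynomial. But the
independence number changes by at most 2 when two letters are swapped, so it deviates by `ε * Y * n`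
from its mean with probability at most `exp (-ε² Y² n / (32 d))`. As this is smaller, the mean must
be near `Y * n`, and the independence number concentrates there.
-/

open scoped BigOperators

/-! ### Uniform probabilities and averages -/

section UniformProb

variable {α β ι : Type*}

lemma uniformProb_nonneg (A : Finset α) (P : α → Prop) : 0 ≤ uniformProb A P := by
  unfold uniformProb
  positivity

lemma uniformProb_le_one (A : Finset α) (P : α → Prop) : uniformProb A P ≤ 1 :=
  div_le_one_of_le₀ (mod_cast card_filter_le _ _) (by positivity)

lemma uniformProb_mono {A : Finset α} {P Q : α → Prop} (h : ∀ x ∈ A, P x → Q x) :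
    uniformProb A P ≤ uniformProb A Q := by
  unfold uniformProb
  gcongr ((card ?_ : ℕ) : ℝ) / _
  exact fun x hx => by simp only [mem_filter] at hx ⊢; exact ⟨hx.1, h x hx.1 hx.2⟩

lemma expect_boole (A : Finset α) (P : α → Prop) [DecidablePred P] :
    (𝔼 x ∈ A, if P x then (1 : ℝ) else 0) = uniformProb A P := by
  rw [expect_eq_sum_div_card, sum_boole, uniformProb]
  congr!

lemma uniformProb_add_uniformProb_not {A : Finset α} (hA : A.Nonempty) (P : α → Prop) :
    uniformProb A P + uniformProb A (fun x => ¬ P x) = 1 := by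
  rw [uniformProb, uniformProb, ← add_div, ← Nat.cast_add, card_filter_add_card_filter_not,
    div_self (mod_cast hA.card_ne_zero)]

lemma uniformProb_or_le (A : Finset α) (P Q : α → Prop) :
    uniformProb A (fun x => P x ∨ Q x) ≤ uniformProb A P + uniformProb A Q := by
  rw [uniformProb, uniformProb, uniformProb, ← add_div, ← Nat.cast_add]
  gcongr
  refine (card_le_card fun x hx => ?_).trans (card_union_le _ _)
  simpa [and_or_left] using hx

lemma uniformProb_exists_le_sum (A : Finset α) (s : Finset ι) (P : ι → α → Prop) :
    uniformProb A (fun x => ∃ i ∈ s, P i x) ≤ ∑ i ∈ s, uniformProb A (P i) := by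
  simp only [uniformProb, ← sum_div]
  gcongr
  rw [← Nat.cast_sum]
  gcongr
  refine (card_le_card fun x hx => ?_).trans card_biUnion_le
  simpa [and_left_comm] using hx

lemma mul_uniformProb_le_expect {A : Finset α} {F : α → ℝ} (hF : ∀ x ∈ A, 0 ≤ F x) (t : ℝ) :
    t * uniformProb A (fun x => t ≤ F x) ≤ 𝔼 x ∈ A, F x := by
  rw [← expect_boole, mul_expect]
  refine expect_le_expect fun x hx => ?_
  split_ifs with h
  · simpa using h
  · simpa using hF x hx

lemma uniformProb_filter_mul_le (A : Finset α) (P Q : α → Prop) [DecidablePred Q] :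
    uniformProb {x ∈ A | Q x} P * uniformProb A Q ≤ uniformProb A P := by
  rcases ({x ∈ A | Q x} : Finset α).eq_empty_or_nonempty with h | h
  · simpa [uniformProb, h] using uniformProb_nonneg A P
  have hQ : uniformProb A Q = (#{x ∈ A | Q x} : ℝ) / #A := by
    unfold uniformProb
    congr!
  rw [hQ, uniformProb, uniformProb, div_mul_div_cancel₀ (mod_cast h.card_ne_zero)]
  gcongr
  exact filter_subset _ _

lemma expect_comp_of_card_fiber_eq [DecidableEq β] {A : Finset α} {B : Finset β} {f : α → β}
    {k : ℕ} (hk : k ≠ 0)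
    (hf : ∀ x ∈ A, f x ∈ B) (hfib : ∀ y ∈ B, #{x ∈ A | f x = y} = k) (F : β → ℝ) :
    𝔼 x ∈ A, F (f x) = 𝔼 y ∈ B, F y := by
  have hcard : #A = k * #B := by
    rw [card_eq_sum_card_fiberwise hf, sum_congr rfl hfib, sum_const, smul_eq_mul, mul_comm]
  have hsum : ∑ x ∈ A, F (f x) = k * ∑ y ∈ B, F y := by
    rw [← sum_fiberwise_of_maps_to' hf F, mul_sum]
    exact sum_congr rfl fun y hy => by rw [sum_const, hfib y hy, nsmul_eq_mul]
  rw [expect_eq_sum_div_card, expect_eq_sum_div_card, hcard, hsum, Nat.cast_mul,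
    mul_div_mul_left _ _ (mod_cast hk)]

end UniformProb

/-! ### Words of prescribed content -/

/-- The words of content `c`: the maps `w : I → L`, seen as words whose positions are the elements
of `I`, in which each letter `j` occurs exactly `c j` times. -/
noncomputable def wordsOfContent (I : Type*) [Fintype I] {L : Type*} [Fintype L] [DecidableEq L]
    (c : L → ℕ) : Finset (I → L) :=
  {w | ∀ j, #{x | w x = j} = c j}

section Words

variable {I L : Type*} [Fintype I] [Fintype L] [DecidableEq L] {c : L → ℕ} {w : I → L}

lemma mem_wordsOfContent : w ∈ wordsOfContent I c ↔ ∀ j, #{x | w x = j} = c j := by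
  simp [wordsOfContent]

lemma comp_perm_mem_wordsOfContent (hw : w ∈ wordsOfContent I c) (σ : Equiv.Perm I) :
    w ∘ σ ∈ wordsOfContent I c := by
  refine mem_wordsOfContent.2 fun j => (mem_wordsOfContent.1 hw j).symm ▸ ?_
  exact card_equiv σ (by simp)

lemma exists_perm_comp_eq {w' : I → L} (hw : w ∈ wordsOfContent I c)
    (hw' : w' ∈ wordsOfContent I c) : ∃ σ : Equiv.Perm I, w ∘ σ = w' := by
  have e (j : L) : {x // w' x = j} ≃ {x // w x = j} := Fintype.equivOfCardEq <| by
    rw [Fintype.card_subtype, Fintype.card_subtype,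
      mem_wordsOfContent.1 hw, mem_wordsOfContent.1 hw']
  refine ⟨(Equiv.sigmaFiberEquiv w').symm.trans
    ((Equiv.sigmaCongrRight e).trans (Equiv.sigmaFiberEquiv w)), funext fun x => ?_⟩
  simpa [Equiv.sigmaFiberEquiv] using! (e (w' x) ⟨x, rfl⟩).2

lemma wordsOfContent_nonempty (hc : ∑ j, c j = Fintype.card I) :
    (wordsOfContent I c).Nonempty := by
  obtain ⟨e⟩ : Nonempty (I ≃ Σ j, Fin (c j)) := by simp [← Fintype.card_eq, hc]
  refine ⟨fun x => (e x).1, mem_wordsOfContent.2 fun j => ?_⟩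
  calc #{x | (e x).1 = j} = #{p : Σ j, Fin (c j) | p.1 = j} := card_equiv e (by simp)
    _ = Fintype.card (Fin (c j)) := by
        rw [← Fintype.card_subtype, Fintype.card_congr (Equiv.sigmaSubtype j)]
    _ = c j := Fintype.card_fin _

lemma sum_eq_card_of_mem_wordsOfContent (hw : w ∈ wordsOfContent I c) :
    ∑ j, c j = Fintype.card I := by
  simp_rw [← mem_wordsOfContent.1 hw]
  exact (card_eq_sum_card_fiberwise fun _ _ => mem_univ _).symm

lemma comp_mem_wordsOfContent {L' : Type*} [Fintype L'] [DecidableEq L'] (lab : L → L')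
    (hw : w ∈ wordsOfContent I c) :
    lab ∘ w ∈ wordsOfContent I fun j => ∑ v with lab v = j, c v := by
  refine mem_wordsOfContent.2 fun j => ?_
  rw [card_eq_sum_card_fiberwise (f := w) (t := {v | lab v = j}) fun x hx => by simpa using hx]
  refine sum_congr rfl fun v hv => ?_
  rw [← mem_wordsOfContent.1 hw v, filter_filter]
  congr! 2 with x
  have hlab : lab v = j := by simpa using hv
  exact and_iff_right_of_imp fun hx => by rw [Function.comp_apply, hx, hlab]

lemma card_filter_comp_perm_eq [DecidableEq I] {w' : I → L} (hw : w ∈ wordsOfContent I c)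
    (hw' : w' ∈ wordsOfContent I c) :
    #{σ : Equiv.Perm I | w ∘ σ = w'} = ∏ j, (c j).factorial := by
  obtain ⟨τ, rfl⟩ := exists_perm_comp_eq hw hw'
  calc #{σ : Equiv.Perm I | w ∘ σ = w ∘ τ}
      = #{σ : Equiv.Perm I | w ∘ σ = w} := by
        refine card_equiv (Equiv.mulRight τ⁻¹) fun σ => ?_
        simp [← Function.comp_assoc, Equiv.comp_symm_eq, Equiv.Perm.inv_def]
    _ = ∏ j, (c j).factorial := by
        simp_rw [← Fintype.card_subtype, DomMulAct.stabilizer_card, Fintype.card_subtype,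
          mem_wordsOfContent.1 hw]

lemma expect_comp_perm [DecidableEq I] (hw : w ∈ wordsOfContent I c) (F : (I → L) → ℝ) :
    𝔼 σ : Equiv.Perm I, F (w ∘ σ) = 𝔼 w' ∈ wordsOfContent I c, F w' :=
  expect_comp_of_card_fiber_eq (k := ∏ j, (c j).factorial)
    (prod_ne_zero_iff.2 fun j _ => (c j).factorial_ne_zero)
    (fun σ _ => comp_perm_mem_wordsOfContent hw σ) (fun _ hw' => card_filter_comp_perm_eq hw hw') F

lemma uniformProb_wordsOfContent_comp_perm (σ : Equiv.Perm I) (P : (I → L) → Prop) :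
    uniformProb (wordsOfContent I c) (fun w => P (w ∘ σ))
      = uniformProb (wordsOfContent I c) P := by
  simp_rw [← expect_boole]
  refine expect_equiv (σ.arrowCongr (Equiv.refl L)).symm (fun w => ?_) fun w _ => rfl
  refine ⟨fun hw => comp_perm_mem_wordsOfContent hw σ, fun hw => ?_⟩
  have h := comp_perm_mem_wordsOfContent hw σ⁻¹
  rwa [show (σ.arrowCongr (Equiv.refl L)).symm w = w ∘ σ from rfl, Function.comp_assoc,
    ← Equiv.Perm.coe_mul, mul_inv_cancel, Equiv.Perm.coe_one, Function.comp_id] at h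

lemma uniformProb_wordsOfContent_label {L' : Type*} [Fintype L'] [DecidableEq L'] (lab : L → L')
    (hc : ∑ j, c j = Fintype.card I) (P : (I → L') → Prop) :
    uniformProb (wordsOfContent I c) (fun w => P (lab ∘ w))
      = uniformProb (wordsOfContent I fun j => ∑ v with lab v = j, c v) P := by
  obtain ⟨w₀, hw₀⟩ := wordsOfContent_nonempty hc
  simp_rw [← expect_boole]
  rw [← expect_comp_perm hw₀ fun w => if P (lab ∘ w) then 1 else 0,
    ← expect_comp_perm (comp_mem_wordsOfContent lab hw₀)]
  rfl

lemma card_wordsOfContent_mul_prod_factorial (hc : ∑ j, c j = Fintype.card I) :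
    #(wordsOfContent I c) * ∏ j, (c j).factorial = (Fintype.card I).factorial := by
  obtain ⟨w₀, hw₀⟩ := wordsOfContent_nonempty hc
  rw [← Fintype.card_perm, ← card_univ,
    card_eq_sum_card_fiberwise (f := fun σ : Equiv.Perm I => w₀ ∘ σ) (t := wordsOfContent I c)
      fun σ _ => comp_perm_mem_wordsOfContent hw₀ σ,
    sum_congr rfl fun w hw => card_filter_comp_perm_eq hw₀ hw, sum_const, smul_eq_mul]

lemma prod_comp_of_mem_wordsOfContent {R : Type*} [CommMonoid R] (hw : w ∈ wordsOfContent I c)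
    (u : L → R) : ∏ x, u (w x) = ∏ j, u j ^ c j := by
  rw [← prod_fiberwise' univ w u]
  simp [mem_wordsOfContent.1 hw]

end Words

/-! ### The method of types -/

lemma factorial_mul_pow_le (a b : ℕ) : a.factorial * a ^ b ≤ b.factorial * a ^ a := by
  rcases le_total a b with h | h
  · calc a.factorial * a ^ b = a.factorial * a ^ (b - a) * a ^ a := by
          rw [mul_assoc, ← pow_add, Nat.sub_add_cancel h]
      _ ≤ b.factorial * a ^ a := by gcongr; exact Nat.factorial_mul_pow_sub_le_factorial h
  · have hfac := Nat.factorial_mul_descFactorial (Nat.sub_le a b)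
    rw [Nat.sub_sub_self h] at hfac
    calc a.factorial * a ^ b = b.factorial * a.descFactorial (a - b) * a ^ b := by rw [hfac]
      _ ≤ b.factorial * a ^ (a - b) * a ^ b := by gcongr; exact Nat.descFactorial_le_pow a (a - b)
      _ = b.factorial * a ^ a := by rw [mul_assoc, ← pow_add, Nat.sub_add_cancel h]

section MethodOfTypes

variable {I L : Type*} [Fintype I] [Fintype L] [DecidableEq L] {c : L → ℕ}

lemma card_wordsOfContent_mul_prod_pow_le (hc : ∑ j, c j = Fintype.card I) (c' : L → ℕ) :
    #(wordsOfContent I c') * ∏ j, c j ^ c' j ≤ #(wordsOfContent I c) * ∏ j, c j ^ c j := by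
  rcases (wordsOfContent I c').eq_empty_or_nonempty with h | ⟨w, hw⟩
  · simp [h]
  have hfac := card_wordsOfContent_mul_prod_factorial hc
  rw [← card_wordsOfContent_mul_prod_factorial (sum_eq_card_of_mem_wordsOfContent hw)] at hfac
  refine Nat.le_of_mul_le_mul_right (c := ∏ j, (c j).factorial) ?_
    (prod_pos fun j _ => (c j).factorial_pos)
  calc (#(wordsOfContent I c') * ∏ j, c j ^ c' j) * ∏ j, (c j).factorial
      = #(wordsOfContent I c') * ∏ j, (c j).factorial * c j ^ c' j := by
        rw [prod_mul_distrib]; ring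
    _ ≤ #(wordsOfContent I c') * ∏ j, (c' j).factorial * c j ^ c j :=
        Nat.mul_le_mul_left _ (prod_le_prod' fun j _ => factorial_mul_pow_le _ _)
    _ = (#(wordsOfContent I c) * ∏ j, c j ^ c j) * ∏ j, (c j).factorial := by
        rw [prod_mul_distrib, ← mul_assoc, ← hfac]; ring

lemma card_pow_card_le (hc : ∑ j, c j = Fintype.card I) :
    Fintype.card I ^ Fintype.card I
      ≤ (Fintype.card I + 1) ^ Fintype.card L * (#(wordsOfContent I c) * ∏ j, c j ^ c j) := by
  set N := Fintype.card I
  have hcount (w : I → L) :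
      (fun j => #{x | w x = j}) ∈ Fintype.piFinset fun _ : L => range (N + 1) :=
    Fintype.mem_piFinset.2 fun j => mem_range_succ_iff.2 (card_le_univ _)
  calc N ^ N = ∑ w : I → L, ∏ x, c (w x) := by
        rw [← Fintype.piFinset_univ, ← prod_univ_sum, hc, prod_const, card_univ]
    _ = ∑ c' ∈ Fintype.piFinset fun _ : L => range (N + 1),
          #(wordsOfContent I c') * ∏ j, c j ^ c' j := by
        rw [← sum_fiberwise_of_maps_to fun w _ => hcount w]
        refine sum_congr rfl fun c' _ => ?_
        simp_rw [funext_iff]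
        exact sum_const_nat fun w hw => prod_comp_of_mem_wordsOfContent hw c
    _ ≤ ∑ _c' ∈ Fintype.piFinset fun _ : L => range (N + 1),
          #(wordsOfContent I c) * ∏ j, c j ^ c j :=
        sum_le_sum fun c' _ => card_wordsOfContent_mul_prod_pow_le hc c'
    _ = _ := by simp

/-- The uniform word of content `c` is an i.i.d. word with letter probabilities `c j / N`
conditioned on an event of at least inverse polynomial probability. The weights `u` tilt the
i.i.d. measure: they multiply each word of content `c` by the same factor. -/
lemma uniformProb_wordsOfContent_mul_prod_pow_le [DecidableEq I]
    (hc : ∑ j, c j = Fintype.card I)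
    (P : (I → L) → Prop) [DecidablePred P] {u : L → ℝ} (hu : ∀ j, 0 ≤ u j) :
    uniformProb (wordsOfContent I c) P * ∏ j, u j ^ c j
      ≤ (Fintype.card I + 1) ^ Fintype.card L
        * ∑ w with P w, ∏ x, (c (w x) / Fintype.card I * u (w x) : ℝ) := by
  obtain rfl := Subsingleton.elim ‹DecidableEq I› (Classical.decEq I)
  set N := Fintype.card I
  set W := wordsOfContent I c
  have hW : (0 : ℝ) < #W := mod_cast (wordsOfContent_nonempty hc).card_pos
  have htype : 1 ≤ (N + 1 : ℝ) ^ Fintype.card L * (#W * ∏ j, (c j / N : ℝ) ^ c j) := by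
    simp_rw [div_pow]
    rw [prod_div_distrib, prod_pow_eq_pow_sum, hc, ← mul_div_assoc, ← mul_div_assoc,
      one_le_div (by exact_mod_cast Nat.pow_self_pos)]
    exact_mod_cast card_pow_card_le hc
  have hsub : #{w ∈ W | P w} * ∏ j, (c j / N * u j : ℝ) ^ c j
      ≤ ∑ w with P w, ∏ x, (c (w x) / N * u (w x) : ℝ) := by
    rw [← nsmul_eq_mul, ← sum_const]
    calc ∑ w ∈ W with P w, ∏ j, (c j / N * u j : ℝ) ^ c j
        = ∑ w ∈ W with P w, ∏ x, (c (w x) / N * u (w x) : ℝ) :=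
          sum_congr rfl fun w hw => (prod_comp_of_mem_wordsOfContent (mem_filter.1 hw).1
            fun j => (c j / N * u j : ℝ)).symm
      _ ≤ _ := sum_le_sum_of_subset_of_nonneg (filter_subset_filter _ (subset_univ _))
          fun w _ _ => prod_nonneg fun x _ => mul_nonneg (by positivity) (hu _)
  have hprob : 0 ≤ uniformProb W P * ∏ j, u j ^ c j :=
    mul_nonneg (uniformProb_nonneg _ _) (prod_nonneg fun j _ => pow_nonneg (hu j) _)
  calc uniformProb W P * ∏ j, u j ^ c j
      ≤ uniformProb W P * (∏ j, u j ^ c j)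
          * ((N + 1) ^ Fintype.card L * (#W * ∏ j, (c j / N : ℝ) ^ c j)) :=
        le_mul_of_one_le_right hprob htype
    _ = (N + 1) ^ Fintype.card L * (#{w ∈ W | P w} * ∏ j, (c j / N * u j : ℝ) ^ c j) := by
        have hP : uniformProb W P * #W = #{w ∈ W | P w} := by
          rw [uniformProb, div_mul_cancel₀ _ hW.ne']
          congr!
        simp_rw [mul_pow]
        rw [prod_mul_distrib, ← hP]
        ring
    _ ≤ _ := by gcongr

end MethodOfTypes

/-! ### Concentration of Lipschitz functions of a uniform word -/

section Concentration

lemma expect_exp_mul_sub_expect_le {ι : Type*} [Fintype ι] {X : ι → ℝ} {b : ℝ}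
    (hX : ∀ i j, |X i - X j| ≤ b) (t : ℝ) :
    𝔼 i, exp (t * (X i - 𝔼 j, X j)) ≤ exp (t ^ 2 * b ^ 2 / 2) := by
  rcases isEmpty_or_nonempty ι with hι | hι
  · simpa using (exp_pos _).le
  have hjensen (i : ι) : exp (t * (X i - 𝔼 j, X j)) ≤ 𝔼 j, exp (t * (X i - X j)) := by
    have hmean : t * (X i - 𝔼 j, X j) = ∑ j, (Fintype.card ι : ℝ)⁻¹ • (t * (X i - X j)) := by
      simp_rw [smul_eq_mul, mul_sub, sum_sub_distrib, ← mul_sum, Fintype.expect_eq_sum_div_card]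
      simp
      field_simp
    rw [hmean]
    refine (convexOn_exp.map_sum_le (fun _ _ => by positivity) (by simp) fun _ _ => trivial).trans
      (le_of_eq ?_)
    simp_rw [smul_eq_mul, ← mul_sum, Fintype.expect_eq_sum_div_card]
    ring
  have hsymm : 𝔼 i, 𝔼 j, exp (t * (X i - X j)) = 𝔼 i, 𝔼 j, cosh (t * (X i - X j)) := by
    have hflip : 𝔼 i, 𝔼 j, exp (t * (X i - X j)) = 𝔼 i, 𝔼 j, exp (-(t * (X i - X j))) := by
      rw [expect_comm]
      simp_rw [← mul_neg, neg_sub]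
    simp_rw [cosh_eq, ← expect_div, expect_add_distrib, ← hflip]
    ring
  calc 𝔼 i, exp (t * (X i - 𝔼 j, X j))
      ≤ 𝔼 i, 𝔼 j, cosh (t * (X i - X j)) := hsymm ▸ expect_le_expect fun i _ => hjensen i
    _ ≤ 𝔼 _i : ι, 𝔼 _j : ι, exp (t ^ 2 * b ^ 2 / 2) := by
        refine expect_le_expect fun i _ => expect_le_expect fun j _ => ?_
        refine (cosh_le_exp_half_sq _).trans (exp_le_exp.2 ?_)
        rw [mul_pow, ← sq_abs (X i - X j)]
        gcongr
        exact hX i j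
    _ = exp (t ^ 2 * b ^ 2 / 2) := by simp

lemma expect_perm_option {α : Type*} [Fintype α] [DecidableEq α]
    (F : Equiv.Perm (Option α) → ℝ) :
    𝔼 σ, F σ = 𝔼 i, 𝔼 e : Equiv.Perm α, F (Equiv.swap none i * Equiv.optionCongr e) := by
  rw [← Fintype.expect_equiv Equiv.Perm.decomposeOption.symm
    (fun p => F (Equiv.Perm.decomposeOption.symm p)) F fun _ => rfl, ← univ_product_univ,
    expect_product]
  rfl

/-- One step of the Doob martingale revealing the image of one point at a time: fixing that image
leaves a uniform permutation of the remaining points, and changing it moves the conditional mean by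
at most `2 * b`. -/
lemma expect_exp_perm_option_le {α : Type*} [Fintype α] [DecidableEq α]
    {f : Equiv.Perm (Option α) → ℝ} {b t B : ℝ}
    (hf : ∀ σ x y, |f (Equiv.swap x y * σ) - f σ| ≤ b)
    (ih : ∀ g : Equiv.Perm α → ℝ, (∀ σ x y, |g (Equiv.swap x y * σ) - g σ| ≤ b) →
      𝔼 σ, exp (t * (g σ - 𝔼 τ, g τ)) ≤ B) :
    𝔼 σ, exp (t * (f σ - 𝔼 τ, f τ)) ≤ exp (2 * t ^ 2 * b ^ 2) * B := by
  set g : Option α → Equiv.Perm α → ℝ :=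
    fun i e => f (Equiv.swap none i * Equiv.optionCongr e) with hg
  have hgLip (i : Option α) (e : Equiv.Perm α) (x y : α) :
      |g i (Equiv.swap x y * e) - g i e| ≤ b := by
    have h : Equiv.swap none i * Equiv.optionCongr (Equiv.swap x y * e)
        = Equiv.swap (Equiv.swap none i (some x)) (Equiv.swap none i (some y))
          * (Equiv.swap none i * Equiv.optionCongr e) := by
      rw [show Equiv.optionCongr (Equiv.swap x y * e)
          = Equiv.optionCongr (Equiv.swap x y) * Equiv.optionCongr e from
          Equiv.optionCongr_trans _ _, Equiv.optionCongr_swap, ← mul_assoc,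
        Equiv.mul_swap_eq_swap_mul, mul_assoc]
    simp only [hg, h]
    exact hf _ _ _
  have hmean (i j : Option α) : |(𝔼 e, g i e) - 𝔼 e, g j e| ≤ 2 * b := by
    rw [← expect_sub_distrib]
    refine (abs_expect_le _ _).trans (expect_le univ_nonempty fun e _ => ?_)
    have hi := hf (Equiv.optionCongr e) none i
    have hj := hf (Equiv.optionCongr e) none j
    rw [abs_sub_comm] at hj
    calc |g i e - g j e| ≤ _ := abs_sub_le _ (f (Equiv.optionCongr e)) _
      _ ≤ 2 * b := by linarith
  have hB : 0 ≤ B := (expect_nonneg fun _ _ => (exp_pos _).le).trans (ih (g none) (hgLip none))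
  calc 𝔼 σ, exp (t * (f σ - 𝔼 τ, f τ))
      = 𝔼 i, exp (t * ((𝔼 e, g i e) - 𝔼 j, 𝔼 e, g j e))
          * 𝔼 e, exp (t * (g i e - 𝔼 e', g i e')) := by
        simp_rw [expect_perm_option, mul_expect, ← exp_add]
        refine expect_congr rfl fun i _ => expect_congr rfl fun e _ => ?_
        congr 1
        ring
    _ ≤ 𝔼 i, exp (t * ((𝔼 e, g i e) - 𝔼 j, 𝔼 e, g j e)) * B :=
        expect_le_expect fun i _ =>
          mul_le_mul_of_nonneg_left (ih (g i) (hgLip i)) (exp_pos _).le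
    _ ≤ exp (2 * t ^ 2 * b ^ 2) * B := by
        rw [← expect_mul]
        exact mul_le_mul_of_nonneg_right
          ((expect_exp_mul_sub_expect_le hmean t).trans_eq (by ring_nf)) hB

lemma expect_exp_perm_le {α : Type*} [Fintype α] [DecidableEq α] {f : Equiv.Perm α → ℝ} {b : ℝ}
    (hf : ∀ σ x y, |f (Equiv.swap x y * σ) - f σ| ≤ b) (t : ℝ) :
    𝔼 σ, exp (t * (f σ - 𝔼 τ, f τ)) ≤ exp (2 * t ^ 2 * b ^ 2 * Fintype.card α) := by
  refine Fintype.induction_empty_option (P := fun α _ => ∀ [DecidableEq α]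
      (f : Equiv.Perm α → ℝ), (∀ σ x y, |f (Equiv.swap x y * σ) - f σ| ≤ b) →
      𝔼 σ, exp (t * (f σ - 𝔼 τ, f τ)) ≤ exp (2 * t ^ 2 * b ^ 2 * Fintype.card α))
    (fun α β _ e ih _ f hf => ?_) (fun f _ => by simp) (fun α _ ih inst f hf => ?_) α f hf
  · let := Fintype.ofEquiv β e.symm
    have h := ih (fun σ => f (e.permCongr σ)) fun σ x y => by
      rw [← e.permCongrHom_coe, map_mul, e.permCongrHom_coe, e.permCongr_def (Equiv.swap x y),
        Equiv.symm_trans_swap_trans]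
      exact hf (e.permCongr σ) (e x) (e y)
    rw [Fintype.expect_equiv e.permCongr _ f fun _ => rfl] at h
    rw [← Fintype.expect_equiv e.permCongr _ (fun σ => exp (t * (f σ - 𝔼 τ, f τ))) fun _ => rfl]
    convert h using 4
    exact (Fintype.card_congr e).symm
  · obtain rfl : inst = Option.instDecidableEq := Subsingleton.elim _ _
    refine (expect_exp_perm_option_le (t := t) hf fun g hg => ih g hg).trans_eq ?_
    rw [← exp_add]
    congr 1
    push_cast [Fintype.card_option]
    ring

variable {I L : Type*} [Fintype I] [DecidableEq I] [Fintype L] [DecidableEq L] {c : L → ℕ}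
  {F : (I → L) → ℝ} {b : ℝ}

lemma expect_exp_wordsOfContent_le
    (hF : ∀ w ∈ wordsOfContent I c, ∀ x y, |F (w ∘ Equiv.swap x y) - F w| ≤ b) (t : ℝ) :
    𝔼 w ∈ wordsOfContent I c, exp (t * (F w - 𝔼 v ∈ wordsOfContent I c, F v))
      ≤ exp (2 * t ^ 2 * b ^ 2 * Fintype.card I) := by
  rcases (wordsOfContent I c).eq_empty_or_nonempty with h | ⟨w₀, hw₀⟩
  · simpa [h] using (exp_pos _).le
  rw [← expect_comp_perm hw₀, ← expect_comp_perm hw₀ F]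
  refine expect_exp_perm_le (f := fun σ => F (w₀ ∘ σ)) (fun σ x y => ?_) t
  rw [Equiv.swap_mul_eq_mul_swap, Equiv.Perm.coe_mul, ← Function.comp_assoc]
  exact hF _ (comp_perm_mem_wordsOfContent hw₀ σ) _ _

lemma uniformProb_expect_add_le
    (hF : ∀ w ∈ wordsOfContent I c, ∀ x y, |F (w ∘ Equiv.swap x y) - F w| ≤ b) {s : ℝ}
    (hs : 0 ≤ s) :
    uniformProb (wordsOfContent I c) (fun w => (𝔼 v ∈ wordsOfContent I c, F v) + s ≤ F w)
      ≤ exp (-(s ^ 2 / (8 * b ^ 2 * Fintype.card I))) := by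
  set N : ℝ := (Fintype.card I : ℝ)
  rcases eq_or_ne (b ^ 2 * N) 0 with h | h
  · rw [mul_assoc, h]
    simpa using uniformProb_le_one _ _
  set t := s / (4 * (b ^ 2 * N))
  have ht : 0 ≤ t := by positivity
  have hmarkov := mul_uniformProb_le_expect (A := wordsOfContent I c)
    (F := fun w => exp (t * (F w - 𝔼 v ∈ wordsOfContent I c, F v)))
    (fun _ _ => (exp_pos _).le) (exp (t * s))
  have hsplit : 2 * t ^ 2 * b ^ 2 * N = t * s + -(s ^ 2 / (8 * b ^ 2 * N)) := by
    simp only [t]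
    field_simp
    ring
  refine le_of_mul_le_mul_left ?_ (exp_pos (t * s))
  rw [← exp_add, ← hsplit]
  refine le_trans ?_ (hmarkov.trans (expect_exp_wordsOfContent_le hF t))
  refine mul_le_mul_of_nonneg_left (uniformProb_mono fun w _ hw => ?_) (exp_pos _).le
  exact exp_le_exp.2 (mul_le_mul_of_nonneg_left (by linarith) ht)

lemma uniformProb_le_expect_sub_le
    (hF : ∀ w ∈ wordsOfContent I c, ∀ x y, |F (w ∘ Equiv.swap x y) - F w| ≤ b) {s : ℝ}
    (hs : 0 ≤ s) :
    uniformProb (wordsOfContent I c) (fun w => F w ≤ (𝔼 v ∈ wordsOfContent I c, F v) - s)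
      ≤ exp (-(s ^ 2 / (8 * b ^ 2 * Fintype.card I))) := by
  refine (uniformProb_mono fun w _ hw => ?_).trans
    (uniformProb_expect_add_le (F := fun w => -F w) (fun w hw x y => ?_) hs)
  · rw [expect_neg_distrib]
    linarith
  · rw [neg_sub_neg, abs_sub_comm]
    exact hF w hw x y

end Concentration

/-! ### Hypergraphs spelled by words -/

section Hypergraph

variable {n d : ℕ} {E : Finset (Finset (Fin n))} {S T : Finset (Fin n)}

lemma mem_regularFamily {r : ℕ} :
    E ∈ regularFamily n r d ↔ (∀ e ∈ E, #e = r) ∧ ∀ v, #{e ∈ E | v ∈ e} = d := by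
  simp [regularFamily]

lemma card_mul_of_mem_regularFamily {r : ℕ} (hE : E ∈ regularFamily n r d) : #E * r = d * n := by
  obtain ⟨huniform, hregular⟩ := mem_regularFamily.1 hE
  have h := sum_card_bipartiteAbove_eq_sum_card_bipartiteBelow (s := E) (t := univ)
    fun (e : Finset (Fin n)) v => v ∈ e
  simp only [bipartiteAbove, bipartiteBelow, hregular, filter_univ_mem] at h
  rw [sum_const_nat huniform] at h
  simpa [mul_comm d] using h

lemma IndepSet.mono (hS : IndepSet E S) (hT : T ⊆ S) : IndepSet E T :=
  fun e he h => hS e he (h.trans hT)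

lemma IndepSet.card_le_independenceNumber (hS : IndepSet E S) : #S ≤ independenceNumber E :=
  le_csSup ⟨n, by rintro _ ⟨T, rfl, -⟩; exact card_finset_fin_le T⟩ ⟨S, rfl, hS⟩

lemma exists_indepSet_card_eq_independenceNumber (hE : ∅ ∉ E) :
    ∃ S, #S = independenceNumber E ∧ IndepSet E S :=
  Nat.sSup_mem (s := {s | ∃ S : Finset (Fin n), #S = s ∧ IndepSet E S})
    ⟨0, ∅, card_empty, fun e he h => hE (subset_empty.1 h ▸ he)⟩
    ⟨n, by rintro _ ⟨T, rfl, -⟩; exact card_finset_fin_le T⟩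

variable {I J : Type*} [Fintype I] [Fintype J] {w : I × J → Fin n}

/-- The set of letters in row `i` of a word `w` arranged as a rectangular array. -/
def row (w : I × J → Fin n) (i : I) : Finset (Fin n) := univ.image fun j => w (i, j)

/-- The hypergraph whose edges are the rows of `w`. Reading a uniformly random word of constant
content `d` in this way gives the configuration model. -/
def edgesOf (w : I × J → Fin n) : Finset (Finset (Fin n)) := univ.image (row w)

/-- A word is simple if no letter is repeated within a row and no two rows have the same letters,
so that it spells a hypergraph without degenerate or multiple edges. -/
def SimpleWord (w : I × J → Fin n) : Prop :=
  (∀ i, Function.Injective fun j => w (i, j)) ∧ Function.Injective (row w)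

omit [Fintype I] in
lemma mem_row {i : I} {v : Fin n} : v ∈ row w i ↔ ∃ j, w (i, j) = v := by
  simp [row]

lemma mem_edgesOf {e : Finset (Fin n)} : e ∈ edgesOf w ↔ ∃ i, row w i = e := by
  simp [edgesOf]

lemma indepSet_edgesOf_iff : IndepSet (edgesOf w) S ↔ ∀ i, ∃ j, w (i, j) ∉ S := by
  simp [IndepSet, edgesOf, row, subset_iff]

lemma empty_notMem_edgesOf [Nonempty J] : ∅ ∉ edgesOf w := by
  simp [edgesOf, row, image_eq_empty, univ_eq_empty_iff]

/-- Exchanging two letters only affects the rows containing them, and removing both letters from an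
independent set keeps it independent. -/
lemma independenceNumber_edgesOf_le_comp_swap [DecidableEq I] [DecidableEq J] [Nonempty J]
    (w : I × J → Fin n) (x y : I × J) :
    independenceNumber (edgesOf w) ≤ independenceNumber (edgesOf (w ∘ Equiv.swap x y)) + 2 := by
  obtain ⟨S, hcard, hS⟩ := exists_indepSet_card_eq_independenceNumber (E := edgesOf w)
    empty_notMem_edgesOf
  have hsdiff : IndepSet (edgesOf (w ∘ Equiv.swap x y)) (S \ {w x, w y}) := by
    refine indepSet_edgesOf_iff.2 fun i => ?_
    rcases eq_or_ne x.1 i with rfl | hx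
    · exact ⟨x.2, by simp⟩
    rcases eq_or_ne y.1 i with rfl | hy
    · exact ⟨y.2, by simp⟩
    obtain ⟨j, hj⟩ := indepSet_edgesOf_iff.1 hS i
    refine ⟨j, ?_⟩
    rw [Function.comp_apply, Equiv.swap_apply_of_ne_of_ne (by rintro rfl; exact hx rfl)
      (by rintro rfl; exact hy rfl)]
    simp [hj]
  calc independenceNumber (edgesOf w) = #S := hcard.symm
    _ ≤ #(S \ {w x, w y}) + #{w x, w y} := by
        rw [← card_sdiff_add_card_inter S {w x, w y}]
        gcongr
        exact inter_subset_right
    _ ≤ _ := add_le_add hsdiff.card_le_independenceNumber card_le_two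

lemma abs_independenceNumber_edgesOf_comp_swap_sub_le [DecidableEq I] [DecidableEq J] [Nonempty J]
    (w : I × J → Fin n) (x y : I × J) :
    |(independenceNumber (edgesOf (w ∘ Equiv.swap x y)) : ℝ) - independenceNumber (edgesOf w)|
      ≤ 2 := by
  have h := independenceNumber_edgesOf_le_comp_swap w x y
  have h' := independenceNumber_edgesOf_le_comp_swap (w ∘ Equiv.swap x y) x y
  rw [Function.comp_assoc, ← Equiv.Perm.coe_mul, Equiv.swap_mul_self, Equiv.Perm.coe_one,
    Function.comp_id] at h'
  rify at h h'
  rw [abs_le]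
  constructor <;> linarith

lemma SimpleWord.card_filter_edgesOf (hw : SimpleWord w) (v : Fin n) :
    #{e ∈ edgesOf w | v ∈ e} = #{x | w x = v} := by
  symm
  refine card_bij (fun x _ => row w x.1) (fun x hx => ?_) (fun x hx y hy h => ?_) fun e he => ?_
  · simp only [mem_filter, mem_univ, true_and] at hx
    exact mem_filter.2 ⟨mem_edgesOf.2 ⟨x.1, rfl⟩, mem_row.2 ⟨x.2, hx⟩⟩
  · obtain ⟨i, j⟩ := x
    obtain ⟨i', j'⟩ := y
    obtain rfl : i = i' := hw.2 h
    simp only [mem_filter, mem_univ, true_and] at hx hy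
    rw [hw.1 i (hx.trans hy.symm)]
  · obtain ⟨he, hv⟩ := mem_filter.1 he
    obtain ⟨i, rfl⟩ := mem_edgesOf.1 he
    obtain ⟨j, rfl⟩ := mem_row.1 hv
    exact ⟨(i, j), by simp, rfl⟩

lemma SimpleWord.edgesOf_mem_regularFamily (hw : SimpleWord w)
    (hd : w ∈ wordsOfContent (I × J) fun _ => d) :
    edgesOf w ∈ regularFamily n (Fintype.card J) d := by
  refine mem_regularFamily.2 ⟨fun e he => ?_, fun v => ?_⟩
  · obtain ⟨i, rfl⟩ := mem_edgesOf.1 he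
    rw [row, card_image_of_injective _ (hw.1 i), card_univ]
  · rw [hw.card_filter_edgesOf, mem_wordsOfContent.1 hd]

/-- A simple word spelling `E` amounts to an enumeration of the edges together with an enumeration
of each edge. -/
lemma card_filter_simpleWord_edgesOf_eq [DecidableEq I] [DecidableEq J] [Nonempty J]
    (hI : Fintype.card I * Fintype.card J = d * n) (hE : E ∈ regularFamily n (Fintype.card J) d) :
    #{w : I × J → Fin n | SimpleWord w ∧ edgesOf w = E}
      = (Fintype.card I).factorial * (Fintype.card J).factorial ^ Fintype.card I := by
  obtain ⟨eI⟩ : Nonempty (I ≃ E) := by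
    rw [← Fintype.card_eq, Fintype.card_coe]
    exact Nat.eq_of_mul_eq_mul_right Fintype.card_pos
      (hI.trans (card_mul_of_mem_regularFamily hE).symm)
  have eJ (e : E) : J ≃ e.1 := Fintype.equivOfCardEq <| by
    rw [Fintype.card_coe, (mem_regularFamily.1 hE).1 _ e.2]
  have hcard : Fintype.card (Σ σ : I ≃ E, ∀ i, J ≃ (σ i).1)
      = (Fintype.card I).factorial * (Fintype.card J).factorial ^ Fintype.card I := by
    simp [Fintype.card_sigma, Fintype.card_pi, Fintype.card_equiv (eJ _), Fintype.card_equiv eI]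
  have hrow (p : Σ σ : I ≃ E, ∀ i, J ≃ (σ i).1) (i : I) :
      row (fun x => (p.2 x.1 x.2 : Fin n)) i = p.1 i := by
    ext v
    refine mem_row.trans ⟨?_, fun hv => ⟨(p.2 i).symm ⟨v, hv⟩, by simp⟩⟩
    rintro ⟨j, rfl⟩
    exact (p.2 i j).2
  rw [← hcard, ← card_univ]
  symm
  refine card_bij (fun p _ x => (p.2 x.1 x.2 : Fin n)) (fun p _ => ?_) ?_ ?_
  · refine mem_filter.2 ⟨mem_univ _, ⟨fun i j j' h => (p.2 i).injective (Subtype.ext h),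
      fun i i' h => p.1.injective (Subtype.ext ?_)⟩, ?_⟩
    · rw [← hrow, ← hrow]
      exact h
    · ext e
      simp_rw [mem_edgesOf, hrow]
      exact ⟨by rintro ⟨i, rfl⟩; exact (p.1 i).2, fun he => ⟨p.1.symm ⟨e, he⟩, by simp⟩⟩
  · rintro ⟨σ, f⟩ - ⟨τ, g⟩ - h
    obtain rfl : σ = τ := Equiv.ext fun i => Subtype.ext <| by
      rw [← hrow ⟨σ, f⟩, ← hrow ⟨τ, g⟩, h]
    congr 1
    exact funext fun i => Equiv.ext fun j => Subtype.ext (congrFun h (i, j))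
  · intro w hmem
    obtain ⟨-, hw, rfl⟩ := mem_filter.1 hmem
    have hσ : Function.Bijective fun i => (⟨row w i, mem_edgesOf.2 ⟨i, rfl⟩⟩ : edgesOf w) :=
      ⟨fun i i' h => hw.2 (congrArg Subtype.val h), fun ⟨e, he⟩ =>
        (mem_edgesOf.1 he).imp fun i hi => Subtype.ext hi⟩
    have hf (i : I) : Function.Bijective fun j => (⟨w (i, j), mem_row.2 ⟨j, rfl⟩⟩ : row w i) :=
      ⟨fun j j' h => hw.1 i (congrArg Subtype.val h), fun ⟨v, hv⟩ =>
        (mem_row.1 hv).imp fun j hj => Subtype.ext hj⟩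
    exact ⟨⟨.ofBijective _ hσ, fun i => .ofBijective _ (hf i)⟩, mem_univ _, rfl⟩

lemma uniformProb_regularFamily_mul_le [Nonempty J]
    (hI : Fintype.card I * Fintype.card J = d * n) (P : Finset (Finset (Fin n)) → Prop) :
    uniformProb (regularFamily n (Fintype.card J) d) P
        * uniformProb (wordsOfContent (I × J) fun _ : Fin n => d) SimpleWord
      ≤ uniformProb (wordsOfContent (I × J) fun _ : Fin n => d) fun w => P (edgesOf w) := by
  set W := wordsOfContent (I × J) fun _ : Fin n => d
  have hfib (E) (hE : E ∈ regularFamily n (Fintype.card J) d) :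
      #{w ∈ {w ∈ W | SimpleWord w} | edgesOf w = E}
        = (Fintype.card I).factorial * (Fintype.card J).factorial ^ Fintype.card I := by
    rw [← card_filter_simpleWord_edgesOf_eq hI hE]
    congr 1
    ext w
    simp only [mem_filter, mem_univ, true_and, and_assoc, and_iff_right_iff_imp]
    rintro ⟨hw, rfl⟩
    exact mem_wordsOfContent.2 fun v => by
      rw [← hw.card_filter_edgesOf, (mem_regularFamily.1 hE).2]
  have htransfer := expect_comp_of_card_fiber_eq (A := {w ∈ W | SimpleWord w}) (f := edgesOf)
    (by positivity) (fun w hw => (mem_filter.1 hw).2.edgesOf_mem_regularFamily (mem_filter.1 hw).1)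
    hfib fun E => if P E then 1 else 0
  rw [expect_boole, expect_boole] at htransfer
  rw [← htransfer]
  exact uniformProb_filter_mul_le _ _ _

end Hypergraph

/-! ### Simple words are not rare -/

section Coincidences

variable {I L : Type*} [Fintype I] [Fintype L] [DecidableEq L] {c : L → ℕ} {d : ℕ}
  {x y z t : I}

lemma card_mul_uniformProb_and_eq_le [DecidableEq I] (hc : ∀ j, c j ≤ d) {s : Finset I}
    (hx : x ∉ s) (hy : y ∈ s) (Q : (I → L) → Prop)
    (hQ : ∀ y' ∈ s, ∀ w, Q (w ∘ Equiv.swap y y') ↔ Q w) :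
    #s * uniformProb (wordsOfContent I c) (fun w => Q w ∧ w x = w y)
      ≤ d * uniformProb (wordsOfContent I c) Q := by
  have hswap (y') (hy' : y' ∈ s) : uniformProb (wordsOfContent I c) (fun w => Q w ∧ w x = w y)
      = 𝔼 w ∈ wordsOfContent I c, if Q w ∧ w x = w y' then (1 : ℝ) else 0 := by
    rw [expect_boole, ← uniformProb_wordsOfContent_comp_perm (Equiv.swap y y')]
    simp only [hQ y' hy', Function.comp_apply, Equiv.swap_apply_left,
      Equiv.swap_apply_of_ne_of_ne (ne_of_mem_of_not_mem hy hx).symm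
        (ne_of_mem_of_not_mem hy' hx).symm]
  rw [← nsmul_eq_mul, ← sum_const, sum_congr rfl hswap, ← expect_sum_comm, ← expect_boole,
    mul_expect]
  refine expect_le_expect fun w hw => ?_
  by_cases h : Q w
  · simp only [h, true_and, if_true, mul_one, sum_boole]
    refine mod_cast le_trans (card_le_card fun y' hy' => ?_)
      ((mem_wordsOfContent.1 hw (w x)).trans_le (hc _))
    simpa using (mem_filter.1 hy').2.symm
  · simp [h]

lemma uniformProb_eq_le (hc : ∀ j, c j ≤ d) (hI : 2 ≤ Fintype.card I) (hxy : x ≠ y) :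
    uniformProb (wordsOfContent I c) (fun w => w x = w y) ≤ 2 * d / Fintype.card I := by
  have h := card_mul_uniformProb_and_eq_le (x := x) (s := {x}ᶜ) hc (by simp)
    (by simpa using hxy.symm) (fun _ => True) (by simp)
  simp only [true_and, card_compl, card_singleton] at h
  rw [Nat.cast_sub (by lia), Nat.cast_one] at h
  rw [le_div_iff₀ (by positivity)]
  have hI' : (2 : ℝ) ≤ Fintype.card I := mod_cast hI
  nlinarith [uniformProb_le_one (wordsOfContent I c) fun _ => True,
    uniformProb_nonneg (wordsOfContent I c) fun w => w x = w y, (Nat.cast_nonneg d : (0 : ℝ) ≤ d)]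

lemma uniformProb_eq_and_eq_le (hc : ∀ j, c j ≤ d) (hI : 6 ≤ Fintype.card I) (hzt : z ≠ t)
    (hxy : x ≠ y) (hyz : y ≠ z) (hyt : y ≠ t) :
    uniformProb (wordsOfContent I c) (fun w => w z = w t ∧ w x = w y)
      ≤ 4 * d ^ 2 / Fintype.card I ^ 2 := by
  have h := card_mul_uniformProb_and_eq_le (x := x) (y := y) (s := {x, z, t}ᶜ) hc (by simp)
    (by simp [hxy.symm, hyz, hyt]) (fun w => w z = w t) fun y' hy' w => by
      simp only [mem_compl, mem_insert, mem_singleton, not_or] at hy'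
      simp only [Function.comp_apply, Equiv.swap_apply_of_ne_of_ne hyz.symm (Ne.symm hy'.2.1),
        Equiv.swap_apply_of_ne_of_ne hyt.symm (Ne.symm hy'.2.2)]
  have hI' : (6 : ℝ) ≤ Fintype.card I := mod_cast hI
  have hs : (Fintype.card I : ℝ) / 2 ≤ #({x, z, t}ᶜ : Finset I) := by
    rw [card_compl, Nat.cast_sub (card_le_univ _)]
    have : (#{x, z, t} : ℝ) ≤ 3 := mod_cast card_le_three
    linarith
  have hpair := uniformProb_eq_le hc (by lia) hzt
  rw [le_div_iff₀ (by positivity)] at hpair ⊢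
  have hnonneg := uniformProb_nonneg (wordsOfContent I c) fun w => w z = w t ∧ w x = w y
  nlinarith [mul_le_mul_of_nonneg_right hs hnonneg, (Nat.cast_nonneg d : (0 : ℝ) ≤ d)]

end Coincidences

section SimpleWords

variable {n d : ℕ} {I J : Type*} {w : I × J → Fin n} {p q a b x y : I × J}

/-- The slots `p`, `q`, `b`, `a` form a closed non-backtracking walk of length four in the incidence
graph of rows and letters. A letter occurring at two slots `p`, `q` of one row yields the degenerate
walk `p`, `q`, `p`, `q`. -/
def ShortCycle (w : I × J → Fin n) (p q b a : I × J) : Prop :=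
  (p ≠ q ∧ p.1 = q.1) ∧ (q ≠ b ∧ w q = w b) ∧ (b ≠ a ∧ b.1 = a.1) ∧ a ≠ p ∧ w a = w p

/-- A slot is bad if it lies on a short cycle; these are the obstructions to simplicity. -/
def BadSlot (w : I × J → Fin n) (p : I × J) : Prop := ∃ q b a, ShortCycle w p q b a

lemma ShortCycle.reverse (h : ShortCycle w p q b a) : ShortCycle w q p a b :=
  ⟨⟨h.1.1.symm, h.1.2.symm⟩, ⟨h.2.2.2.1.symm, h.2.2.2.2.symm⟩,
    ⟨h.2.2.1.1.symm, h.2.2.1.2.symm⟩, h.2.1.1.symm, h.2.1.2.symm⟩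

lemma ShortCycle.rotate (h : ShortCycle w p q b a) : ShortCycle w b a p q :=
  ⟨h.2.2.1, h.2.2.2, h.1, h.2.1⟩

lemma BadSlot.of_eq (hpq : p ≠ q) (hrow : p.1 = q.1) (hw : w p = w q) : BadSlot w p :=
  ⟨q, p, q, ⟨hpq, hrow⟩, ⟨hpq.symm, hw.symm⟩, ⟨hpq, hrow⟩, hpq.symm, hw.symm⟩

variable [Fintype J]

lemma simpleWord_of_forall_not_badSlot [Nontrivial J] (h : ∀ p, ¬ BadSlot w p) : SimpleWord w := by
  have hinj (i : I) : Function.Injective fun j => w (i, j) := fun j j' hj => by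
    by_contra hne
    exact h (i, j) (.of_eq (q := (i, j')) (by simpa using hne) rfl hj)
  refine ⟨hinj, fun i i' hi => by_contra fun hne => ?_⟩
  obtain ⟨j, j', hj⟩ := exists_pair_ne J
  obtain ⟨k, hk⟩ := mem_row.1 (hi ▸ mem_row.2 ⟨j, rfl⟩ : w (i, j) ∈ row w i')
  obtain ⟨k', hk'⟩ := mem_row.1 (hi ▸ mem_row.2 ⟨j', rfl⟩ : w (i, j') ∈ row w i')
  refine h (i, j) ⟨(i, j'), (i', k'), (i', k), ⟨by simpa using hj, rfl⟩, ⟨by simp [hne], hk'.symm⟩,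
    ⟨?_, rfl⟩, by simp [Ne.symm hne], hk⟩
  simp only [ne_eq, Prod.mk.injEq, true_and]
  rintro rfl
  exact hj (hinj i (hk.symm.trans hk'))

lemma ShortCycle.ne_of_comp_swap [DecidableEq I] [DecidableEq J] (hy : ¬ BadSlot w y)
    (hfar : ∀ i, Disjoint (row w i) (row w x.1) ∨ Disjoint (row w i) (row w y.1))
    (h : ShortCycle (w ∘ Equiv.swap x y) p q b a) : p ≠ x ∧ p ≠ y := by
  have hnear {s t s' t' : I × J} (hs : s.1 = x.1) (ht : t.1 = y.1) (hrow : s'.1 = t'.1)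
      (hss : w s' = w s) (htt : w t' = w t) : False := by
    have mem {u u' : I × J} (h : w u = w u') : w u' ∈ row w u.1 := mem_row.2 ⟨u.2, h⟩
    rcases hfar s'.1 with hdisj | hdisj
    · exact disjoint_left.1 hdisj (mem hss) (hs ▸ mem rfl)
    · exact disjoint_left.1 hdisj (hrow ▸ mem htt) (ht ▸ mem rfl)
  have hadj {s t : I × J} (hs : s.1 = x.1) (ht : t.1 = y.1) (hst : w s = w t) : False :=
    hnear hs ht rfl rfl hst
  have hloop {s : I × J} (hs : s.1 = y.1) (hsy : w s = w y) : s = y :=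
    by_contra fun hne => hy (.of_eq (Ne.symm hne) hs.symm hsy.symm)
  have hxy : x.1 ≠ y.1 := fun hxy => hadj rfl hxy rfl
  obtain ⟨⟨hpq, hrow⟩, ⟨-, hwqb⟩, ⟨hba, hrow'⟩, hap, hwap⟩ := h
  simp only [Function.comp_apply] at hwqb hwap
  refine ⟨?_, ?_⟩ <;> rintro rfl
  · have hqy : q ≠ y := by rintro rfl; exact hxy hrow
    rw [Equiv.swap_apply_left, Equiv.swap_apply_def, if_neg hap] at hwap
    rw [Equiv.swap_apply_of_ne_of_ne hpq.symm hqy, Equiv.swap_apply_def] at hwqb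
    split_ifs at hwap with hay
    · exact hadj rfl rfl hwap
    split_ifs at hwqb with hbp hby
    · exact hadj hrow.symm rfl hwqb
    · exact hba (hby.trans (hloop (hrow'.symm.trans (by rw [hby])) hwap).symm)
    · exact hnear hrow.symm rfl hrow' hwqb.symm hwap
  · have hqx : q ≠ x := by rintro rfl; exact hxy hrow.symm
    rw [Equiv.swap_apply_right, Equiv.swap_apply_def] at hwap
    rw [Equiv.swap_apply_of_ne_of_ne hqx hpq.symm, Equiv.swap_apply_def] at hwqb
    split_ifs at hwap with hax
    · exact hadj rfl rfl hwap.symm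
    split_ifs at hwqb with hbx hbp
    · exact hpq (hloop hrow.symm hwqb).symm
    · exact hadj rfl hrow.symm hwqb.symm
    · exact hnear rfl hrow.symm hrow'.symm hwap hwqb.symm

/-- The letters read along a cycle avoiding both exchanged slots are unchanged. -/
lemma ShortCycle.of_comp_swap [DecidableEq I] [DecidableEq J] (hy : ¬ BadSlot w y)
    (hfar : ∀ i, Disjoint (row w i) (row w x.1) ∨ Disjoint (row w i) (row w y.1))
    (h : ShortCycle (w ∘ Equiv.swap x y) p q b a) : ShortCycle w p q b a := by
  have hp := h.ne_of_comp_swap hy hfar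
  have hq := h.reverse.ne_of_comp_swap hy hfar
  have hb := h.rotate.ne_of_comp_swap hy hfar
  have ha := h.rotate.reverse.ne_of_comp_swap hy hfar
  simpa only [ShortCycle, Function.comp_apply, Equiv.swap_apply_of_ne_of_ne hp.1 hp.2,
    Equiv.swap_apply_of_ne_of_ne hq.1 hq.2, Equiv.swap_apply_of_ne_of_ne hb.1 hb.2,
    Equiv.swap_apply_of_ne_of_ne ha.1 ha.2] using h

variable [Fintype I]

/-- The rows sharing a letter with row `i`. -/
def nearRows (w : I × J → Fin n) (i : I) : Finset I := {i' | ¬ Disjoint (row w i') (row w i)}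

lemma card_nearRows_le (hw : w ∈ wordsOfContent (I × J) fun _ => d) (i : I) :
    #(nearRows w i) ≤ Fintype.card J * d := by
  have hsub : nearRows w i ⊆ ((row w i).biUnion fun v => {z | w z = v}).image Prod.fst := by
    intro i' hi'
    obtain ⟨v, hv', hv⟩ := not_disjoint_iff.1 (mem_filter.1 hi').2
    obtain ⟨j, hj⟩ := mem_row.1 hv'
    exact mem_image.2 ⟨(i', j), mem_biUnion.2 ⟨v, hv, by simpa using hj⟩, rfl⟩
  calc #(nearRows w i) ≤ ∑ v ∈ row w i, #{z | w z = v} :=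
        (card_le_card hsub).trans (card_image_le.trans card_biUnion_le)
    _ = #(row w i) * d := by simp_rw [mem_wordsOfContent.1 hw, sum_const, smul_eq_mul]
    _ ≤ Fintype.card J * d := by gcongr; exact card_image_le

lemma exists_card_badSlot_comp_swap_lt [DecidableEq I] [DecidableEq J] [Nonempty J]
    (hw : w ∈ wordsOfContent (I × J) fun _ => d) (hx : BadSlot w x)
    (hbad : #{p | BadSlot w p} + (Fintype.card J * d) ^ 2 < Fintype.card I) :
    ∃ y, #{p | BadSlot (w ∘ Equiv.swap x y) p} < #{p | BadSlot w p} := by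
  set A : Finset I := ({p | BadSlot w p} : Finset (I × J)).image Prod.fst
    ∪ (nearRows w x.1).biUnion (nearRows w)
  have hA : #A < #(univ : Finset I) := calc
    #A ≤ #{p | BadSlot w p} + #(nearRows w x.1) * (Fintype.card J * d) := by
        refine (card_union_le _ _).trans (add_le_add card_image_le ?_)
        exact card_biUnion_le_card_mul _ _ _ fun i _ => card_nearRows_le hw i
    _ ≤ #{p | BadSlot w p} + (Fintype.card J * d) ^ 2 := by
        rw [sq]
        gcongr
        exact card_nearRows_le hw _
    _ < _ := by rwa [card_univ]
  obtain ⟨i, -, hi⟩ := exists_mem_notMem_of_card_lt_card hA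
  obtain ⟨hgood, hnear⟩ := not_or.1 (mem_union.not.1 hi)
  obtain ⟨j⟩ := ‹Nonempty J›
  have hy : ¬ BadSlot w (i, j) := fun h => hgood (mem_image.2 ⟨_, by simpa using h, rfl⟩)
  have hfar (k : I) : Disjoint (row w k) (row w x.1) ∨ Disjoint (row w k) (row w i) := by
    by_contra! h
    exact hnear (mem_biUnion.2 ⟨k, by simpa [nearRows] using h.1,
      by simpa [nearRows, disjoint_comm] using h.2⟩)
  refine ⟨(i, j), card_lt_card (ssubset_iff_of_subset ?_ |>.2 ⟨x, by simpa using hx, ?_⟩)⟩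
  · exact monotone_filter_right _ fun p _ ⟨q, b, a, h⟩ => ⟨q, b, a, h.of_comp_swap hy hfar⟩
  · simp only [mem_filter, mem_univ, true_and]
    rintro ⟨q, b, a, h⟩
    exact (h.ne_of_comp_swap hy hfar).1 rfl

/-- Repair the bad slots one by one, each by a transposition. -/
lemma uniformProb_card_badSlot_le_le [Nontrivial J] {k : ℕ}
    (hk : k + (Fintype.card J * d) ^ 2 < Fintype.card I) :
    uniformProb (wordsOfContent (I × J) fun _ : Fin n => d) (fun w => #{p | BadSlot w p} ≤ k)
      ≤ (Fintype.card (I × J) ^ 2) ^ k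
        * uniformProb (wordsOfContent (I × J) fun _ : Fin n => d) SimpleWord := by
  set W := wordsOfContent (I × J) fun _ : Fin n => d
  induction k with
  | zero =>
    simp only [Nat.le_zero, card_eq_zero, filter_eq_empty_iff, mem_univ, true_imp_iff, pow_zero,
      one_mul]
    exact uniformProb_mono fun w _ h => simpleWord_of_forall_not_badSlot fun p => @h p
  | succ k ih =>
    have hrepair (w) (hw : w ∈ W) (hwk : #{p | BadSlot w p} ≤ k + 1) :
        ∃ z ∈ (univ : Finset ((I × J) × (I × J))),
          #{p | BadSlot (w ∘ Equiv.swap z.1 z.2) p} ≤ k := by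
      rcases ({p | BadSlot w p} : Finset (I × J)).eq_empty_or_nonempty with h | ⟨x, hx⟩
      · have : Nonempty I := Fintype.card_pos_iff.1 (pos_of_gt hk)
        obtain ⟨x⟩ : Nonempty (I × J) := inferInstance
        exact ⟨(x, x), mem_univ _, by simp [h]⟩
      · obtain ⟨y, hy⟩ := exists_card_badSlot_comp_swap_lt hw (mem_filter.1 hx).2 (by lia)
        exact ⟨(x, y), mem_univ _, by lia⟩
    calc uniformProb W (fun w => #{p | BadSlot w p} ≤ k + 1)
        ≤ ∑ z : (I × J) × (I × J),
            uniformProb W fun w => #{p | BadSlot (w ∘ Equiv.swap z.1 z.2) p} ≤ k :=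
          (uniformProb_mono hrepair).trans (uniformProb_exists_le_sum _ _ _)
      _ = Fintype.card (I × J) ^ 2 * uniformProb W fun w => #{p | BadSlot w p} ≤ k := by
          rw [sum_congr rfl fun z _ => uniformProb_wordsOfContent_comp_perm (Equiv.swap z.1 z.2)
            fun w => #{p | BadSlot w p} ≤ k, sum_const, card_univ,
            Fintype.card_prod (I × J), ← sq, nsmul_eq_mul, Nat.cast_pow]
      _ ≤ Fintype.card (I × J) ^ 2 * ((Fintype.card (I × J) ^ 2) ^ k * uniformProb W SimpleWord) :=
          mul_le_mul_of_nonneg_left (ih (by lia)) (by positivity)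
      _ = _ := by ring

/-- A bad slot sees either a repeated letter in its row or two coincidences between four distinct
slots. -/
lemma uniformProb_badSlot_le (hI : 6 ≤ Fintype.card (I × J)) (x : I × J) :
    uniformProb (wordsOfContent (I × J) fun _ : Fin n => d) (fun w => BadSlot w x)
      ≤ 6 * (Fintype.card J * d) ^ 2 / Fintype.card (I × J) := by
  set W := wordsOfContent (I × J) fun _ : Fin n => d
  set N := Fintype.card (I × J)
  set r := Fintype.card J
  set pairs : Finset J := {j | x ≠ (x.1, j)}
  set quads : Finset (J × (I × J) × J) := {z | x ≠ (x.1, z.1) ∧ z.2.1 ≠ (x.1, z.1) ∧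
    (z.2.1.1, z.2.2) ≠ x ∧ (z.2.1.1, z.2.2) ≠ (x.1, z.1) ∧ (z.2.1.1, z.2.2) ≠ z.2.1}
  have hsplit (w : I × J → Fin n) (hx : BadSlot w x) : (∃ j ∈ pairs, w x = w (x.1, j)) ∨
      ∃ z ∈ quads, w z.2.1 = w (x.1, z.1) ∧ w x = w (z.2.1.1, z.2.2) := by
    obtain ⟨⟨i, j⟩, b, ⟨i', k⟩, ⟨hxq, rfl⟩, ⟨hqb, hw⟩, ⟨hba, rfl⟩, hax, hw'⟩ := hx
    by_cases h : x = b ∨ (b.1, k) = (x.1, j)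
    · refine .inl ⟨j, by simpa [pairs] using hxq, ?_⟩
      rcases h with rfl | h
      · exact hw.symm
      · rw [← hw', h]
    · exact .inr ⟨(j, b, k), by simp_all [quads, eq_comm], hw.symm, hw'.symm⟩
  have hd (v : Fin n) : (fun _ : Fin n => d) v ≤ d := le_rfl
  calc uniformProb W (fun w => BadSlot w x)
      ≤ ∑ j ∈ pairs, uniformProb W (fun w => w x = w (x.1, j)) + ∑ z ∈ quads, uniformProb W
          (fun w => w z.2.1 = w (x.1, z.1) ∧ w x = w (z.2.1.1, z.2.2)) :=
        (uniformProb_mono fun w _ => hsplit w).trans <| (uniformProb_or_le _ _ _).trans <|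
          add_le_add (uniformProb_exists_le_sum _ _ _) (uniformProb_exists_le_sum _ _ _)
    _ ≤ #pairs * (2 * d / N) + #quads * (4 * d ^ 2 / N ^ 2) := by
        simp_rw [← nsmul_eq_mul]
        refine add_le_add (sum_le_card_nsmul _ _ _ fun j hj => ?_)
          (sum_le_card_nsmul _ _ _ fun z hz => ?_)
        · exact uniformProb_eq_le hd (by lia) (mem_filter.1 hj).2
        · obtain ⟨-, -, hbq, hax, haq, hab⟩ := mem_filter.1 hz
          exact uniformProb_eq_and_eq_le hd hI hbq hax.symm hab haq
    _ ≤ r * (2 * d / N) + (r * (N * r) : ℕ) * (4 * d ^ 2 / N ^ 2) := by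
        gcongr
        · exact card_le_univ _
        · exact (card_le_univ _).trans_eq (by simp [r, N, Fintype.card_prod])
    _ = (2 * (r * d) + 4 * (r * d) ^ 2) / N := by
        push_cast
        field_simp
    _ ≤ 6 * (r * d) ^ 2 / N := by
        gcongr
        have : (r * d : ℝ) ≤ (r * d) ^ 2 := mod_cast Nat.le_self_pow two_ne_zero (r * d)
        linarith

lemma le_uniformProb_simpleWord [Nontrivial J]
    (hIJ : Fintype.card I * Fintype.card J = d * n)
    (hI : 13 * (Fintype.card J * d) ^ 2 < Fintype.card I) :
    1 / (2 * ((d * n : ℝ) ^ 2) ^ (12 * (Fintype.card J * d) ^ 2))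
      ≤ uniformProb (wordsOfContent (I × J) fun _ : Fin n => d) SimpleWord := by
  set W := wordsOfContent (I × J) fun _ : Fin n => d
  set K := 12 * (Fintype.card J * d) ^ 2 with hK
  have hN : Fintype.card (I × J) = d * n := by rw [Fintype.card_prod, hIJ]
  have hd : d ≠ 0 := by rintro rfl; simp_all
  have hpos : 0 < (Fintype.card J * d) ^ 2 := by positivity
  have hcard : Fintype.card I ≤ Fintype.card (I × J) :=
    (Nat.le_mul_of_pos_right _ Fintype.card_pos).trans_eq (Fintype.card_prod I J).symm
  have hW : W.Nonempty := wordsOfContent_nonempty (by simp [hN, mul_comm])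
  have hmean : 𝔼 w ∈ W, (#{p | BadSlot w p} : ℝ) ≤ 6 * (Fintype.card J * d) ^ 2 := calc
    𝔼 w ∈ W, (#{p | BadSlot w p} : ℝ) = ∑ p, uniformProb W fun w => BadSlot w p := by
        simp_rw [← expect_boole, ← expect_sum_comm, sum_boole]
    _ ≤ _ := (sum_le_card_nsmul _ _ _ fun p _ => uniformProb_badSlot_le (by lia) p).trans_eq <| by
        have : (Fintype.card (I × J) : ℝ) ≠ 0 := by norm_cast; lia
        rw [card_univ, nsmul_eq_mul, mul_div_cancel₀ _ this]
  have hmarkov := (mul_uniformProb_le_expect (A := W) (F := fun w => (#{p | BadSlot w p} : ℝ))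
    (fun _ _ => by positivity) K).trans hmean
  have hfew : 1 / 2 ≤ uniformProb W fun w => #{p | BadSlot w p} ≤ K := by
    have hmany : uniformProb W (fun w => ¬ #{p | BadSlot w p} ≤ K)
        ≤ uniformProb W fun w => (K : ℝ) ≤ #{p | BadSlot w p} :=
      uniformProb_mono fun w _ h => mod_cast (not_le.1 h).le
    have : uniformProb W (fun w => (K : ℝ) ≤ #{p | BadSlot w p}) ≤ 1 / 2 := by
      refine le_of_mul_le_mul_left (hmarkov.trans_eq ?_) (by positivity : (0 : ℝ) < K)
      rw [hK]
      push_cast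
      ring
    linarith [uniformProb_add_uniformProb_not hW fun w => #{p | BadSlot w p} ≤ K]
  have hrepair := hfew.trans (uniformProb_card_badSlot_le_le (by lia))
  rw [hN, Nat.cast_mul] at hrepair
  have hn : n ≠ 0 := by rintro rfl; simp_all
  rw [div_le_iff₀ (by positivity)]
  linarith

end SimpleWords

/-! ### Row events -/

section RowEvents

variable {I J L : Type*} [Fintype I] [Fintype J] [Fintype L]

lemma sum_prod_filter_forall_mem [DecidableEq L] (f : L → ℝ) (S : Finset L) :
    ∑ e : J → L with ∀ j, e j ∈ S, ∏ j, f (e j) = (∑ v ∈ S, f v) ^ Fintype.card J := by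
  rw [← card_univ, ← prod_const, ← sum_prod_piFinset]
  exact sum_congr (by ext; simp) fun _ _ => rfl

lemma sum_prod_filter_forall_row (f : L → ℝ) (R : (J → L) → Prop) [DecidablePred R] :
    ∑ w : I × J → L with ∀ i, R fun j => w (i, j), ∏ x, f (w x)
      = (∑ e : J → L with R e, ∏ j, f (e j)) ^ Fintype.card I := by
  rw [← sum_prod_filter_forall_mem (J := I) fun e : J → L => ∏ j, f (e j)]
  exact sum_equiv (Equiv.curry I J L) (fun w => by simp only [mem_filter_univ]; rfl)
    fun w _ => Fintype.prod_prod_type _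

lemma sum_prod_filter_exists_notMem [DecidableEq L] (f : L → ℝ) (S : Finset L) :
    ∑ e : J → L with ∃ j, e j ∉ S, ∏ j, f (e j)
      = (∑ v, f v) ^ Fintype.card J - (∑ v ∈ S, f v) ^ Fintype.card J := by
  rw [eq_sub_iff_add_eq', ← sum_prod_filter_forall_mem, ← sum_prod_filter_forall_mem]
  simpa using sum_filter_add_sum_filter_not univ (fun e : J → L => ∀ j, e j ∈ S)
    fun e => ∏ j, f (e j)

lemma sum_prod_filter_exists_notMem_and_exists_notMem [DecidableEq L] (f : L → ℝ) (S T : Finset L) :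
    ∑ e : J → L with (∃ j, e j ∉ S) ∧ ∃ j, e j ∉ T, ∏ j, f (e j)
      = (∑ v, f v) ^ Fintype.card J - (∑ v ∈ S, f v) ^ Fintype.card J
        - (∑ v ∈ T, f v) ^ Fintype.card J + (∑ v ∈ S ∩ T, f v) ^ Fintype.card J := by
  rw [← sum_prod_filter_exists_notMem f S, ← sum_prod_filter_forall_mem f T,
    ← sum_prod_filter_forall_mem f (S ∩ T)]
  simp_rw [sum_filter, ← sum_sub_distrib, ← sum_add_distrib]
  refine sum_congr rfl fun e _ => ?_
  by_cases hS : ∀ j, e j ∈ S <;> by_cases hT : ∀ j, e j ∈ T <;>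
    simp [forall_and, hS, hT, ← not_forall]

lemma sum_prod_filter_comp_label {V : Type*} [Fintype V] [DecidableEq L] (lab : V → L)
    (f : L → ℝ) (R : (J → L) → Prop) [DecidablePred R] :
    ∑ e : J → V with R (lab ∘ e), ∏ j, f (lab (e j))
      = ∑ c : J → L with R c, ∏ j, #{v | lab v = c j} * f (c j) := by
  have hfiber (c : J → L) : ({e | lab ∘ e = c} : Finset (J → V))
      = Fintype.piFinset fun j => ({v | lab v = c j} : Finset V) := by
    ext e
    simp [funext_iff]
  simp_rw [sum_filter]
  rw [← sum_fiberwise univ (fun e : J → V => lab ∘ e)]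
  refine sum_congr rfl fun c _ => ?_
  rw [sum_congr rfl (g := fun _ => if R c then ∏ j, f (c j) else 0) fun e he => ?_]
  · rw [hfiber, sum_const, Fintype.card_piFinset, nsmul_eq_mul, mul_ite, mul_zero,
      prod_mul_distrib, Nat.cast_prod]
  · obtain rfl := (mem_filter.1 he).2
    rfl

lemma uniformProb_forall_row_mul_prod_pow_le {n d : ℕ}
    (hIJ : Fintype.card I * Fintype.card J = d * n) (lab : Fin n → L) (R : (J → L) → Prop)
    [DecidablePred R] {u : L → ℝ} (hu : ∀ l, 0 ≤ u l) :
    uniformProb (wordsOfContent (I × J) fun _ : Fin n => d)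
        (fun w => ∀ i, R fun j => lab (w (i, j))) * (∏ v, u (lab v)) ^ d
      ≤ (d * n + 1) ^ Fintype.card L
        * (∑ e : J → Fin n with R (lab ∘ e), ∏ j, (u (lab (e j)) / n)) ^ Fintype.card I := by
  have hN : Fintype.card (I × J) = d * n := by rw [Fintype.card_prod, hIJ]
  have hcontent (l : L) : ∑ v with lab v = l, d = #{v | lab v = l} * d := by simp
  have htypes := uniformProb_wordsOfContent_mul_prod_pow_le (I := I × J)
    (c := fun l => ∑ v with lab v = l, d)
    ((sum_fiberwise univ lab fun _ => d).trans (by simp [hN, mul_comm]))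
    (fun χ => ∀ i, R fun j => χ (i, j)) hu
  have hprod : ∏ l, u l ^ (∑ v with lab v = l, d) = (∏ v, u (lab v)) ^ d := by
    rw [← prod_pow, ← prod_fiberwise univ lab]
    refine prod_congr rfl fun l _ => ?_
    rw [← prod_pow_eq_pow_sum]
    exact prod_congr rfl fun v hv => by rw [(mem_filter.1 hv).2]
  have hratio (l : L) : ((#{v | lab v = l} * d : ℕ) : ℝ) / (d * n : ℕ) * u l
      ≤ #{v | lab v = l} * (u l / n) := by
    rw [← mul_comm_div]
    refine mul_le_mul_of_nonneg_right ?_ (hu l)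
    rcases eq_or_ne d 0 with rfl | hd
    · simp only [mul_zero, zero_mul, Nat.cast_zero, div_zero]
      positivity
    · push_cast
      rw [mul_comm, mul_div_mul_left _ _ (by positivity)]
  rw [← uniformProb_wordsOfContent_label lab (by simp [hN, mul_comm]), hprod, hN] at htypes
  simp_rw [hcontent] at htypes
  refine htypes.trans ?_
  rw [sum_prod_filter_comp_label lab fun l => u l / n,
    ← sum_prod_filter_forall_row fun l => (#{v | lab v = l} * (u l / n) : ℝ)]
  push_cast at hratio ⊢
  refine mul_le_mul_of_nonneg_left (sum_le_sum fun χ _ => ?_) (by positivity)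
  exact prod_le_prod (fun x _ => mul_nonneg (by positivity) (hu _)) fun x _ => hratio _

end RowEvents

/-! ### The first moment -/

section Moments

variable {I J : Type*} [Fintype I] [Fintype J] {n d k : ℕ}

lemma uniformProb_indepSet_edgesOf_le (hIJ : Fintype.card I * Fintype.card J = d * n)
    (hn : n ≠ 0) (S : Finset (Fin n)) :
    uniformProb (wordsOfContent (I × J) fun _ : Fin n => d) (fun w => IndepSet (edgesOf w) S)
      ≤ (d * n + 1) ^ 2 * (1 - (#S / n : ℝ) ^ Fintype.card J) ^ Fintype.card I := by
  have h := uniformProb_forall_row_mul_prod_pow_le hIJ (fun v => decide (v ∈ S))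
    (fun e => ∃ j, e j = false) (u := 1) fun _ => zero_le_one
  have hsum : ∑ e : J → Fin n with ∃ j, e j ∉ S, ∏ _j : J, (1 / n : ℝ)
      = 1 - (#S / n : ℝ) ^ Fintype.card J := by
    rw [sum_prod_filter_exists_notMem fun _ => (1 / n : ℝ)]
    simp [hn, div_eq_mul_inv]
  simp only [Function.comp_apply, decide_eq_false_iff_not, Pi.one_apply, prod_const_one, one_pow,
    mul_one, Fintype.card_bool] at h
  simp only [indepSet_edgesOf_iff]
  convert h
  rw [← hsum]

lemma uniformProb_le_independenceNumber_edgesOf_le [Nonempty J]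
    (hIJ : Fintype.card I * Fintype.card J = d * n) (hn : n ≠ 0) (k : ℕ) :
    uniformProb (wordsOfContent (I × J) fun _ : Fin n => d)
        (fun w => k ≤ independenceNumber (edgesOf w))
      ≤ n.choose k * ((d * n + 1) ^ 2
        * (1 - (k / n : ℝ) ^ Fintype.card J) ^ Fintype.card I) := calc
  _ ≤ uniformProb (wordsOfContent (I × J) fun _ : Fin n => d)
        fun w => ∃ S ∈ powersetCard k univ, IndepSet (edgesOf w) S := by
      refine uniformProb_mono fun w _ hk => ?_
      obtain ⟨S, hS, hindep⟩ :=
        exists_indepSet_card_eq_independenceNumber (empty_notMem_edgesOf (w := w))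
      obtain ⟨T, hTS, hT⟩ := exists_subset_card_eq (hS ▸ hk)
      exact ⟨T, mem_powersetCard_univ.2 hT, hindep.mono hTS⟩
  _ ≤ _ := uniformProb_exists_le_sum _ _ _
  _ ≤ #(powersetCard k (univ : Finset (Fin n))) • ((d * n + 1) ^ 2
        * (1 - (k / n : ℝ) ^ Fintype.card J) ^ Fintype.card I) :=
      sum_le_card_nsmul _ _ _ fun S hS => by
        simpa [mem_powersetCard_univ.1 hS] using uniformProb_indepSet_edgesOf_le hIJ hn S
  _ = _ := by simp

/-! ### Pairs of independent sets -/

/-- The weight of the rows meeting the complements of two `k`-sets `S` and `T`, when a letter is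
weighted by `1 / n` times `u` or `u - β` for being inside or outside `S`, and likewise for `T`. The
parameters are `p = k / n * u` and `Δ = #(S ∩ T) / n - (k / n) ^ 2`, and the three terms come from
inclusion–exclusion over the rows inside `S`, `T` and `S ∩ T`. -/
def pairWeight (r : ℕ) (p u β Δ : ℝ) : ℝ :=
  (1 + Δ * β ^ 2) ^ r - 2 * (p + u * Δ * β) ^ r + (p ^ 2 + Δ * u ^ 2) ^ r

lemma sum_prod_filter_eq_pairWeight {S T : Finset (Fin n)} (hn : n ≠ 0) (hS : #S = k) (hT : #T = k)
    {u v : ℝ} (huv : (k / n : ℝ) * u + (1 - k / n) * v = 1) :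
    ∑ e : J → Fin n with (∃ j, e j ∉ S) ∧ ∃ j, e j ∉ T,
        ∏ j, ((if e j ∈ S then u else v) * (if e j ∈ T then u else v) / n)
      = pairWeight (Fintype.card J) (k / n * u) u (u - v) (#(S ∩ T) / n - (k / n) ^ 2) := by
  have hn' : (n : ℝ) ≠ 0 := mod_cast hn
  have hsum (R : Finset (Fin n)) :
      ∑ x ∈ R, (if x ∈ S then u else v) * (if x ∈ T then u else v) / n
        = v * (#R / n * v + (u - v) * (#(R ∩ T) / n))
          + (u - v) * (#(R ∩ S) / n * v + (u - v) * (#(R ∩ (S ∩ T)) / n)) := by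
    have hmul (x : Fin n) : (if x ∈ S then u else v) * (if x ∈ T then u else v)
        = v * v + v * (u - v) * (if x ∈ T then 1 else 0) + (u - v) * v * (if x ∈ S then 1 else 0)
          + (u - v) * (u - v) * if x ∈ S ∩ T then 1 else 0 := by
      by_cases hS : x ∈ S <;> by_cases hT : x ∈ T <;> simp [hS, hT] <;> ring
    simp_rw [hmul, ← sum_div, sum_add_distrib, ← mul_sum, sum_boole, filter_mem_eq_inter]
    simp
    ring
  rw [sum_prod_filter_exists_notMem_and_exists_notMem
    fun x => (if x ∈ S then u else v) * (if x ∈ T then u else v) / n]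
  simp only [hsum, univ_inter, inter_self, inter_left_idem, inter_right_idem, inter_comm T S,
    inter_assoc, inter_left_comm, hS, hT, card_univ, Fintype.card_fin,
    div_self hn']
  generalize (k / n : ℝ) = s at huv ⊢
  generalize (#(S ∩ T) / n : ℝ) = m
  rw [pairWeight, two_mul, ← sub_sub]
  congr 2
  · congr 2
    · linear_combination (s * u + (1 - s) * v + 1) * huv
    · linear_combination s * u * huv
  · congr 1
    linear_combination s * u * huv
  · ring

lemma uniformProb_indepSet_and_indepSet_mul_le (hIJ : Fintype.card I * Fintype.card J = d * n)
    (hn : n ≠ 0) {S T : Finset (Fin n)} (hS : #S = k) (hT : #T = k) {u v : ℝ} (hu : 0 ≤ u)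
    (hv : 0 ≤ v) (huv : (k / n : ℝ) * u + (1 - k / n) * v = 1) :
    uniformProb (wordsOfContent (I × J) fun _ : Fin n => d)
        (fun w => IndepSet (edgesOf w) S ∧ IndepSet (edgesOf w) T)
        * (u ^ (d * k) * v ^ (d * (n - k))) ^ 2
      ≤ (d * n + 1) ^ 4 * pairWeight (Fintype.card J) (k / n * u) u (u - v)
          (#(S ∩ T) / n - (k / n) ^ 2) ^ Fintype.card I := by
  have h := uniformProb_forall_row_mul_prod_pow_le hIJ (fun x => (decide (x ∈ S), decide (x ∈ T)))
    (fun e => (∃ j, (e j).1 = false) ∧ ∃ j, (e j).2 = false)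
    (u := fun l => (bif l.1 then u else v) * bif l.2 then u else v)
    (by rintro ⟨_ | _, _ | _⟩ <;> positivity)
  have hprod {S : Finset (Fin n)} (hS : #S = k) :
      ∏ x, (if x ∈ S then u else v) = u ^ k * v ^ (n - k) := by
    rw [prod_ite, prod_const, prod_const, filter_mem_eq_inter, univ_inter, hS,
      filter_notMem_eq_sdiff,
      ← compl_eq_univ_sdiff, card_compl, hS, Fintype.card_fin]
  simp only [Bool.cond_decide, prod_mul_distrib, hprod hS, hprod hT, Function.comp_apply,
    decide_eq_false_iff_not, Fintype.card_prod, Fintype.card_bool] at h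
  rw [← sum_prod_filter_eq_pairWeight hn hS hT huv, mul_comm d, mul_comm d, pow_mul, pow_mul,
    ← mul_pow, ← pow_mul, mul_comm d, pow_mul, sq (u ^ k * _)]
  simp only [indepSet_edgesOf_iff, ← forall_and]
  convert h

end Moments

/-! ### Bernoulli patterns without constant rows -/

section BernoulliWeight

variable {Ω : Type*} [Fintype Ω] {p : ℝ}

/-- The probability of `χ` when its entries are independent and `true` with probability `p`. -/
noncomputable def bernoulliWeight (p : ℝ) (χ : Ω → Bool) : ℝ :=
  ∏ x, bif χ x then p else 1 - p

lemma bernoulliWeight_nonneg (hp : 0 ≤ p) (hp1 : p ≤ 1) (χ : Ω → Bool) :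
    0 ≤ bernoulliWeight p χ :=
  prod_nonneg fun x _ => by cases χ x <;> simp [hp, hp1]

lemma prod_cond_eq_pow_mul_pow (χ : Ω → Bool) (a b : ℝ) :
    ∏ x, (bif χ x then a else b)
      = a ^ #{x | χ x = true} * b ^ (Fintype.card Ω - #{x | χ x = true}) := by
  simp only [cond_eq_ite]
  rw [prod_ite, prod_const, prod_const, ← card_compl, compl_filter]

end BernoulliWeight

section GoodPatterns

variable {I J : Type*} [Fintype I] [Fintype J] {p : ℝ} {K : ℕ}

/-- Every row of the Boolean word `χ` contains `false`. If `true` marks the members of a vertex set,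
this says that no row lies inside the set. -/
def GoodRows (χ : I × J → Bool) : Prop :=
  ∀ i, ∃ j, χ (i, j) = false

/-- The expected value of `exp (t * (X - m))` on the event that a row of `r` independent Bernoulli
entries is not constantly `true`, where `X` is the number of its `true` entries. -/
noncomputable def tiltedRowWeight (r : ℕ) (p m t : ℝ) : ℝ :=
  exp (-(t * m)) * ((p * exp t + (1 - p)) ^ r - (p * exp t) ^ r)

lemma tiltedRowWeight_zero (r : ℕ) (p m : ℝ) : tiltedRowWeight r p m 0 = 1 - p ^ r := by
  simp [tiltedRowWeight]

lemma tiltedRowWeight_nonneg (hp : 0 ≤ p) (hp1 : p ≤ 1) (r : ℕ) (m t : ℝ) :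
    0 ≤ tiltedRowWeight r p m t :=
  mul_nonneg (exp_pos _).le <| sub_nonneg.2 <| pow_le_pow_left₀ (by positivity) (by linarith) r

lemma hasDerivAt_tiltedRowWeight (r : ℕ) (p m : ℝ) :
    HasDerivAt (tiltedRowWeight r p m) (r * (p - p ^ r) - m * (1 - p ^ r)) 0 := by
  have hexp : HasDerivAt (fun t : ℝ => exp (-(t * m))) (exp (-(0 * m)) * (-(1 * m))) 0 :=
    ((hasDerivAt_id (0 : ℝ)).mul_const m).neg.exp
  have hpexp : HasDerivAt (fun t : ℝ => p * exp t) (p * exp 0) 0 :=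
    (hasDerivAt_exp 0).const_mul p
  refine (hexp.mul (((hpexp.add_const (1 - p)).pow r).sub (hpexp.pow r))).congr_deriv ?_
  rcases r with _ | r
  · simp
  · simp only [zero_mul, neg_zero, exp_zero, mul_one, one_mul, Nat.add_sub_cancel, add_sub_cancel,
      one_pow, Pi.sub_apply, Pi.pow_apply]
    push_cast
    ring

lemma exists_pos_lt_of_hasDerivAt_neg {f : ℝ → ℝ} {f' : ℝ} (h : HasDerivAt f f' 0) (hf' : f' < 0) :
    ∃ t, 0 < t ∧ f t < f 0 := by
  have hslope : ∀ᶠ t in nhdsWithin (0 : ℝ) (Set.Ioi 0), slope f 0 t < 0 :=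
    ((hasDerivAt_iff_tendsto_slope.1 h).eventually_lt_const hf').filter_mono
      (nhdsWithin_mono _ fun _ hx => ne_of_gt hx)
  obtain ⟨t, ht, ht0⟩ := (hslope.and self_mem_nhdsWithin).exists
  have ht0 : 0 < t := ht0
  rw [slope_def_field, sub_zero, div_neg_iff] at ht
  exact ⟨t, ht0, by rcases ht with ht | ht <;> linarith⟩

lemma exists_neg_lt_of_hasDerivAt_pos {f : ℝ → ℝ} {f' : ℝ} (h : HasDerivAt f f' 0) (hf' : 0 < f') :
    ∃ t < 0, f t < f 0 := by
  have hneg : HasDerivAt (fun t => f (-t)) (-f') 0 := by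
    rw [← neg_zero] at h
    simpa [Function.comp_def] using! h.scomp (0 : ℝ) (hasDerivAt_neg (0 : ℝ))
  obtain ⟨t, ht, hlt⟩ := exists_pos_lt_of_hasDerivAt_neg hneg (neg_neg_of_pos hf')
  exact ⟨-t, neg_neg_of_pos ht, by simpa using hlt⟩

lemma sum_bernoulliWeight_mul_exp (p t m : ℝ) :
    ∑ χ : I × J → Bool with GoodRows χ,
        bernoulliWeight p χ * exp (t * (#{x | χ x = true} - m * Fintype.card I))
      = tiltedRowWeight (Fintype.card J) p m t ^ Fintype.card I := by
  have hrow : ∑ e : J → Bool with ∃ j, e j = false, ∏ j, (bif e j then p * exp t else 1 - p)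
      = (p * exp t + (1 - p)) ^ Fintype.card J - (p * exp t) ^ Fintype.card J := by
    simpa using sum_prod_filter_exists_notMem (J := J)
      (fun b => bif b then p * exp t else 1 - p) {true}
  have hwords := sum_prod_filter_forall_row (I := I)
    (fun b => bif b then p * exp t else 1 - p) fun e : J → Bool => ∃ j, e j = false
  rw [tiltedRowWeight, mul_pow, ← hrow, ← hwords, mul_sum]
  refine sum_congr (by ext; rw [mem_filter_univ, mem_filter_univ, GoodRows]) fun χ _ => ?_
  rw [bernoulliWeight, prod_cond_eq_pow_mul_pow, prod_cond_eq_pow_mul_pow, mul_pow,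
    ← exp_nat_mul, ← exp_nat_mul, mul_sub, sub_eq_neg_add (t * _), exp_add]
  ring_nf

lemma sum_bernoulliWeight_goodRows (p : ℝ) :
    ∑ χ : I × J → Bool with GoodRows χ, bernoulliWeight p χ
      = (1 - p ^ Fintype.card J) ^ Fintype.card I := by
  simpa [tiltedRowWeight_zero] using sum_bernoulliWeight_mul_exp (I := I) (J := J) p 0 0

lemma sum_bernoulliWeight_tail_le (hp : 0 ≤ p) (hp1 : p ≤ 1) (t m : ℝ) :
    ∑ χ : I × J → Bool with GoodRows χ ∧
        0 ≤ t * (#{x | χ x = true} - m * Fintype.card I), bernoulliWeight p χ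
      ≤ tiltedRowWeight (Fintype.card J) p m t ^ Fintype.card I := by
  rw [← sum_bernoulliWeight_mul_exp, ← filter_filter]
  refine (sum_le_sum fun χ hχ => ?_).trans (sum_le_sum_of_subset_of_nonneg (filter_subset _ _)
    fun χ _ _ => mul_nonneg (bernoulliWeight_nonneg hp hp1 χ) (exp_pos _).le)
  exact le_mul_of_one_le_right (bernoulliWeight_nonneg hp hp1 χ) (one_le_exp (mem_filter.1 hχ).2)

lemma sum_le_sum_filter_add_of_forall_or {ι : Type*} {s : Finset ι} {f : ι → ℝ} {P Q R : ι → Prop}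
    [DecidablePred P] [DecidablePred Q] [DecidablePred R] (hf : ∀ x ∈ s, 0 ≤ f x)
    (h : ∀ x ∈ s, P x ∨ Q x ∨ R x) :
    ∑ x ∈ s, f x ≤ ∑ x ∈ s with P x, f x + ∑ x ∈ s with Q x, f x + ∑ x ∈ s with R x, f x := by
  simp_rw [sum_filter, ← sum_add_distrib]
  refine sum_le_sum fun x hx => ?_
  have hfx := hf x hx
  rcases h x hx with h | h | h <;> rw [if_pos h] <;> split_ifs <;> linarith

lemma eventually_pow_le_pow_div_four {x y : ℝ} (hx : 0 ≤ x) (hxy : x < y) :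
    ∀ᶠ M : ℕ in atTop, x ^ M ≤ y ^ M / 4 := by
  have hy : 0 < y := hx.trans_lt hxy
  have hlim := tendsto_pow_atTop_nhds_zero_of_lt_one (div_nonneg hx hy.le) ((div_lt_one hy).2 hxy)
  filter_upwards [hlim.eventually_le_const (show (0 : ℝ) < 1 / 4 by norm_num)] with M hM
  rw [div_pow, div_le_iff₀ (pow_pos hy M)] at hM
  linarith

/-- Conditioned on having good rows, a Bernoulli pattern has density between `p - p ^ r` and `p`
with probability at least a half: the conditional density is slightly below `p`. -/
lemma eventually_le_sum_bernoulliWeight_window [Nontrivial J] (hp : 0 < p) (hp1 : p < 1) :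
    ∀ᶠ M : ℕ in atTop, ∀ (I : Type*) [Fintype I], Fintype.card I = M →
      (1 - p ^ Fintype.card J) ^ M ≤ 2 * ∑ χ : I × J → Bool with GoodRows χ ∧
        M * Fintype.card J * (p - p ^ Fintype.card J) ≤ #{x | χ x = true} ∧
        #{x | χ x = true} ≤ M * Fintype.card J * p, bernoulliWeight p χ := by
  have hr : 2 ≤ Fintype.card J := Fintype.one_lt_card
  generalize hrJ : Fintype.card J = r at hr ⊢
  have hr0 : (0 : ℝ) < r := by positivity
  have hpr0 : 0 < p ^ r := pow_pos hp r
  have hpr : p ^ r < p := pow_lt_self_of_lt_one₀ hp hp1 hr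
  obtain ⟨t₁, ht₁, hlt₁⟩ := exists_pos_lt_of_hasDerivAt_neg
    (hasDerivAt_tiltedRowWeight r p (r * p)) (by nlinarith [mul_pos hr0 hpr0])
  obtain ⟨t₂, ht₂, hlt₂⟩ := exists_neg_lt_of_hasDerivAt_pos
    (hasDerivAt_tiltedRowWeight r p (r * (p - p ^ r))) (by
      nlinarith [mul_pos (mul_pos hr0 hpr0) (sub_pos.2 hpr)])
  rw [tiltedRowWeight_zero] at hlt₁ hlt₂
  filter_upwards
    [eventually_pow_le_pow_div_four (tiltedRowWeight_nonneg hp.le hp1.le r _ t₁) hlt₁,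
     eventually_pow_le_pow_div_four (tiltedRowWeight_nonneg hp.le hp1.le r _ t₂) hlt₂]
    with M hM₁ hM₂ I _ hI
  have htail (t m : ℝ) := sum_bernoulliWeight_tail_le (I := I) (J := J) hp.le hp1.le t m
  have htotal := sum_bernoulliWeight_goodRows (I := I) (J := J) p
  simp only [hI, hrJ, ← filter_filter (fun χ : I × J → Bool => GoodRows χ)] at htail htotal ⊢
  have hsplit := sum_le_sum_filter_add_of_forall_or
    (s := {χ : I × J → Bool | GoodRows χ}) (f := bernoulliWeight p)
    (P := fun χ => 0 ≤ t₁ * (#{x | χ x = true} - r * p * M))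
    (Q := fun χ => 0 ≤ t₂ * (#{x | χ x = true} - r * (p - p ^ r) * M))
    (R := fun χ => M * r * (p - p ^ r) ≤ #{x | χ x = true} ∧ #{x | χ x = true} ≤ M * r * p)
    (fun χ _ => bernoulliWeight_nonneg hp.le hp1.le χ) fun χ _ => by
      rw [or_iff_not_imp_left, or_iff_not_imp_left]
      intro hhigh hlow
      constructor <;> by_contra! h
      · exact hlow (mul_nonneg_of_nonpos_of_nonpos ht₂.le (by linarith))
      · exact hhigh (mul_nonneg ht₁.le (by linarith))
  linarith [htail t₁ (r * p), htail t₂ (r * (p - p ^ r))]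

/-- The Boolean words with good rows and exactly `K` entries `true`. -/
noncomputable def goodPatterns (I J : Type*) [Fintype I] [Fintype J] (K : ℕ) :
    Finset (I × J → Bool) :=
  {χ | GoodRows χ ∧ #{x | χ x = true} = K}

/-- The probability that independent Bernoulli entries form a good pattern with exactly `K` entries
`true`. -/
noncomputable def goodWeight (I J : Type*) [Fintype I] [Fintype J] (p : ℝ) (K : ℕ) : ℝ :=
  ∑ χ ∈ goodPatterns I J K, bernoulliWeight p χ

lemma goodWeight_eq (p : ℝ) (K : ℕ) :
    goodWeight I J p K
      = #(goodPatterns I J K) * (p ^ K * (1 - p) ^ (Fintype.card (I × J) - K)) := by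
  rw [← nsmul_eq_mul]
  refine sum_eq_card_nsmul fun χ hχ => ?_
  rw [bernoulliWeight, prod_cond_eq_pow_mul_pow, (mem_filter.1 hχ).2.2]

lemma goodWeight_nonneg (hp : 0 ≤ p) (hp1 : p ≤ 1) (K : ℕ) : 0 ≤ goodWeight I J p K :=
  sum_nonneg fun χ _ => bernoulliWeight_nonneg hp hp1 χ

lemma eventually_exists_le_goodWeight [Nontrivial J] (hp : 0 < p) (hp1 : p < 1) :
    ∀ᶠ M : ℕ in atTop, ∀ (I : Type*) [Fintype I], Fintype.card I = M → ∃ K : ℕ,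
      M * Fintype.card J * (p - p ^ Fintype.card J) ≤ K ∧ K ≤ M * Fintype.card J * p ∧
      (1 - p ^ Fintype.card J) ^ M ≤ 2 * (M * Fintype.card J + 1) * goodWeight I J p K := by
  filter_upwards [eventually_le_sum_bernoulliWeight_window (J := J) hp hp1] with M hM I _ hI
  specialize hM I hI
  have hr : Fintype.card J ≠ 0 := Fintype.card_ne_zero
  generalize hrJ : Fintype.card J = r at hr hM ⊢
  have hb : 0 < (1 - p ^ r) ^ M / (2 * (M * r + 1)) :=
    div_pos (pow_pos (sub_pos.2 (pow_lt_one₀ hp.le hp1 hr)) M) (by positivity)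
  obtain ⟨K, -, hK⟩ := exists_le_sum_fiber_of_maps_to_of_nsmul_le_sum
    (f := fun χ : I × J → Bool => #{x | χ x = true}) (t := range (M * r + 1))
    (b := (1 - p ^ r) ^ M / (2 * (M * r + 1))) (w := bernoulliWeight p)
    (s := {χ | GoodRows χ ∧ M * r * (p - p ^ r) ≤ #{x | χ x = true} ∧
      #{x | χ x = true} ≤ M * r * p})
    (fun χ _ => mem_range_succ_iff.2 <| (card_le_univ _).trans_eq (by simp [hI, hrJ])) (by simp) (by
      rw [card_range, nsmul_eq_mul, Nat.cast_succ, Nat.cast_mul, mul_div_assoc',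
        mul_comm (2 : ℝ), mul_div_mul_left _ _ (by positivity), div_le_iff₀' two_pos]
      exact hM)
  obtain ⟨χ, hχ, -⟩ := exists_ne_zero_of_sum_ne_zero (hb.trans_le hK).ne'
  simp only [mem_filter, mem_univ, true_and] at hχ
  obtain ⟨⟨-, hlow, hhigh⟩, hχK⟩ := hχ
  rw [hχK] at hlow hhigh
  refine ⟨K, hlow, hhigh, ?_⟩
  rw [div_le_iff₀' (by positivity)] at hK
  refine hK.trans (mul_le_mul_of_nonneg_left ?_ (by positivity))
  refine sum_le_sum_of_subset_of_nonneg (fun χ hχ => ?_) fun χ _ _ =>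
    bernoulliWeight_nonneg hp.le hp1.le χ
  simp only [mem_filter, goodPatterns] at hχ ⊢
  exact ⟨mem_univ χ, hχ.1.2.1, hχ.2⟩

omit [Fintype I] [Fintype J] in
lemma GoodRows.update_false {χ : I × J → Bool} (h : GoodRows χ) (x : I × J) :
    GoodRows (Function.update χ x false) := by
  intro i
  obtain ⟨j, hj⟩ := h i
  refine ⟨j, ?_⟩
  rcases eq_or_ne (i, j) x with rfl | hx
  · exact Function.update_self ..
  · rwa [Function.update_of_ne hx]

lemma card_goodPatterns_succ_le (K : ℕ) :
    #(goodPatterns I J (K + 1)) ≤ Fintype.card (I × J) * #(goodPatterns I J K) := by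
  have hsub : goodPatterns I J (K + 1) ⊆
      (univ ×ˢ goodPatterns I J K).image fun q => Function.update q.2 q.1 true := by
    intro χ hχ
    obtain ⟨hrows, hcard⟩ := mem_filter_univ χ |>.1 hχ
    obtain ⟨x, hx⟩ : ∃ x, χ x = true := by
      obtain ⟨x, hx⟩ := card_pos.1 (hcard.symm ▸ K.succ_pos : 0 < #{x | χ x = true})
      exact ⟨x, mem_filter_univ x |>.1 hx⟩
    refine mem_image.2 ⟨(x, Function.update χ x false), mem_product.2 ⟨mem_univ _, ?_⟩, ?_⟩
    · have herase : ({y | Function.update χ x false y = true} : Finset (I × J))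
          = ({y | χ y = true} : Finset (I × J)).erase x := by
        ext y
        rcases eq_or_ne y x with rfl | hy <;> simp [*]
      refine mem_filter_univ _ |>.2 ⟨hrows.update_false x, ?_⟩
      rw [herase, card_erase_of_mem (mem_filter_univ x |>.2 hx), hcard, Nat.add_sub_cancel]
    · rw [Function.update_idem, ← hx, Function.update_eq_self]
  refine (card_le_card hsub).trans (card_image_le.trans_eq ?_)
  rw [card_product, card_univ]

lemma goodWeight_succ_le (hp : 0 ≤ p) (hp2 : p ≤ 1 / 2) (hK : K + 1 ≤ Fintype.card (I × J)) :
    goodWeight I J p (K + 1) ≤ Fintype.card (I × J) * goodWeight I J p K := by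
  obtain ⟨z, hz⟩ := Nat.exists_eq_add_of_le hK
  have hsub : Fintype.card (I × J) - (K + 1) = z := by omega
  have hsub' : Fintype.card (I × J) - K = z + 1 := by omega
  have hp' : 0 ≤ 1 - p := by linarith
  have hflip : p ^ (K + 1) * (1 - p) ^ z ≤ p ^ K * (1 - p) ^ (z + 1) := by
    rw [pow_succ, pow_succ', mul_assoc]
    gcongr
    linarith
  rw [goodWeight_eq, goodWeight_eq, hsub, hsub', ← mul_assoc (Fintype.card (I × J) : ℝ)]
  exact mul_le_mul (mod_cast card_goodPatterns_succ_le K) hflip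
    (mul_nonneg (pow_nonneg hp _) (pow_nonneg hp' _))
    (mul_nonneg (Nat.cast_nonneg _) (Nat.cast_nonneg _))

lemma goodWeight_add_le (hp : 0 ≤ p) (hp2 : p ≤ 1 / 2) (j : ℕ)
    (hK : K + j ≤ Fintype.card (I × J)) :
    goodWeight I J p (K + j) ≤ Fintype.card (I × J) ^ j * goodWeight I J p K := by
  induction j with
  | zero => simp
  | succ j ih => calc
      _ ≤ Fintype.card (I × J) * goodWeight I J p (K + j) := goodWeight_succ_le hp hp2 hK
      _ ≤ Fintype.card (I × J) * (Fintype.card (I × J) ^ j * goodWeight I J p K) := by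
        gcongr
        exact ih (by omega)
      _ = _ := by ring

lemma eventually_exists_size_le_goodWeight {d : ℕ} [Nontrivial J] (hd : 0 < d) (hp : 0 < p)
    (hp2 : p ≤ 1 / 2) :
    ∀ᶠ n : ℕ in atTop, ∀ (I : Type*) [Fintype I], Fintype.card I * Fintype.card J = d * n →
      ∃ k : ℕ, p - 2 * p ^ Fintype.card J ≤ k / n ∧ k / n ≤ p ∧
        (1 - p ^ Fintype.card J) ^ Fintype.card I
          ≤ 2 * (d * n + 1) ^ (d + 1) * goodWeight I J p (d * k) := by
  obtain ⟨M₀, hM₀⟩ := eventually_atTop.1 (eventually_exists_le_goodWeight (J := J) hp (by linarith))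
  filter_upwards [eventually_ge_atTop (M₀ * Fintype.card J), eventually_gt_atTop 0,
    tendsto_natCast_atTop_atTop.eventually_ge_atTop (1 / p ^ Fintype.card J)]
    with n hnM hn hnp I _ hI
  obtain ⟨K, hK₁, hK₂, hK₃⟩ := hM₀ (Fintype.card I)
    (Nat.le_of_mul_le_mul_right ((hnM.trans (Nat.le_mul_of_pos_left n hd)).trans_eq hI.symm)
      Fintype.card_pos) I rfl
  have hIR : (Fintype.card I : ℝ) * Fintype.card J = d * n := mod_cast hI
  have hIJ : Fintype.card (I × J) = d * n := by rw [Fintype.card_prod, hI]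
  rw [hIR] at hK₁ hK₂ hK₃
  have hdR : (0 : ℝ) < d := mod_cast hd
  have hnR : (0 : ℝ) < n := mod_cast hn
  have hdiv : (d : ℝ) * (K / d : ℕ) + (K % d : ℕ) = K := mod_cast Nat.div_add_mod K d
  have hmod : ((K % d : ℕ) : ℝ) < d := mod_cast Nat.mod_lt K hd
  refine ⟨K / d, ?_, ?_, ?_⟩
  · rw [div_le_iff₀ (by positivity)] at hnp
    rw [le_div_iff₀ hnR]
    have : n * (p - p ^ Fintype.card J) < (K / d : ℕ) + 1 :=
      lt_of_mul_lt_mul_left (by linarith) hdR.le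
    linarith
  · rw [div_le_iff₀ hnR]
    exact le_of_mul_le_mul_left (by linarith [Nat.cast_nonneg (α := ℝ) (K % d)]) hdR
  · have hKN : d * (K / d) + K % d ≤ Fintype.card (I × J) := by
      rw [Nat.div_add_mod, hIJ]
      have : (K : ℝ) ≤ (d * n : ℕ) := hK₂.trans (by push_cast; nlinarith [mul_pos hdR hnR])
      exact mod_cast this
    have hshift := goodWeight_add_le hp.le hp2 (K % d) hKN
    have hw := goodWeight_nonneg (I := I) (J := J) hp.le (by linarith) (d * (K / d))
    rw [Nat.div_add_mod, hIJ, Nat.cast_mul] at hshift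
    calc (1 - p ^ Fintype.card J) ^ Fintype.card I
        ≤ 2 * (d * n + 1) * goodWeight I J p K := hK₃
      _ ≤ 2 * (d * n + 1) * ((d * n + 1) ^ d * goodWeight I J p (d * (K / d))) := by
        gcongr
        refine hshift.trans (mul_le_mul_of_nonneg_right ?_ hw)
        exact (pow_le_pow_left₀ (by positivity) (le_add_of_nonneg_right zero_le_one) _).trans
          (pow_le_pow_right₀ (by linarith [mul_pos hdR hnR]) (Nat.mod_lt K hd).le)
      _ = _ := by ring

lemma card_wordsOfContent_mul_prod_pow_le_one {Ω L : Type*} [Fintype Ω] [Fintype L]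
    [DecidableEq L] {q : L → ℝ}
    (hq : ∀ l, 0 ≤ q l) (hsum : ∑ l, q l = 1) (c : L → ℕ) :
    #(wordsOfContent Ω c) * ∏ l, q l ^ c l ≤ 1 := by
  rw [← nsmul_eq_mul, ← sum_const]
  calc ∑ _w ∈ wordsOfContent Ω c, ∏ l, q l ^ c l
      = ∑ w ∈ wordsOfContent Ω c, ∏ x, q (w x) :=
        sum_congr rfl fun w hw => (prod_comp_of_mem_wordsOfContent hw q).symm
    _ ≤ ∑ w : Ω → L, ∏ x, q (w x) :=
        sum_le_univ_sum_of_nonneg fun w => prod_nonneg fun x _ => hq (w x)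
    _ = 1 := by simpa [hsum] using sum_prod_filter_forall_mem (J := Ω) q univ

lemma filter_goodRows_wordsOfContent {c : Bool → ℕ}
    (hc : c true + c false = Fintype.card (I × J)) :
    {χ ∈ wordsOfContent (I × J) c | GoodRows χ} = goodPatterns I J (c true) := by
  ext χ
  have hcount := card_filter_add_card_filter_not (s := univ) fun x => χ x = true
  simp only [Bool.not_eq_true, card_univ] at hcount
  simp only [goodPatterns, mem_filter, mem_univ, true_and, mem_wordsOfContent, Bool.forall_bool]
  constructor
  · exact fun h => ⟨h.2, h.1.2⟩
  · exact fun h => ⟨⟨by omega, h.2⟩, h.1⟩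

/-- The weights `u` and `v` tilt the density of `S` from `k / n` to `p`. -/
lemma goodWeight_le_uniformProb_indepSet_mul {n d k : ℕ} {S : Finset (Fin n)} {u v : ℝ}
    (hIJ : Fintype.card I * Fintype.card J = d * n) (hS : #S = k) (hu : 0 ≤ u)
    (hv : 0 ≤ v) (hku : k / n * u = p) (hkv : (1 - k / n) * v = 1 - p) :
    goodWeight I J p (d * k)
      ≤ uniformProb (wordsOfContent (I × J) fun _ : Fin n => d) (fun w => IndepSet (edgesOf w) S)
        * (u ^ (d * k) * v ^ (d * (n - k))) := by
  have hN : Fintype.card (I × J) = d * n := by rw [Fintype.card_prod, hIJ]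
  have hkn : k ≤ n := hS ▸ (card_le_univ S).trans_eq (Fintype.card_fin n)
  have hkn1 : (k / n : ℝ) ≤ 1 := div_le_one_of_le₀ (mod_cast hkn) (Nat.cast_nonneg n)
  set c : Bool → ℕ := fun b => ∑ x with decide (x ∈ S) = b, d
  have hc : c true = d * k ∧ c false = d * (n - k) := by
    simp [c, ← hS, filter_notMem_eq_sdiff, ← compl_eq_univ_sdiff, card_compl, mul_comm]
  have hcN : c true + c false = Fintype.card (I × J) := by
    rw [hc.1, hc.2, hN, ← mul_add, Nat.add_sub_cancel' hkn]
  have hlabel : uniformProb (wordsOfContent (I × J) fun _ : Fin n => d)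
      (fun w => IndepSet (edgesOf w) S) = uniformProb (wordsOfContent (I × J) c) GoodRows := by
    rw [← uniformProb_wordsOfContent_label (fun x => decide (x ∈ S)) (by simp [hN, mul_comm])]
    simp only [indepSet_edgesOf_iff, GoodRows, Function.comp_apply, decide_eq_false_iff_not]
  have hne : (wordsOfContent (I × J) c).Nonempty := wordsOfContent_nonempty (by simp [hcN])
  have hA := card_wordsOfContent_mul_prod_pow_le_one (Ω := I × J)
    (q := fun b : Bool => bif b then (k / n : ℝ) else 1 - k / n)
    (Bool.forall_bool.2 ⟨sub_nonneg.2 hkn1, div_nonneg k.cast_nonneg n.cast_nonneg⟩) (by simp) c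
  simp only [Fintype.prod_bool, hc, cond_true, cond_false] at hA
  rw [goodWeight_eq, hN, ← Nat.mul_sub, hlabel, uniformProb, filter_goodRows_wordsOfContent hcN,
    hc.1, ← hkv, ← hku, mul_pow, mul_pow, div_mul_eq_mul_div,
    le_div_iff₀ (mod_cast hne.card_pos)]
  calc _ = #(wordsOfContent (I × J) c) * ((k / n : ℝ) ^ (d * k) * (1 - k / n) ^ (d * (n - k)))
        * (#(goodPatterns I J (d * k)) * (u ^ (d * k) * v ^ (d * (n - k)))) := by ring
    _ ≤ _ := mul_le_of_le_one_left (by positivity) hA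

end GoodPatterns

/-! ### The overlap of a fixed and a random vertex set -/

section Overlap

lemma descFactorial_mul_pow_le {m n : ℕ} (h : m ≤ n) (j : ℕ) :
    m.descFactorial j * n ^ j ≤ n.descFactorial j * m ^ j := by
  induction j with
  | zero => simp
  | succ j ih =>
    have hfactor : (m - j) * n ≤ (n - j) * m := by
      rw [Nat.sub_mul, Nat.sub_mul, Nat.mul_comm n m]
      exact Nat.sub_le_sub_left (Nat.mul_le_mul_left j h) _
    rw [Nat.descFactorial_succ, Nat.descFactorial_succ, pow_succ, pow_succ]
    calc (m - j) * m.descFactorial j * (n ^ j * n)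
        = (m - j) * n * (m.descFactorial j * n ^ j) := by ring
      _ ≤ (n - j) * m * (n.descFactorial j * m ^ j) := Nat.mul_le_mul hfactor ih
      _ = _ := by ring

lemma choose_le_choose_mul_div_pow {m n : ℕ} (h : m ≤ n) (j : ℕ) :
    (m.choose j : ℝ) ≤ n.choose j * ((m : ℝ) / n) ^ j := by
  rcases n.eq_zero_or_pos with rfl | hn
  · rcases j with _ | j <;> simp [Nat.le_zero.1 h]
  have hchoose : m.choose j * n ^ j ≤ n.choose j * m ^ j := by
    have hdesc := descFactorial_mul_pow_le h j
    rw [Nat.descFactorial_eq_factorial_mul_choose, Nat.descFactorial_eq_factorial_mul_choose,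
      mul_assoc, mul_assoc] at hdesc
    exact Nat.le_of_mul_le_mul_left hdesc j.factorial_pos
  rw [div_pow, ← mul_div_assoc, le_div_iff₀ (by positivity)]
  exact_mod_cast hchoose

lemma pow_card_inter_eq_sum {V : Type*} [DecidableEq V] (A T : Finset V) (y : ℝ) :
    y ^ #(A ∩ T) = ∑ U ∈ A.powerset, (y - 1) ^ #U * if U ⊆ T then 1 else 0 := by
  have h := sum_pow_mul_eq_add_pow (y - 1) 1 (A ∩ T)
  simp only [one_pow, mul_one, sub_add_cancel] at h
  simp only [← h, mul_boole, ← sum_filter]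
  exact sum_congr (by ext; rw [mem_powerset, mem_filter, mem_powerset, subset_inter_iff])
    fun _ _ => rfl

variable {V : Type*} [Fintype V] {k l : ℕ}

lemma card_filter_subset_powersetCard_le [DecidableEq V] (U : Finset V) :
    #{T ∈ powersetCard k univ | U ⊆ T} ≤ (Fintype.card V - #U).choose (k - #U) := by
  rw [← card_compl, ← card_powersetCard]
  refine card_le_card_of_injOn (· \ U) (fun T hT => ?_) fun T hT T' hT' h => ?_
  · simp only [coe_filter, mem_powersetCard_univ, Set.mem_ofPred_eq] at hT
    simp only [mem_coe, mem_powersetCard]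
    exact ⟨fun x hx => mem_compl.2 (mem_sdiff.1 hx).2, by rw [card_sdiff_of_subset hT.2, hT.1]⟩
  · simp only [coe_filter, Set.mem_ofPred_eq] at hT hT'
    rw [← sdiff_union_of_subset hT.2, ← sdiff_union_of_subset hT'.2, show T \ U = T' \ U from h]

lemma uniformProb_subset_le_choose_div_choose (hk : k ≤ Fintype.card V) (U : Finset V) :
    uniformProb (powersetCard k univ) (fun T => U ⊆ T)
      ≤ k.choose #U / (Fintype.card V).choose #U := by
  rw [uniformProb, card_powersetCard, card_univ, div_le_div_iff₀ (mod_cast Nat.choose_pos hk)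
    (mod_cast Nat.choose_pos (card_le_univ U))]
  norm_cast
  by_cases hU : #U ≤ k
  · rw [mul_comm (k.choose _), Nat.choose_mul hU, mul_comm]
    refine Nat.mul_le_mul_left _ (le_of_eq_of_le ?_ (card_filter_subset_powersetCard_le U))
    congr!
  · refine le_of_eq_of_le (mul_eq_zero_of_left ?_ _) (Nat.zero_le _)
    refine card_eq_zero.2 <| eq_empty_of_forall_notMem fun T hT => hU ?_
    simp only [mem_filter] at hT
    obtain ⟨hT, hUT⟩ := hT
    exact (card_le_card hUT).trans_eq (mem_powersetCard_univ.1 hT)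

lemma sum_range_choose_mul_pow_le (k m : ℕ) {x : ℝ} (hx : 0 ≤ x) :
    ∑ j ∈ range m, (k.choose j : ℝ) * x ^ j ≤ (1 + x) ^ k := by
  calc ∑ j ∈ range m, (k.choose j : ℝ) * x ^ j
      ≤ ∑ j ∈ range (max m (k + 1)), (k.choose j : ℝ) * x ^ j :=
        sum_le_sum_of_subset_of_nonneg (range_mono (le_max_left _ _)) fun _ _ _ => by positivity
    _ = ∑ j ∈ range (k + 1), (k.choose j : ℝ) * x ^ j := by
        refine (sum_subset (range_mono (le_max_right _ _)) fun j _ hj => ?_).symm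
        rw [mem_range, not_lt] at hj
        simp [Nat.choose_eq_zero_of_lt hj]
    _ = (1 + x) ^ k := by
        rw [add_comm 1 x, add_pow]
        exact sum_congr rfl fun j _ => by rw [one_pow, mul_one, mul_comm]

lemma expect_pow_card_inter_le [DecidableEq V] (hk : k ≤ Fintype.card V) (A : Finset V) {y : ℝ}
    (hy : 1 ≤ y) :
    𝔼 T ∈ powersetCard k univ, y ^ #(A ∩ T)
      ≤ (1 + (#A : ℝ) / Fintype.card V * (y - 1)) ^ k := by
  have hy0 : 0 ≤ y - 1 := sub_nonneg.2 hy
  calc 𝔼 T ∈ powersetCard k univ, y ^ #(A ∩ T)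
      = ∑ U ∈ A.powerset, (y - 1) ^ #U * uniformProb (powersetCard k univ) (fun T => U ⊆ T) := by
        simp only [pow_card_inter_eq_sum, expect_sum_comm, ← mul_expect, expect_boole]
    _ ≤ ∑ U ∈ A.powerset, (y - 1) ^ #U * (k.choose #U / (Fintype.card V).choose #U) := by
        gcongr
        exact uniformProb_subset_le_choose_div_choose hk _
    _ = ∑ j ∈ range (#A + 1),
          (#A).choose j * ((y - 1) ^ j * (k.choose j / (Fintype.card V).choose j)) := by
        rw [sum_powerset_apply_card fun j =>
          (y - 1) ^ j * ((k.choose j : ℝ) / (Fintype.card V).choose j)]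
        simp only [nsmul_eq_mul]
    _ ≤ ∑ j ∈ range (#A + 1), k.choose j * ((#A : ℝ) / Fintype.card V * (y - 1)) ^ j := by
        refine sum_le_sum fun j hj => ?_
        have hpos : (0 : ℝ) < (Fintype.card V).choose j := mod_cast Nat.choose_pos
          ((Nat.lt_succ_iff.1 (mem_range.1 hj)).trans (card_le_univ A))
        have hle := choose_le_choose_mul_div_pow (card_le_univ A) j
        rw [mul_div_assoc', mul_div_assoc', div_le_iff₀ hpos, mul_pow]
        calc ((#A).choose j : ℝ) * ((y - 1) ^ j * k.choose j)
            ≤ (Fintype.card V).choose j * ((#A : ℝ) / Fintype.card V) ^ j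
                * ((y - 1) ^ j * k.choose j) := by gcongr
          _ = _ := by ring
    _ ≤ _ := sum_range_choose_mul_pow_le k _ (mul_nonneg (by positivity) hy0)

variable {S : Finset V}

lemma uniformProb_card_inter_eq_mul_pow_le [DecidableEq V] (hS : #S = k) (l : ℕ) {y : ℝ}
    (hy : 1 ≤ y) :
    uniformProb (powersetCard k univ) (fun T => #(S ∩ T) = l) * y ^ l
      ≤ exp (k * (k / Fintype.card V) * (y - 1)) := by
  have hk : k ≤ Fintype.card V := hS ▸ card_le_univ S
  have hy0 : 0 ≤ (k : ℝ) / Fintype.card V * (y - 1) :=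
    mul_nonneg (by positivity) (sub_nonneg.2 hy)
  calc uniformProb (powersetCard k univ) (fun T => #(S ∩ T) = l) * y ^ l
      ≤ 𝔼 T ∈ powersetCard k univ, y ^ #(S ∩ T) := by
        rw [← expect_boole, expect_mul]
        refine expect_le_expect fun T _ => ?_
        split_ifs with h
        · rw [one_mul, h]
        · rw [zero_mul]; positivity
    _ ≤ (1 + (k : ℝ) / Fintype.card V * (y - 1)) ^ k := hS ▸ expect_pow_card_inter_le hk S hy
    _ ≤ exp (k / Fintype.card V * (y - 1)) ^ k := by
        refine pow_le_pow_left₀ (by linarith) ?_ k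
        linarith [add_one_le_exp ((k : ℝ) / Fintype.card V * (y - 1))]
    _ = _ := by rw [← exp_nat_mul, mul_assoc]

/-- The lower tail comes from the moment generating function of the overlap with `Sᶜ`. -/
lemma uniformProb_card_inter_eq_le_mul_pow [DecidableEq V] (hS : #S = k) (hl : l ≤ k) {y : ℝ}
    (hy : 1 ≤ y) :
    uniformProb (powersetCard k univ) (fun T => #(S ∩ T) = l)
      ≤ exp (-(k * (k / Fintype.card V) * (1 - 1 / y))) * y ^ l := by
  have hk : k ≤ Fintype.card V := hS ▸ card_le_univ S
  have hy0 : 0 < y := by linarith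
  rcases (Fintype.card V).eq_zero_or_pos with hn | hn
  · obtain rfl : k = 0 := by omega
    obtain rfl : l = 0 := by omega
    simpa using uniformProb_le_one _ _
  have hs1 : (k : ℝ) / Fintype.card V ≤ 1 := div_le_one_of_le₀ (mod_cast hk) (by positivity)
  set s := (k : ℝ) / Fintype.card V
  have hcompl : (#Sᶜ : ℝ) / Fintype.card V = 1 - s := by
    rw [card_compl, hS, Nat.cast_sub hk, sub_div, div_self (by positivity)]
  have hbase : 1 + (1 - s) * (y - 1) ≤ exp (-(s * (1 - 1 / y))) * y :=
    calc 1 + (1 - s) * (y - 1) = (-(s * (1 - 1 / y)) + 1) * y := by field_simp; ring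
      _ ≤ _ := by gcongr; exact add_one_le_exp _
  refine le_of_mul_le_mul_right ?_ (pow_pos hy0 (k - l))
  calc uniformProb (powersetCard k univ) (fun T => #(S ∩ T) = l) * y ^ (k - l)
      ≤ 𝔼 T ∈ powersetCard k univ, y ^ #(Sᶜ ∩ T) := by
        rw [← expect_boole, expect_mul]
        refine expect_le_expect fun T hT => ?_
        split_ifs with h
        · have hsum := card_inter_add_card_sdiff T S
          rw [mem_powersetCard_univ.1 hT, inter_comm, h, sdiff_eq_inter_compl,
            inter_comm] at hsum
          rw [one_mul, ← hsum, Nat.add_sub_cancel_left]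
        · rw [zero_mul]; positivity
    _ ≤ (1 + (1 - s) * (y - 1)) ^ k := hcompl ▸ expect_pow_card_inter_le hk Sᶜ hy
    _ ≤ (exp (-(s * (1 - 1 / y))) * y) ^ k :=
        pow_le_pow_left₀ (by nlinarith) hbase k
    _ = exp (-(k * s * (1 - 1 / y))) * y ^ l * y ^ (k - l) := by
        rw [mul_pow, ← exp_nat_mul, mul_assoc, ← pow_add, Nat.add_sub_cancel' hl]
        congr 2
        ring

lemma uniformProb_card_inter_eq_mul_exp_abs_le [DecidableEq V] (hS : #S = k) (hl : l ≤ k) {θ : ℝ}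
    (h0 : 0 ≤ θ) (h1 : θ ≤ 1) :
    uniformProb (powersetCard k univ) (fun T => #(S ∩ T) = l)
        * exp (θ * |(l : ℝ) - k * (k / Fintype.card V)|)
      ≤ exp (k * (k / Fintype.card V) * θ ^ 2) := by
  have hy : 1 ≤ exp θ := one_le_exp h0
  have hupper := uniformProb_card_inter_eq_mul_pow_le hS l hy
  have hlower := uniformProb_card_inter_eq_le_mul_pow hS hl hy
  have hμ0 : (0 : ℝ) ≤ k * (k / Fintype.card V) := by positivity
  generalize (k : ℝ) * (k / Fintype.card V) = μ at *
  have hexp := abs_le.1 (abs_exp_sub_one_sub_id_le (x := θ) (by rwa [abs_of_nonneg h0]))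
  have hexp_neg := abs_le.1
    (abs_exp_sub_one_sub_id_le (x := -θ) (by rwa [abs_neg, abs_of_nonneg h0]))
  rcases le_total μ l with h | h
  · rw [← exp_nat_mul] at hupper
    rw [abs_of_nonneg (by linarith), show θ * ((l : ℝ) - μ) = l * θ + -(μ * θ) by ring,
      exp_add, ← mul_assoc]
    refine (mul_le_mul_of_nonneg_right hupper (exp_pos _).le).trans ?_
    rw [← exp_add, exp_le_exp]
    nlinarith
  · rw [← exp_nat_mul, one_div, ← exp_neg, ← exp_add] at hlower
    refine (mul_le_mul_of_nonneg_right hlower (exp_pos _).le).trans ?_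
    rw [← exp_add, exp_le_exp, abs_of_nonpos (by linarith)]
    nlinarith

lemma uniformProb_card_inter_eq_mul_exp_log_le_one [DecidableEq V] (hS : #S = k) (hk : 0 < k)
    (hl : (k : ℝ) * (k / Fintype.card V) ≤ l) :
    uniformProb (powersetCard k univ) (fun T => #(S ∩ T) = l)
      * exp (l * (log (l / (k * (k / Fintype.card V))) - 1)) ≤ 1 := by
  have hn : 0 < Fintype.card V := hk.trans_le (hS ▸ card_le_univ S)
  have hμ : (0 : ℝ) < k * (k / Fintype.card V) := by positivity
  have hupper (hy) := uniformProb_card_inter_eq_mul_pow_le (y := l / (k * (k / Fintype.card V)))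
    hS l hy
  generalize (k : ℝ) * (k / Fintype.card V) = μ at *
  have hy : 1 ≤ l / μ := by rwa [one_le_div hμ]
  have hpow : exp (l * (log (l / μ) - 1)) = (l / μ) ^ l * exp (-l) := by
    rw [mul_sub, sub_eq_add_neg, exp_add, exp_nat_mul, exp_log (by linarith), mul_one]
  rw [hpow, ← mul_assoc]
  refine (mul_le_mul_of_nonneg_right (hupper hy) (exp_pos _).le).trans ?_
  rw [← exp_add, exp_le_one_iff, mul_sub, mul_div_cancel₀ _ hμ.ne']
  linarith

end Overlap

/-! ### Bounds for the pair weight -/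

section PairWeight

variable {q r : ℕ} {p u β : ℝ}

lemma pairWeight_eq_sum (r : ℕ) (p u β Δ : ℝ) :
    pairWeight r p u β Δ
      = ∑ j ∈ range (r + 1), (r.choose j : ℝ) * Δ ^ j * (β ^ j - p ^ (r - j) * u ^ j) ^ 2 := by
  unfold pairWeight
  rw [add_comm 1, add_pow, add_comm p, add_pow, add_comm (p ^ 2), add_pow, mul_sum,
    ← sum_sub_distrib, ← sum_add_distrib]
  refine sum_congr rfl fun j _ => ?_
  rw [one_pow, mul_pow, mul_pow, mul_pow, mul_pow, ← pow_mul, ← pow_mul, ← pow_mul]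
  ring

lemma pairWeight_nonneg (r : ℕ) {s a v : ℝ} (ha : 0 ≤ a) (has : a ≤ s) (hs : 2 * s ≤ 1 + a)
    (hu : 0 ≤ u) (hv : 0 ≤ v) (huv : s * u + (1 - s) * v = 1) :
    0 ≤ pairWeight r (s * u) u (u - v) (a - s ^ 2) := by
  have hboth : (s * u) ^ 2 + (a - s ^ 2) * u ^ 2 = a * u ^ 2 := by ring
  have hone : s * u + u * (a - s ^ 2) * (u - v) = a * u ^ 2 + (s - a) * (u * v) := by
    linear_combination -(s * u) * huv
  have hall : 1 + (a - s ^ 2) * (u - v) ^ 2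
      = a * u ^ 2 + 2 * ((s - a) * (u * v)) + (1 + a - 2 * s) * v ^ 2 := by
    linear_combination (-(s * u + (1 - s) * v)) * huv - huv
  have h₁ : 0 ≤ a * u ^ 2 := by positivity
  have h₂ : 0 ≤ (s - a) * (u * v) := mul_nonneg (sub_nonneg.2 has) (by positivity)
  have h₃ : 0 ≤ (1 + a - 2 * s) * v ^ 2 := mul_nonneg (sub_nonneg.2 hs) (by positivity)
  rw [pairWeight, hboth, hone, hall]
  generalize a * u ^ 2 = x, (s - a) * (u * v) = y, (1 + a - 2 * s) * v ^ 2 = z at *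
  rcases r with _ | r
  · norm_num
  have hconvex := add_pow_le h₁ (show 0 ≤ x + 2 * y + z by linarith) (r + 1)
  have hmono : (2 * (x + y)) ^ (r + 1) ≤ (x + (x + 2 * y + z)) ^ (r + 1) := by
    gcongr
    linarith
  rw [mul_pow, pow_succ 2, mul_assoc] at hmono
  have := le_of_mul_le_mul_left (hmono.trans hconvex) (by positivity)
  linarith

/-- The smallness of `β` makes the coefficient of `Δ` of order `p ^ (2 * q)`. -/
lemma pairWeight_le_add_sub_pow (Δ : ℝ) (hp : 0 ≤ p) (hp1 : p ≤ 1) (hu : 0 ≤ u) (hu8 : u ≤ 8)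
    (hβ : 0 ≤ β) (hβ8 : β ≤ 8 * p ^ q) :
    pairWeight (q + 1) p u β Δ
      ≤ (1 - p ^ (q + 1)) ^ 2 + ((p ^ 2 + 64 * |Δ|) ^ (q + 1) - (p ^ 2) ^ (q + 1)) := by
  have hcoeff (j : ℕ) : (β ^ (j + 1) - p ^ (q - j) * u ^ (j + 1)) ^ 2
      ≤ (8 ^ (j + 1) * p ^ (q - j)) ^ 2 := by
    have hβj : β ^ (j + 1) ≤ 8 ^ (j + 1) * p ^ (q - j) := by
      calc β ^ (j + 1) ≤ (8 * p ^ q) ^ (j + 1) := by gcongr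
        _ = 8 ^ (j + 1) * p ^ (q * (j + 1)) := by rw [mul_pow, ← pow_mul]
        _ ≤ _ := mul_le_mul_of_nonneg_left (pow_le_pow_of_le_one hp hp1
            ((Nat.sub_le _ _).trans (Nat.le_mul_of_pos_right _ j.succ_pos))) (by positivity)
    have huj : p ^ (q - j) * u ^ (j + 1) ≤ 8 ^ (j + 1) * p ^ (q - j) := by
      rw [mul_comm]
      gcongr
    have : 0 ≤ p ^ (q - j) * u ^ (j + 1) := by positivity
    have : 0 ≤ β ^ (j + 1) := by positivity
    exact sq_le_sq' (by linarith) (by linarith)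
  rw [pairWeight_eq_sum, add_comm (p ^ 2), add_pow, sum_range_succ' _ (q + 1),
    sum_range_succ' (fun m => (64 * |Δ|) ^ m * _ * _) (q + 1)]
  simp only [pow_zero, Nat.choose_zero_right, Nat.cast_one, one_mul, mul_one, Nat.sub_zero,
    Nat.add_sub_add_right]
  rw [add_sub_cancel_right, add_comm]
  refine add_le_add_right (sum_le_sum fun j _ => ?_) _
  calc _ ≤ ((q + 1).choose (j + 1) : ℝ) * |Δ| ^ (j + 1) * (8 ^ (j + 1) * p ^ (q - j)) ^ 2 := by
        refine mul_le_mul ?_ (hcoeff j) (by positivity) (by positivity)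
        rw [← abs_pow]
        gcongr
        exact le_abs_self _
    _ = _ := by
        rw [mul_pow 64, show (64 : ℝ) ^ (j + 1) = (8 ^ (j + 1)) ^ 2 by
          rw [← pow_mul, mul_comm, pow_mul]; norm_num]
        ring

lemma pairWeight_le_add_of_nonneg (r : ℕ) {Δ a : ℝ} (hp : 0 ≤ p) (hu : 0 ≤ u) (hβ : 0 ≤ β)
    (hΔ : 0 ≤ Δ) (ha : Δ ≤ a) (hpa : p ^ 2 + Δ * u ^ 2 = a * u ^ 2) :
    pairWeight r p u β Δ ≤ (1 - p ^ r) ^ 2 + ((1 + a * β ^ 2) ^ r - 1 + (a * u ^ 2) ^ r) := by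
  rw [pairWeight, hpa]
  have hall : (1 + Δ * β ^ 2) ^ r ≤ (1 + a * β ^ 2) ^ r := by gcongr
  have hone : p ^ r ≤ (p + u * Δ * β) ^ r :=
    pow_le_pow_left₀ hp (le_add_of_nonneg_right (by positivity)) r
  linarith [sq_nonneg (p ^ r), sub_sq 1 (p ^ r)]

lemma pow_succ_sub_pow_succ_le {x y : ℝ} (hy : 0 ≤ y) (hyx : y ≤ x) (q : ℕ) :
    x ^ (q + 1) - y ^ (q + 1) ≤ (q + 1) * (x - y) * x ^ q := by
  have h := (le_abs_self _).trans (abs_pow_sub_pow_le x y (q + 1))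
  rw [abs_of_nonneg (sub_nonneg.2 hyx), abs_of_nonneg hy, abs_of_nonneg (hy.trans hyx),
    max_eq_left hyx, Nat.add_sub_cancel, Nat.cast_succ] at h
  linarith

lemma pow_le_pow_mul_exp_of_le_add {x g y K : ℝ} (hx : 0 ≤ x) (hg : 0 ≤ g) (hK : 1 ≤ g * K)
    (hy : 0 ≤ y) (h : x ≤ g + y) (M : ℕ) : x ^ M ≤ g ^ M * exp (M * (K * y)) := by
  rw [exp_nat_mul, ← mul_pow]
  refine pow_le_pow_left₀ hx ?_ M
  calc x ≤ g + g * K * y := by nlinarith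
    _ = g * (K * y + 1) := by ring
    _ ≤ g * exp (K * y) := by gcongr; exact add_one_le_exp _

/-- The density `s` of a vertex set is tilted to a slightly larger success probability `p`, which is
small compared to the edge size `q + 1`. -/
structure SmallTilt (q : ℕ) (p s : ℝ) : Prop where
  one_le : 1 ≤ q
  pos : 0 < p
  mul_le_one : 1000 * (q + 1) * p ≤ 1
  sub_le : p - 2 * p ^ (q + 1) ≤ s
  le : s ≤ p

namespace SmallTilt

variable {s : ℝ} {M d n : ℕ}

lemma le_inv (h : SmallTilt q p s) : p ≤ 1 / 2000 := by
  have hq : (1 : ℝ) ≤ q := mod_cast h.one_le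
  nlinarith [h.pos, h.mul_le_one]

lemma pow_le (h : SmallTilt q p s) : p ^ q ≤ p :=
  pow_le_of_le_one h.pos.le (by linarith [h.le_inv]) (by have := h.one_le; omega)

lemma pow_succ_le (h : SmallTilt q p s) : p ^ (q + 1) ≤ p :=
  pow_le_of_le_one h.pos.le (by linarith [h.le_inv]) (by omega)

lemma sub_pow_mul_le (h : SmallTilt q p s) : p - s ≤ 2 * p ^ q * p := by
  have := h.sub_le
  rw [pow_succ] at this
  linarith

lemma mul_sub_le (h : SmallTilt q p s) : p * (1 - 2 * p) ≤ s := by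
  nlinarith [h.pos, h.pow_le, h.sub_pow_mul_le]

lemma half_le (h : SmallTilt q p s) : p / 2 ≤ s := by
  nlinarith [h.pos, h.le_inv, h.mul_sub_le]

lemma density_pos (h : SmallTilt q p s) : 0 < s := by linarith [h.pos, h.half_le]

lemma div_le_exp (h : SmallTilt q p s) : p / s ≤ exp (4 * p) := by
  have hp := h.pos
  have := h.le_inv
  rw [div_le_iff₀ h.density_pos]
  calc p ≤ p + 2 * p ^ 2 * (1 - 4 * p) := by nlinarith [sq_nonneg p]
    _ = (4 * p + 1) * (p * (1 - 2 * p)) := by ring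
    _ ≤ exp (4 * p) * s :=
        mul_le_mul (add_one_le_exp _) h.mul_sub_le (by nlinarith) (exp_pos _).le

lemma div_le_two (h : SmallTilt q p s) : p / s ≤ 2 := by
  rw [div_le_iff₀ h.density_pos]
  linarith [h.half_le]

lemma div_sub_div_eq (h : SmallTilt q p s) :
    p / s - (1 - p) / (1 - s) = (p - s) / (s * (1 - s)) := by
  have hs := h.density_pos.ne'
  have : 1 - s ≠ 0 := by linarith [h.le, h.le_inv]
  field_simp
  ring

lemma div_sub_div_nonneg (h : SmallTilt q p s) : 0 ≤ p / s - (1 - p) / (1 - s) := by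
  rw [h.div_sub_div_eq]
  exact div_nonneg (sub_nonneg.2 h.le)
    (mul_nonneg h.density_pos.le (by linarith [h.le, h.le_inv]))

lemma div_sub_div_le (h : SmallTilt q p s) : p / s - (1 - p) / (1 - s) ≤ 8 * p ^ q := by
  have hp := h.pos
  have hs : p / 4 ≤ s * (1 - s) := by nlinarith [h.half_le, h.le, h.le_inv]
  rw [h.div_sub_div_eq, div_le_iff₀ (by linarith)]
  calc p - s ≤ 8 * p ^ q * (p / 4) := by linarith [h.sub_pow_mul_le]
    _ ≤ _ := by gcongr

lemma one_le_sq_mul_exp (h : SmallTilt q p s) : 1 ≤ (1 - p ^ (q + 1)) ^ 2 * exp (4 * p) := by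
  have hp := h.pos
  have hexp : exp (4 * p) = exp (2 * p) ^ 2 := by
    rw [← exp_nat_mul]
    congr 1
    push_cast
    ring
  rw [hexp, ← mul_pow]
  refine one_le_pow₀ ?_
  calc (1 : ℝ) ≤ (1 - p) * (2 * p + 1) := by nlinarith [h.le_inv]
    _ ≤ (1 - p ^ (q + 1)) * exp (2 * p) :=
        mul_le_mul (by linarith [h.pow_succ_le]) (add_one_le_exp _) (by linarith)
          (by linarith [h.pow_succ_le, h.le_inv])

lemma exp_four_mul_le_two (h : SmallTilt q p s) : exp (4 * p) ≤ 2 := by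
  have := h.le_inv
  have hlog := log_two_gt_d9
  rw [← le_log_iff_exp_le two_pos]
  linarith

/-- Here `577 = 1 + 64 * 9` arises from `p ^ 2 + 64 * |Δ| ≤ 577 * p ^ 2`. -/
lemma pow_pairWeight_le_of_abs_le (h : SmallTilt q p s) (hM : M * (q + 1) = d * n) {Δ : ℝ}
    (hΔ : |Δ| ≤ 9 * p ^ 2)
    (hw : 0 ≤ pairWeight (q + 1) p (p / s) (p / s - (1 - p) / (1 - s)) Δ) :
    pairWeight (q + 1) p (p / s) (p / s - (1 - p) / (1 - s)) Δ ^ M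
      ≤ ((1 - p ^ (q + 1)) ^ 2) ^ M * exp (128 * 577 ^ q * d * p ^ (2 * q) * (n * |Δ|)) := by
  have hp := h.pos
  have hM' : (M : ℝ) * (q + 1) = d * n := mod_cast hM
  have hgap : (p ^ 2 + 64 * |Δ|) ^ (q + 1) - (p ^ 2) ^ (q + 1)
      ≤ (q + 1) * (64 * |Δ|) * (577 ^ q * p ^ (2 * q)) := by
    refine (pow_succ_sub_pow_succ_le (sq_nonneg p) (by linarith [abs_nonneg Δ]) q).trans ?_
    rw [add_sub_cancel_left, pow_mul, ← mul_pow]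
    gcongr
    linarith
  have hle := (pairWeight_le_add_sub_pow Δ hp.le (by linarith [h.le_inv])
    (div_nonneg hp.le h.density_pos.le) (by linarith [h.div_le_two]) h.div_sub_div_nonneg
    h.div_sub_div_le).trans (add_le_add_right hgap _)
  refine (pow_le_pow_mul_exp_of_le_add hw (sq_nonneg _)
    (h.one_le_sq_mul_exp.trans (mul_le_mul_of_nonneg_left h.exp_four_mul_le_two (sq_nonneg _)))
    (by positivity) hle M).trans_eq ?_
  congr 2
  linear_combination 128 * |Δ| * 577 ^ q * p ^ (2 * q) * hM'

lemma one_add_mul_sq_pow_sub_one_le (h : SmallTilt q p s) {a : ℝ} (ha : 0 ≤ a) (ha1 : a ≤ 1) :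
    (1 + a * (p / s - (1 - p) / (1 - s)) ^ 2) ^ (q + 1) - 1
      ≤ (q + 1) * (a * (64 * p ^ (2 * q))) * 2 ^ q := by
  have hβ0 := h.div_sub_div_nonneg
  have hβ := h.div_sub_div_le
  generalize p / s - (1 - p) / (1 - s) = β at *
  have hβ1 : β ^ 2 ≤ 1 := pow_le_one₀ hβ0 (by linarith [h.pow_le, h.le_inv])
  have haβ : a * β ^ 2 ≤ 1 := mul_le_one₀ ha1 (sq_nonneg β) hβ1
  have hpow := pow_succ_sub_pow_succ_le zero_le_one
    (le_add_of_nonneg_right (mul_nonneg ha (sq_nonneg β))) q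
  rw [one_pow, add_sub_cancel_left] at hpow
  refine hpow.trans ?_
  gcongr
  · have := h.pos
    positivity
  · calc β ^ 2 ≤ (8 * p ^ q) ^ 2 := by gcongr
      _ = 64 * p ^ (2 * q) := by rw [mul_pow, ← pow_mul, mul_comm q]; norm_num
  · linarith

/-- One of the `q + 1` factors is kept exactly, and `(a / s) ^ q ≤ a / s` for the others. -/
lemma mul_sq_pow_le (h : SmallTilt q p s) {a : ℝ} (ha : 0 ≤ a) (has : a ≤ s) :
    (a * (p / s) ^ 2) ^ (q + 1) ≤ a * (a / s) * p ^ q * exp (4 * p) ^ (q + 2) := by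
  have hs := h.density_pos
  have hp := h.pos
  have hratio : (a / s) ^ q ≤ a / s :=
    pow_le_of_le_one (by positivity) (div_le_one_of_le₀ has hs.le) (by have := h.one_le; omega)
  calc (a * (p / s) ^ 2) ^ (q + 1)
      = (a / s) ^ q * (a * p ^ q * (p / s) ^ (q + 2)) := by
        rw [show a * (p / s) ^ 2 = a / s * (p * (p / s)) by ring, mul_pow, mul_pow]
        ring
    _ ≤ a / s * (a * p ^ q * exp (4 * p) ^ (q + 2)) := by
        gcongr
        exact h.div_le_exp
    _ = _ := by ring

lemma pow_pairWeight_le_of_sq_le (h : SmallTilt q p s) (hM : M * (q + 1) = d * n) {a : ℝ}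
    (hsa : s ^ 2 ≤ a) (has : a ≤ s)
    (hw : 0 ≤ pairWeight (q + 1) p (p / s) (p / s - (1 - p) / (1 - s)) (a - s ^ 2)) :
    pairWeight (q + 1) p (p / s) (p / s - (1 - p) / (1 - s)) (a - s ^ 2) ^ M
      ≤ ((1 - p ^ (q + 1)) ^ 2) ^ M * exp (a * n * (128 * 2 ^ q * d * p ^ (2 * q)
        + d / (q + 1) * p ^ q * exp (16 * (q + 1) * p) * (a / s))) := by
  have hs := h.density_pos
  have hp := h.pos
  have ha : 0 ≤ a := (sq_nonneg s).trans hsa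
  have hM' : (M : ℝ) = d * n / (q + 1) := by
    rw [eq_div_iff (by positivity)]
    exact_mod_cast hM
  have hle := (pairWeight_le_add_of_nonneg (q + 1) hp.le (div_nonneg hp.le hs.le)
    h.div_sub_div_nonneg (sub_nonneg.2 hsa) (sub_le_self a (sq_nonneg s))
    (by field_simp; ring)).trans (add_le_add_right (add_le_add
      (h.one_add_mul_sq_pow_sub_one_le ha (by linarith [h.le, h.le_inv]))
      (h.mul_sq_pow_le ha has)) _)
  refine (pow_le_pow_mul_exp_of_le_add hw (sq_nonneg _) h.one_le_sq_mul_exp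
    (by positivity) hle M).trans ?_
  have hexp : exp (4 * p) ^ (q + 2) * exp (4 * p) ≤ exp (16 * (q + 1) * p) := by
    rw [← pow_succ, ← exp_nat_mul, exp_le_exp]
    push_cast
    nlinarith [mul_nonneg (Nat.cast_nonneg (α := ℝ) q) hp.le]
  refine mul_le_mul_of_nonneg_left (exp_le_exp.2 ?_) (by positivity)
  calc (M : ℝ) * (exp (4 * p) * ((q + 1) * (a * (64 * p ^ (2 * q))) * 2 ^ q
        + a * (a / s) * p ^ q * exp (4 * p) ^ (q + 2)))
      = M * (q + 1) * (a * 64 * p ^ (2 * q) * 2 ^ q) * exp (4 * p)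
        + M * (a * (a / s) * p ^ q) * (exp (4 * p) ^ (q + 2) * exp (4 * p)) := by ring
    _ ≤ M * (q + 1) * (a * 64 * p ^ (2 * q) * 2 ^ q) * 2
        + M * (a * (a / s) * p ^ q) * exp (16 * (q + 1) * p) := by
        gcongr
        exact h.exp_four_mul_le_two
    _ = _ := by
        rw [hM']
        field_simp
        ring

end SmallTilt

end PairWeight

/-! ### Overlaps against pair weights -/

lemma add_mul_le_log_div {s p x c : ℝ} (hs : 0 < s) (hsp : s ≤ p) (hx : 10 * s ≤ x) (hx1 : x ≤ 1)
    (hc : 0 ≤ c) (hcp : 10 * c * p ≤ 1 / 2) (hlog : c + 11 / 10 + log p ≤ 0) :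
    11 / 10 + c * x ≤ log (x / s) := by
  have hlogs : log s ≤ log p := log_le_log hs hsp
  have hlog10 : 8 / 5 ≤ log 10 := by
    have hlog8 : log 8 = 3 * log 2 := by
      rw [show (8 : ℝ) = 2 ^ 3 by norm_num, log_pow]
      norm_num
    linarith [log_le_log (by norm_num) (show (8 : ℝ) ≤ 10 by norm_num), log_two_gt_d9]
  have hconcave : ConcaveOn ℝ (Set.Ioi 0) fun y => log y - c * y :=
    strictConcaveOn_log_Ioi.concaveOn.sub
      (((LinearMap.mul ℝ ℝ) c).convexOn (convex_Ioi 0))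
  have hmin := hconcave.min_le_of_mem_Icc (Set.mem_Ioi.2 (by positivity : 0 < 10 * s))
    (Set.mem_Ioi.2 one_pos) ⟨hx, hx1⟩
  have hcs : c * s ≤ c * p := by gcongr
  have hmin' : 11 / 10 + log s ≤ log x - c * x := by
    refine le_trans (le_min ?_ ?_) hmin
    · rw [log_mul (by norm_num) hs.ne']
      linarith
    · rw [log_one]
      linarith
  rw [log_div (by linarith) hs.ne']
  linarith

namespace SmallTilt

variable {q d n M k l : ℕ} {p θ c : ℝ}

lemma pairWeight_nonneg {s a : ℝ} (h : SmallTilt q p s) (ha : 0 ≤ a) (has : a ≤ s) :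
    0 ≤ pairWeight (q + 1) p (p / s) (p / s - (1 - p) / (1 - s)) (a - s ^ 2) := by
  have hs := h.density_pos
  have hp := h.pos
  have hp' := h.le_inv
  have hsp := h.le
  have hsu : s * (p / s) = p := mul_div_cancel₀ p hs.ne'
  have := _root_.pairWeight_nonneg (q + 1) (u := p / s) (v := (1 - p) / (1 - s)) ha has
    (by linarith) (by positivity) (div_nonneg (by linarith) (by linarith))
    (by rw [hsu, mul_div_cancel₀ _ (by linarith)]; ring)
  rwa [hsu] at this

lemma size_pos (h : SmallTilt q p (k / n : ℝ)) : 0 < k ∧ 0 < n := by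
  have hs := h.density_pos
  constructor <;> refine Nat.pos_of_ne_zero ?_ <;> rintro rfl <;> simp at hs

lemma le_card (h : SmallTilt q p (k / n : ℝ)) : k ≤ n := by
  have hs : (k / n : ℝ) ≤ 1 := by linarith [h.le, h.le_inv]
  rw [div_le_one (Nat.cast_pos.2 h.size_pos.2)] at hs
  exact_mod_cast hs

lemma uniformProb_mul_pairWeight_le_of_le (h : SmallTilt q p (k / n : ℝ))
    (hM : M * (q + 1) = d * n) (hθ : 128 * 577 ^ q * d * p ^ (2 * q) ≤ θ) (hθ1 : θ ≤ 1)
    {S : Finset (Fin n)} (hS : #S = k) (hl : l ≤ k) (hnear : (l : ℝ) ≤ 10 * (k * (k / n))) :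
    uniformProb (powersetCard k univ) (fun T => #(S ∩ T) = l)
        * pairWeight (q + 1) p (p / (k / n)) (p / (k / n) - (1 - p) / (1 - k / n))
          (l / n - (k / n) ^ 2) ^ M
      ≤ ((1 - p ^ (q + 1)) ^ 2) ^ M * exp (k * (k / n) * θ ^ 2) := by
  have hp := h.pos
  have hs := h.density_pos
  have hn : (0 : ℝ) < n := Nat.cast_pos.2 h.size_pos.2
  have hscale (x : ℝ) : n * |x / n - (k / n : ℝ) ^ 2| = |x - k * (k / n)| := by
    rw [← abs_of_pos hn, ← abs_mul, abs_of_pos hn]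
    congr 1
    field_simp
  have hΔ : |(l / n : ℝ) - (k / n) ^ 2| ≤ 9 * p ^ 2 := by
    have hsp : (k / n : ℝ) ^ 2 ≤ p ^ 2 := pow_le_pow_left₀ hs.le h.le 2
    have hl10 : (l / n : ℝ) ≤ 10 * (k / n) ^ 2 := by
      rw [div_le_iff₀ hn]
      calc (l : ℝ) ≤ 10 * (k * (k / n)) := hnear
        _ = _ := by field_simp
    exact abs_le.2 ⟨by linarith [(by positivity : (0 : ℝ) ≤ l / n)],
      by linarith [sq_nonneg (k / n : ℝ)]⟩
  have hweight := h.pow_pairWeight_le_of_abs_le hM hΔ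
    (h.pairWeight_nonneg (by positivity) (by gcongr))
  have hoverlap := uniformProb_card_inter_eq_mul_exp_abs_le (θ := θ) hS hl
    ((by positivity : 0 ≤ 128 * 577 ^ q * d * p ^ (2 * q)).trans hθ) hθ1
  rw [Fintype.card_fin] at hoverlap
  rw [hscale] at hweight
  refine (mul_le_mul_of_nonneg_left (hweight.trans (mul_le_mul_of_nonneg_left
    (exp_le_exp.2 (mul_le_mul_of_nonneg_right hθ (abs_nonneg _))) (by positivity)))
    (uniformProb_nonneg _ _)).trans ?_
  rw [mul_left_comm]
  exact mul_le_mul_of_nonneg_left hoverlap (by positivity)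

lemma uniformProb_mul_pairWeight_le_of_lt (h : SmallTilt q p (k / n : ℝ))
    (hM : M * (q + 1) = d * n) (hθ : 128 * 577 ^ q * d * p ^ (2 * q) ≤ 1 / 10)
    (hc : (d : ℝ) / (q + 1) * p ^ q * exp (16 * (q + 1) * p) ≤ c)
    (hcp : 10 * c * p ≤ 1 / 2) (hlog : c + 11 / 10 + log p ≤ 0)
    {S : Finset (Fin n)} (hS : #S = k) (hl : l ≤ k) (hfar : 10 * (k * (k / n)) < (l : ℝ)) :
    uniformProb (powersetCard k univ) (fun T => #(S ∩ T) = l)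
        * pairWeight (q + 1) p (p / (k / n)) (p / (k / n) - (1 - p) / (1 - k / n))
          (l / n - (k / n) ^ 2) ^ M
      ≤ ((1 - p ^ (q + 1)) ^ 2) ^ M := by
  have hp := h.pos
  have hs := h.density_pos
  have hk : (0 : ℝ) < k := Nat.cast_pos.2 h.size_pos.1
  have hn : (0 : ℝ) < n := Nat.cast_pos.2 h.size_pos.2
  have hkl : (k : ℝ) * (k / n) ≤ l := by linarith [mul_pos hk hs]
  have has : (l / n : ℝ) ≤ k / n := by gcongr
  have hsa : (k / n : ℝ) ^ 2 ≤ l / n := by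
    rw [le_div_iff₀ hn]
    calc ((k : ℝ) / n) ^ 2 * n = k * (k / n) := by field_simp
      _ ≤ l := hkl
  have hweight := h.pow_pairWeight_le_of_sq_le hM hsa has
    (h.pairWeight_nonneg (by positivity) has)
  rw [div_mul_cancel₀ _ hn.ne', div_div_div_cancel_right₀ hn.ne'] at hweight
  have hlogl := add_mul_le_log_div (x := l / k) hs h.le (by rw [le_div_iff₀ hk]; linarith)
    (div_le_one_of_le₀ (by exact_mod_cast hl) hk.le) (le_trans (by positivity) hc) hcp hlog
  have hexponent : (128 * 2 ^ q * d * p ^ (2 * q)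
        + d / (q + 1) * p ^ q * exp (16 * (q + 1) * p) * (l / k) : ℝ)
      ≤ log (l / (k * (k / n))) - 1 := by
    have h2 : 128 * 2 ^ q * d * p ^ (2 * q) ≤ 128 * 577 ^ q * d * p ^ (2 * q) := by
      gcongr
      norm_num
    have hck := mul_le_mul_of_nonneg_right hc (by positivity : (0 : ℝ) ≤ l / k)
    rw [← div_div]
    linarith
  refine (mul_le_mul_of_nonneg_left (hweight.trans (mul_le_mul_of_nonneg_left
    (exp_le_exp.2 (mul_le_mul_of_nonneg_left hexponent l.cast_nonneg)) (by positivity)))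
    (uniformProb_nonneg _ _)).trans ?_
  rw [mul_left_comm]
  refine mul_le_of_le_one_right (by positivity) ?_
  simpa using uniformProb_card_inter_eq_mul_exp_log_le_one hS (by exact_mod_cast hk)
    (by simpa using hkl)

lemma uniformProb_mul_pairWeight_le (h : SmallTilt q p (k / n : ℝ))
    (hM : M * (q + 1) = d * n) (hθ : 128 * 577 ^ q * d * p ^ (2 * q) ≤ θ) (hθ1 : θ ≤ 1 / 10)
    (hc : (d : ℝ) / (q + 1) * p ^ q * exp (16 * (q + 1) * p) ≤ c)
    (hcp : 10 * c * p ≤ 1 / 2) (hlog : c + 11 / 10 + log p ≤ 0)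
    {S : Finset (Fin n)} (hS : #S = k) (hl : l ≤ k) :
    uniformProb (powersetCard k univ) (fun T => #(S ∩ T) = l)
        * pairWeight (q + 1) p (p / (k / n)) (p / (k / n) - (1 - p) / (1 - k / n))
          (l / n - (k / n) ^ 2) ^ M
      ≤ ((1 - p ^ (q + 1)) ^ 2) ^ M * exp (k * (k / n) * θ ^ 2) := by
  rcases le_or_gt (l : ℝ) (10 * (k * (k / n))) with hnear | hfar
  · exact h.uniformProb_mul_pairWeight_le_of_le hM hθ (by linarith) hS hl hnear
  · refine (h.uniformProb_mul_pairWeight_le_of_lt hM (hθ.trans hθ1) hc hcp hlog hS hl hfar).trans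
      (le_mul_of_one_le_right (by positivity) (one_le_exp (by positivity)))

end SmallTilt

/-! ### The second moment method -/

section SecondMoment

variable {α β : Type*}

lemma expect_uniformProb_comm (A : Finset α) (B : Finset β) (P : α → β → Prop) :
    𝔼 x ∈ A, uniformProb B (P x) = 𝔼 y ∈ B, uniformProb A fun x => P x y := by
  simp only [← expect_boole]
  exact expect_comm ..

lemma expect_uniformProb_sq (A : Finset α) (B : Finset β) (P : α → β → Prop) :
    𝔼 x ∈ A, uniformProb B (P x) ^ 2
      = 𝔼 y ∈ B, 𝔼 z ∈ B, uniformProb A fun x => P x y ∧ P x z := by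
  simp only [← expect_boole, sq, expect_mul_expect, ite_zero_mul_ite_zero, one_mul]
  rw [expect_comm]
  exact expect_congr rfl fun y _ => expect_comm ..

lemma expect_comp_eq_sum {A : Finset α} {f : α → ℕ} {m : ℕ} (hf : ∀ x ∈ A, f x < m) (F : ℕ → ℝ) :
    𝔼 x ∈ A, F (f x) = ∑ l ∈ range m, uniformProb A (fun x => f x = l) * F l := by
  simp only [uniformProb, div_mul_eq_mul_div, ← sum_div, expect_eq_sum_div_card]
  rw [← sum_fiberwise_of_maps_to' (t := range m) (by simpa using hf)]
  simp

lemma exists_of_uniformProb_ne_zero {A : Finset α} {P : α → Prop} (h : uniformProb A P ≠ 0) :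
    ∃ x ∈ A, P x := by
  contrapose! h
  simp [uniformProb, filter_false_of_mem h]

lemma sq_expect_le_uniformProb_mul_expect_sq {A : Finset α} {F : α → ℝ} {P : α → Prop}
    (h : ∀ x ∈ A, F x ≠ 0 → P x) :
    (𝔼 x ∈ A, F x) ^ 2 ≤ uniformProb A P * 𝔼 x ∈ A, F x ^ 2 := by
  have hF : 𝔼 x ∈ A, F x = 𝔼 x ∈ A, (if P x then 1 else 0) * F x := by
    refine expect_congr rfl fun x hx => ?_
    by_cases hP : P x
    · simp [hP]
    · simp [hP, not_imp_comm.1 (h x hx) hP]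
  rw [hF, ← expect_boole]
  refine (expect_mul_sq_le_sq_mul_sq ..).trans_eq ?_
  simp

end SecondMoment

section IndepPairs

variable {I J : Type*} [Fintype I] [Fintype J] {q d n k : ℕ} {p θ c W : ℝ}

lemma goodWeight_le_expect_uniformProb_indepSet_mul {u v : ℝ}
    (hIJ : Fintype.card I * Fintype.card J = d * n) (hkn : k ≤ n) (hu : 0 ≤ u) (hv : 0 ≤ v)
    (hku : k / n * u = p) (hkv : (1 - k / n) * v = 1 - p) :
    goodWeight I J p (d * k)
      ≤ (𝔼 w ∈ wordsOfContent (I × J) fun _ : Fin n => d,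
          uniformProb (powersetCard k univ) (IndepSet (edgesOf w)))
        * (u ^ (d * k) * v ^ (d * (n - k))) := by
  rw [expect_uniformProb_comm, expect_mul]
  exact le_expect (powersetCard_nonempty.2 (by simpa using hkn)) fun S hS =>
    goodWeight_le_uniformProb_indepSet_mul hIJ (mem_powersetCard_univ.1 hS) hu hv hku hkv

lemma expect_sq_uniformProb_indepSet_mul_le (h : SmallTilt q p (k / n : ℝ))
    (hJ : Fintype.card J = q + 1) (hI : Fintype.card I * (q + 1) = d * n)
    (hθ : 128 * 577 ^ q * d * p ^ (2 * q) ≤ θ) (hθ1 : θ ≤ 1 / 10)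
    (hc : (d : ℝ) / (q + 1) * p ^ q * exp (16 * (q + 1) * p) ≤ c)
    (hcp : 10 * c * p ≤ 1 / 2) (hlog : c + 11 / 10 + log p ≤ 0) :
    (𝔼 w ∈ wordsOfContent (I × J) fun _ : Fin n => d,
        uniformProb (powersetCard k univ) (IndepSet (edgesOf w)) ^ 2)
        * ((p / (k / n)) ^ (d * k) * ((1 - p) / (1 - k / n)) ^ (d * (n - k))) ^ 2
      ≤ (k + 1) * ((d * n + 1) ^ 4
        * (((1 - p ^ (q + 1)) ^ 2) ^ Fintype.card I * exp (k * (k / n) * θ ^ 2))) := by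
  have hp := h.pos
  have hs := h.density_pos
  have hp' := h.le_inv
  have hsp := h.le
  have hpair {S T : Finset (Fin n)} (hS : #S = k) (hT : #T = k) :=
    uniformProb_indepSet_and_indepSet_mul_le (hJ ▸ hI) h.size_pos.2.ne' hS hT
      (u := p / (k / n)) (v := (1 - p) / (1 - k / n)) (by positivity)
      (div_nonneg (by linarith) (by linarith))
      (by rw [mul_div_cancel₀ _ hs.ne', mul_div_cancel₀ _ (by linarith)]; ring)
  simp only [hJ, mul_div_cancel₀ p hs.ne'] at hpair
  rw [expect_uniformProb_sq, expect_mul]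
  refine expect_le (powersetCard_nonempty.2 (by simpa using h.le_card)) fun S hS => ?_
  rw [mem_powersetCard_univ] at hS
  rw [expect_mul]
  refine (expect_le_expect fun T hT => hpair hS (mem_powersetCard_univ.1 hT)).trans ?_
  rw [expect_comp_eq_sum (f := fun T => #(S ∩ T)) (m := k + 1) (F := fun l => (d * n + 1) ^ 4
    * pairWeight (q + 1) p (p / (k / n)) (p / (k / n) - (1 - p) / (1 - k / n))
      (l / n - (k / n) ^ 2) ^ Fintype.card I)
    fun T _ => Nat.lt_succ_of_le (hS ▸ card_le_card inter_subset_left)]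
  refine (sum_le_card_nsmul _ _ ((d * n + 1) ^ 4 * (((1 - p ^ (q + 1)) ^ 2) ^ Fintype.card I
    * exp (k * (k / n) * θ ^ 2))) fun l hl => ?_).trans_eq ?_
  · rw [mul_left_comm]
    exact mul_le_mul_of_nonneg_left (h.uniformProb_mul_pairWeight_le hI hθ hθ1 hc hcp hlog hS
      (Nat.le_of_lt_succ (mem_range.1 hl))) (by positivity)
  · rw [card_range, nsmul_eq_mul, Nat.cast_succ]

lemma sq_expect_uniformProb_indepSet_le (A : Finset (I × J → Fin n)) (k : ℕ) :
    (𝔼 w ∈ A, uniformProb (powersetCard k univ) (IndepSet (edgesOf w))) ^ 2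
      ≤ uniformProb A (fun w => k ≤ independenceNumber (edgesOf w))
        * 𝔼 w ∈ A, uniformProb (powersetCard k univ) (IndepSet (edgesOf w)) ^ 2 := by
  refine sq_expect_le_uniformProb_mul_expect_sq fun w _ hw => ?_
  obtain ⟨S, hS, hind⟩ := exists_of_uniformProb_ne_zero hw
  exact mem_powersetCard_univ.1 hS ▸ hind.card_le_independenceNumber

lemma one_le_uniformProb_le_independenceNumber_edgesOf_mul (h : SmallTilt q p (k / n : ℝ))
    (hJ : Fintype.card J = q + 1) (hI : Fintype.card I * (q + 1) = d * n)
    (hθ : 128 * 577 ^ q * d * p ^ (2 * q) ≤ θ) (hθ1 : θ ≤ 1 / 10)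
    (hc : (d : ℝ) / (q + 1) * p ^ q * exp (16 * (q + 1) * p) ≤ c)
    (hcp : 10 * c * p ≤ 1 / 2) (hlog : c + 11 / 10 + log p ≤ 0) (hW : 0 ≤ W)
    (hgood : (1 - p ^ (q + 1)) ^ Fintype.card I ≤ W * goodWeight I J p (d * k)) :
    1 ≤ uniformProb (wordsOfContent (I × J) fun _ : Fin n => d)
        (fun w => k ≤ independenceNumber (edgesOf w))
      * ((k + 1) * (d * n + 1) ^ 4 * W ^ 2 * exp (k * (k / n) * θ ^ 2)) := by
  have hp := h.pos
  have hp' := h.le_inv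
  have hsp := h.le
  have hs := h.density_pos
  set A := wordsOfContent (I × J) fun _ : Fin n => d
  set X : (I × J → Fin n) → ℝ := fun w =>
    uniformProb (powersetCard k univ) (IndepSet (edgesOf w))
  set U := (p / (k / n)) ^ (d * k) * ((1 - p) / (1 - k / n)) ^ (d * (n - k))
  set g := goodWeight I J p (d * k)
  have hone : 0 < 1 - p ^ (q + 1) := by linarith [h.pow_succ_le]
  have hg : 0 < g := pos_of_mul_pos_right ((pow_pos hone _).trans_le hgood) hW
  have hfirst : g ≤ (𝔼 w ∈ A, X w) * U :=
    goodWeight_le_expect_uniformProb_indepSet_mul (hJ ▸ hI) h.le_card (by positivity)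
      (div_nonneg (by linarith) (by linarith)) (mul_div_cancel₀ _ hs.ne')
      (mul_div_cancel₀ _ (by linarith))
  have hsecond := expect_sq_uniformProb_indepSet_mul_le h hJ hI hθ hθ1 hc hcp hlog
  have hcauchy := sq_expect_uniformProb_indepSet_le A k
  have hZ := uniformProb_nonneg A fun w => k ≤ independenceNumber (edgesOf w)
  refine le_of_mul_le_mul_left ?_ (pow_pos hg 2)
  calc g ^ 2 * 1 ≤ ((𝔼 w ∈ A, X w) * U) ^ 2 := by
        rw [mul_one]
        gcongr
    _ ≤ uniformProb A (fun w => k ≤ independenceNumber (edgesOf w))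
          * ((𝔼 w ∈ A, X w ^ 2) * U ^ 2) := by
        rw [mul_pow, ← mul_assoc]
        gcongr
    _ ≤ uniformProb A (fun w => k ≤ independenceNumber (edgesOf w))
          * ((k + 1) * ((d * n + 1) ^ 4
            * ((W * g) ^ 2 * exp (k * (k / n) * θ ^ 2)))) := by
        refine mul_le_mul_of_nonneg_left (hsecond.trans ?_) hZ
        rw [pow_right_comm]
        gcongr
    _ = _ := by ring

end IndepPairs

/-! ### The threshold density for large degree -/

section Threshold

variable {q d : ℕ}

/-- The threshold density `Y` in uniformity `q + 1` and degree `d`. -/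
noncomputable def threshold (q d : ℕ) : ℝ :=
  ((q + 1) * log d / (q * d)) ^ (1 / (q : ℝ))

/-- The expected number of edges inside a random vertex set of density `s`, divided by the size of
the set, in uniformity `q + 1` and degree `d`. -/
noncomputable def edgeRate (q d : ℕ) (s : ℝ) : ℝ :=
  d / (q + 1) * s ^ q

/-- The relative error `θ` in the pair weight of the second moment at density `s`, in uniformity
`q + 1` and degree `d`. -/
noncomputable def overlapError (q d : ℕ) (s : ℝ) : ℝ :=
  128 * 577 ^ q * d * s ^ (2 * q)

lemma threshold_base_nonneg (q d : ℕ) : 0 ≤ (q + 1) * log d / (q * d) := by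
  have := log_natCast_nonneg d
  positivity

lemma threshold_pow (hq : q ≠ 0) : threshold q d ^ q = (q + 1) * log d / (q * d) := by
  rw [threshold, one_div, rpow_inv_natCast_pow (threshold_base_nonneg q d) hq]

lemma threshold_pos (hq : q ≠ 0) (hd : 1 < d) : 0 < threshold q d := by
  have := log_pos (Nat.one_lt_cast.2 hd)
  exact rpow_pos_of_pos (by positivity) _

lemma edgeRate_threshold (hq : q ≠ 0) : edgeRate q d (threshold q d) = log d / q := by
  rcases eq_or_ne d 0 with rfl | hd
  · simp [edgeRate]
  · rw [edgeRate, threshold_pow hq]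
    field_simp

lemma mul_overlapError_threshold (hq : q ≠ 0) :
    d * overlapError q d (threshold q d) = 128 * 577 ^ q * ((q + 1) / q) ^ 2 * log d ^ 2 := by
  rcases eq_or_ne d 0 with rfl | hd
  · simp [overlapError]
  · rw [overlapError, mul_comm 2 q, pow_mul, threshold_pow hq]
    field_simp

lemma log_threshold_add_edgeRate (hq : q ≠ 0) (hd : 1 < d) :
    log (threshold q d) + edgeRate q d (threshold q d)
      = (log ((q + 1) / q) + log (log d)) / q := by
  have hlog : 0 < log (d : ℝ) := log_pos (Nat.one_lt_cast.2 hd)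
  have hqR : (0 : ℝ) < q := by positivity
  have hdR : (0 : ℝ) < d := by positivity
  have hmul : q * log (threshold q d) = log ((q + 1) / q) + log (log d) - log d := by
    rw [← log_pow, threshold_pow hq, mul_div_mul_comm, log_mul, log_div hlog.ne' hdR.ne']
    · ring
    all_goals positivity
  rw [edgeRate_threshold hq, eq_div_iff hqR.ne', add_mul, mul_comm, hmul,
    div_mul_cancel₀ _ hqR.ne']
  ring

lemma tendsto_log_natCast_atTop : Tendsto (fun d : ℕ => log d) atTop atTop :=
  tendsto_log_atTop.comp tendsto_natCast_atTop_atTop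

lemma tendsto_log_pow_div_natCast (m : ℕ) :
    Tendsto (fun d : ℕ => log d ^ m / d) atTop (nhds 0) :=
  isLittleO_pow_log_id_atTop.tendsto_div_nhds_zero.comp tendsto_natCast_atTop_atTop

lemma tendsto_edgeRate_threshold (hq : q ≠ 0) :
    Tendsto (fun d => edgeRate q d (threshold q d)) atTop atTop := by
  simp only [edgeRate_threshold hq]
  exact tendsto_log_natCast_atTop.atTop_div_const (by positivity)

lemma eventually_log_threshold_add_edgeRate_le (hq : q ≠ 0) {δ : ℝ} (hδ : 0 < δ) :
    ∀ᶠ d in atTop, log (threshold q d) + edgeRate q d (threshold q d)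
      ≤ δ * edgeRate q d (threshold q d) := by
  have hlittle := (Asymptotics.isLittleO_const_id_atTop (log ((q + 1) / q : ℝ))).add
    isLittleO_log_id_atTop
  filter_upwards [eventually_gt_atTop 1, tendsto_log_natCast_atTop.eventually (hlittle.bound hδ)]
    with d hd hbound
  rw [log_threshold_add_edgeRate hq hd, edgeRate_threshold hq, ← mul_div_assoc]
  rw [id, norm_of_nonneg (log_natCast_nonneg d)] at hbound
  gcongr
  exact (le_abs_self _).trans hbound

lemma eventually_neg_edgeRate_le_log_threshold (hq : q ≠ 0) :
    ∀ᶠ d in atTop, -edgeRate q d (threshold q d) ≤ log (threshold q d) := by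
  filter_upwards [eventually_gt_atTop 1, tendsto_log_natCast_atTop.eventually_ge_atTop 1]
    with d hd hlog
  have hq1 : (1 : ℝ) ≤ (q + 1) / q := by
    rw [one_le_div (by positivity)]
    linarith
  have hsum := log_threshold_add_edgeRate hq hd
  have : 0 ≤ (log ((q + 1) / q) + log (log d)) / q :=
    div_nonneg (add_nonneg (log_nonneg hq1) (log_nonneg hlog)) q.cast_nonneg
  linarith

lemma eventually_threshold_le_exp (hq : q ≠ 0) :
    ∀ᶠ d in atTop, threshold q d ≤ exp (-(edgeRate q d (threshold q d) / 2)) := by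
  filter_upwards [eventually_gt_atTop 1, eventually_log_threshold_add_edgeRate_le hq one_half_pos]
    with d hd hlog
  rw [← log_le_iff_le_exp (threshold_pos hq hd)]
  linarith

lemma tendsto_edgeRate_mul_threshold (hq : q ≠ 0) :
    Tendsto (fun d => edgeRate q d (threshold q d) * threshold q d) atTop (nhds 0) := by
  have hlim := ((tendsto_pow_mul_exp_neg_atTop_nhds_zero 1).comp
    ((tendsto_edgeRate_threshold hq).atTop_div_const two_pos)).const_mul 2
  rw [mul_zero] at hlim
  refine squeeze_zero' ?_ ?_ hlim
  · filter_upwards [(tendsto_edgeRate_threshold hq).eventually_ge_atTop 0,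
      eventually_gt_atTop 1] with d hrate hd
    exact mul_nonneg hrate (threshold_pos hq hd).le
  · filter_upwards [(tendsto_edgeRate_threshold hq).eventually_ge_atTop 0,
      eventually_threshold_le_exp hq] with d hrate hle
    refine (mul_le_mul_of_nonneg_left hle hrate).trans_eq ?_
    simp only [Function.comp_apply]
    ring

lemma tendsto_threshold (hq : q ≠ 0) : Tendsto (threshold q) atTop (nhds 0) := by
  refine squeeze_zero' ?_ ?_ (tendsto_edgeRate_mul_threshold hq)
  · filter_upwards [eventually_gt_atTop 1] with d hd using (threshold_pos hq hd).le
  · filter_upwards [(tendsto_edgeRate_threshold hq).eventually_ge_atTop 1,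
      eventually_gt_atTop 1] with d hrate hd
    exact le_mul_of_one_le_left (threshold_pos hq hd).le hrate

lemma tendsto_overlapError_threshold (hq : q ≠ 0) :
    Tendsto (fun d => overlapError q d (threshold q d)) atTop (nhds 0) := by
  have hlim := (tendsto_log_pow_div_natCast 2).const_mul (128 * 577 ^ q * ((q + 1) / q : ℝ) ^ 2)
  rw [mul_zero] at hlim
  refine hlim.congr' ?_
  filter_upwards [eventually_ne_atTop 0] with d hd
  rw [← mul_div_assoc, ← mul_overlapError_threshold hq, mul_div_cancel_left₀]
  positivity

lemma tendsto_mul_sq_overlapError_threshold (hq : q ≠ 0) :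
    Tendsto (fun d : ℕ => d * overlapError q d (threshold q d) ^ 2) atTop (nhds 0) := by
  have hlim := (tendsto_log_pow_div_natCast 4).const_mul
    ((128 * 577 ^ q * ((q + 1) / q : ℝ) ^ 2) ^ 2)
  rw [mul_zero] at hlim
  refine hlim.congr' ?_
  filter_upwards [eventually_ne_atTop 0] with d hd
  have hdR : (d : ℝ) ≠ 0 := Nat.cast_ne_zero.2 hd
  rw [← mul_div_assoc, div_eq_iff hdR]
  calc (128 * 577 ^ q * ((q + 1) / q : ℝ) ^ 2) ^ 2 * log d ^ 4
      = (128 * 577 ^ q * ((q + 1) / q : ℝ) ^ 2 * log d ^ 2) ^ 2 := by ring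
    _ = d * overlapError q d (threshold q d) ^ 2 * d := by
      rw [← mul_overlapError_threshold hq]
      ring

/-- The density `Y` plays the role of `threshold q d`, for a degree `d` large enough that the
second moment at density `(1 - ε) * Y` loses less than the concentration inequality gains. -/
structure LargeDegree (q d : ℕ) (ε Y : ℝ) : Prop where
  degree_pos : 0 < d
  pos : 0 < Y
  mul_le_one : 1000 * (q + 1) * Y ≤ 1
  exp_le : (1 - ε) * exp (16 * (q + 1) * Y) ≤ 1 - ε / 2
  overlapError_le : overlapError q d Y ≤ 1 / 10
  mul_sq_overlapError_le : 128 * (d * overlapError q d Y ^ 2) ≤ ε ^ 2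
  edgeRate_mul_le : 20 * (edgeRate q d Y * Y) ≤ 1
  log_add_edgeRate_le : log Y + edgeRate q d Y + 2 ≤ ε / 2 * edgeRate q d Y
  neg_edgeRate_le_log : -edgeRate q d Y ≤ log Y
  two_le_mul_edgeRate : 2 ≤ ε * edgeRate q d Y

lemma eventually_largeDegree (hq : q ≠ 0) {ε : ℝ} (hε : 0 < ε) :
    ∀ᶠ d in atTop, LargeDegree q d ε (threshold q d) := by
  have hY := tendsto_threshold hq
  have hrate := tendsto_edgeRate_threshold hq
  have hexp : Tendsto (fun d => (1 - ε) * exp (16 * (q + 1) * threshold q d)) atTop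
      (nhds ((1 - ε) * exp (16 * (q + 1) * 0))) :=
    ((hY.const_mul _).rexp).const_mul _
  have hY1 := (hY.const_mul (1000 * (q + 1 : ℝ))).eventually_le_const (u := 1) (by simp)
  have hexp1 := hexp.eventually_le_const (u := 1 - ε / 2) (by simpa using hε)
  have herr := (tendsto_overlapError_threshold hq).eventually_le_const (u := 1 / 10) (by simp)
  have herr2 := ((tendsto_mul_sq_overlapError_threshold hq).const_mul 128).eventually_le_const
    (u := ε ^ 2) (by simpa using pow_pos hε 2)
  have hprod := ((tendsto_edgeRate_mul_threshold hq).const_mul 20).eventually_le_const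
    (u := 1) (by simp)
  have hlog := eventually_log_threshold_add_edgeRate_le hq (show 0 < ε / 4 by positivity)
  have hbig := (hrate.const_mul_atTop (show 0 < ε / 4 by positivity)).eventually_ge_atTop 2
  filter_upwards [eventually_gt_atTop 1, hY1, hexp1, herr, herr2, hprod, hlog, hbig,
    eventually_neg_edgeRate_le_log_threshold hq]
    with d hd hY1 hexp1 herr herr2 hprod hlog hbig hneg
  exact ⟨by omega, threshold_pos hq hd, hY1, hexp1, herr, herr2, hprod, by linarith, hneg,
    by linarith⟩

end Threshold

/-! ### Tails of the independence number of a random word -/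

section Tails

variable {q d n k : ℕ} {ε δ Y : ℝ} {I J : Type*} [Fintype I] [Fintype J]

lemma choose_mul_div_pow_le_exp (hn : n ≠ 0) (k : ℕ) :
    (n.choose k : ℝ) * (k / n : ℝ) ^ k ≤ exp k := calc
  _ ≤ (n : ℝ) ^ k / k.factorial * (k / n : ℝ) ^ k := by
    gcongr
    exact Nat.choose_le_pow_div k n
  _ = (k : ℝ) ^ k / k.factorial := by
    rw [div_pow]
    field_simp
  _ ≤ exp k := pow_div_factorial_le_exp _ k.cast_nonneg k

lemma one_sub_pow_pow_le_exp_neg_edgeRate {M : ℕ} (hM : M * (q + 1) = d * n) (hkn : k ≤ n) :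
    (1 - (k / n : ℝ) ^ (q + 1)) ^ M ≤ exp (-(k * edgeRate q d (k / n))) := by
  rcases Nat.eq_zero_or_pos n with rfl | hn
  · obtain rfl : k = 0 := by omega
    obtain rfl : M = 0 := by simpa using hM
    simp
  have hs : (k / n : ℝ) ^ (q + 1) ≤ 1 :=
    pow_le_one₀ (by positivity) (div_le_one_of_le₀ (Nat.cast_le.2 hkn) n.cast_nonneg)
  have hMR : (M : ℝ) * (q + 1) = d * n := by exact_mod_cast hM
  have hrate : M * (k / n : ℝ) ^ (q + 1) = k * edgeRate q d (k / n) := by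
    rw [edgeRate, eq_div_of_mul_eq (by positivity) hMR, pow_succ]
    field_simp
  calc (1 - (k / n : ℝ) ^ (q + 1)) ^ M ≤ exp (-(k / n : ℝ) ^ (q + 1)) ^ M :=
        pow_le_pow_left₀ (sub_nonneg.2 hs) (one_sub_le_exp_neg _) M
    _ = exp (-(k * edgeRate q d (k / n))) := by rw [← exp_nat_mul, mul_neg, hrate]

lemma one_add_mul_edgeRate_le (hq : q ≠ 0) (hδ : 0 ≤ δ) (hY : 0 ≤ Y) :
    (1 + δ) * edgeRate q d Y ≤ edgeRate q d ((1 + δ) * Y) := by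
  rw [edgeRate, edgeRate, mul_pow, mul_left_comm]
  gcongr
  exact le_self_pow₀ (by linarith) hq

lemma LargeDegree.choose_mul_pow_le_exp_neg (h : LargeDegree q d ε Y) (hq : q ≠ 0) {M : ℕ}
    (hM : M * (q + 1) = d * n) (hkn : k ≤ n) (hδ : 0 ≤ δ) (hδY : 2 ≤ δ * edgeRate q d Y)
    (hk : (1 + δ) * Y ≤ k / n) :
    n.choose k * (1 - (k / n : ℝ) ^ (q + 1)) ^ M ≤ exp (-k) := by
  have hY := h.pos
  have hYk : Y ≤ k / n := (le_mul_of_one_le_left hY.le (by linarith)).trans hk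
  have hs : 0 < (k / n : ℝ) := hY.trans_le hYk
  have hn : n ≠ 0 := by
    rintro rfl
    simp at hs
  have hchoose : n.choose k ≤ exp (k * (1 + edgeRate q d Y)) := by
    have hpow : exp (-(k * edgeRate q d Y)) ≤ (k / n : ℝ) ^ k := by
      rw [← exp_log hs, ← exp_nat_mul, ← mul_neg]
      gcongr
      exact h.neg_edgeRate_le_log.trans (log_le_log hY hYk)
    rw [mul_add, mul_one, exp_add, ← div_le_iff₀ (exp_pos _), div_eq_mul_inv, ← exp_neg]
    exact (mul_le_mul_of_nonneg_left hpow (Nat.cast_nonneg _)).trans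
      (choose_mul_div_pow_le_exp hn k)
  have hrate : (1 + δ) * edgeRate q d Y ≤ edgeRate q d (k / n) := by
    refine (one_add_mul_edgeRate_le hq hδ hY.le).trans ?_
    unfold edgeRate
    gcongr
  calc n.choose k * (1 - (k / n : ℝ) ^ (q + 1)) ^ M
      ≤ exp (k * (1 + edgeRate q d Y)) * exp (-(k * edgeRate q d (k / n))) := by
        refine mul_le_mul hchoose (one_sub_pow_pow_le_exp_neg_edgeRate hM hkn)
          (pow_nonneg (sub_nonneg.2 (pow_le_one₀ hs.le ?_)) _) (exp_nonneg _)
        exact div_le_one_of_le₀ (Nat.cast_le.2 hkn) n.cast_nonneg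
    _ = exp (k * (1 + edgeRate q d Y - edgeRate q d (k / n))) := by
        rw [← exp_add]
        ring_nf
    _ ≤ exp (-k) := by
        rw [← mul_neg_one]
        gcongr
        linarith

lemma LargeDegree.uniformProb_lt_independenceNumber_edgesOf_le (h : LargeDegree q d ε Y)
    (hq : q ≠ 0) (hJ : Fintype.card J = q + 1) (hI : Fintype.card I * (q + 1) = d * n)
    (hn : n ≠ 0) (hδ : 0 ≤ δ) (hδY : 2 ≤ δ * edgeRate q d Y) :
    uniformProb (wordsOfContent (I × J) fun _ : Fin n => d)
        (fun w => (1 + δ) * Y * n < independenceNumber (edgesOf w))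
      ≤ (d * n + 1) ^ 2 * exp (-(Y * n)) := by
  have hY := h.pos
  have : Nonempty J := Fintype.card_pos_iff.1 (by omega)
  set k := ⌊(1 + δ) * Y * n⌋₊ + 1
  have hk : (1 + δ) * Y * n ≤ k := by simpa [k] using (Nat.lt_floor_add_one _).le
  have hYk : Y * n ≤ k := by
    refine le_trans ?_ hk
    gcongr
    exact le_mul_of_one_le_left hY.le (by linarith)
  calc uniformProb (wordsOfContent (I × J) fun _ : Fin n => d)
        (fun w => (1 + δ) * Y * n < independenceNumber (edgesOf w))
      ≤ uniformProb (wordsOfContent (I × J) fun _ : Fin n => d)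
          (fun w => k ≤ independenceNumber (edgesOf w)) :=
        uniformProb_mono fun w _ hw => (Nat.floor_lt (by positivity)).2 hw
    _ ≤ n.choose k * ((d * n + 1) ^ 2 * (1 - (k / n : ℝ) ^ (q + 1)) ^ Fintype.card I) := by
        simpa only [hJ] using uniformProb_le_independenceNumber_edgesOf_le
          (I := I) (J := J) (by rw [hJ, hI]) hn k
    _ ≤ (d * n + 1) ^ 2 * exp (-k) := by
        rcases lt_or_ge n k with hkn | hkn
        · rw [Nat.choose_eq_zero_of_lt hkn, Nat.cast_zero, zero_mul]
          positivity
        · rw [mul_left_comm]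
          gcongr
          refine h.choose_mul_pow_le_exp_neg hq hI hkn hδ hδY ?_
          rwa [le_div_iff₀ (by positivity)]
    _ ≤ (d * n + 1) ^ 2 * exp (-(Y * n)) := by gcongr

namespace LargeDegree

lemma two_mul_le (h : LargeDegree q d ε Y) (hq : q ≠ 0) (hε : ε ≤ 1 / 16) : 2 * Y ≤ ε := by
  have hq1 : (1 : ℝ) ≤ q := Nat.one_le_cast.2 (Nat.one_le_iff_ne_zero.2 hq)
  have hexp := add_one_le_exp (16 * ((q : ℝ) + 1) * Y)
  have hY : 32 * Y ≤ 16 * ((q : ℝ) + 1) * Y := by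
    have := h.pos
    gcongr
    linarith
  have := mul_le_mul_of_nonneg_left (show 1 + 32 * Y ≤ _ by linarith)
    (show 0 ≤ 1 - ε by linarith)
  nlinarith [h.exp_le, h.pos]

lemma le_one_div (h : LargeDegree q d ε Y) : Y ≤ 1 / 1000 := by
  have := mul_nonneg q.cast_nonneg h.pos.le
  linarith [h.mul_le_one]

lemma edgeRate_pos (h : LargeDegree q d ε Y) : 0 < edgeRate q d Y := by
  have := h.pos
  have := h.degree_pos
  unfold edgeRate
  positivity

lemma one_sub_mul_pos (h : LargeDegree q d ε Y) (hε : ε ≤ 1 / 16) : 0 < (1 - ε) * Y :=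
  mul_pos (by linarith) h.pos

lemma one_sub_mul_le (h : LargeDegree q d ε Y) (hε : 0 ≤ ε) : (1 - ε) * Y ≤ Y :=
  mul_le_of_le_one_left h.pos.le (by linarith)

lemma smallTilt (h : LargeDegree q d ε Y) (hq : q ≠ 0) (hε₀ : 0 ≤ ε) (hε : ε ≤ 1 / 16) {s : ℝ}
    (hs : (1 - ε) * Y - 2 * ((1 - ε) * Y) ^ (q + 1) ≤ s) (hs' : s ≤ (1 - ε) * Y) :
    SmallTilt q ((1 - ε) * Y) s where
  one_le := Nat.one_le_iff_ne_zero.2 hq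
  pos := h.one_sub_mul_pos hε
  mul_le_one :=
    (mul_le_mul_of_nonneg_left (h.one_sub_mul_le hε₀) (by positivity)).trans h.mul_le_one
  sub_le := hs
  le := hs'

lemma one_sub_two_mul_mul_le (h : LargeDegree q d ε Y) (hq : q ≠ 0) (hε₀ : 0 ≤ ε)
    (hε : ε ≤ 1 / 16) :
    (1 - 2 * ε) * Y ≤ (1 - ε) * Y - 2 * ((1 - ε) * Y) ^ (q + 1) := by
  have hY := h.pos
  have hpow : ((1 - ε) * Y) ^ (q + 1) ≤ Y ^ 2 :=
    (pow_le_pow_left₀ (h.one_sub_mul_pos hε).le (h.one_sub_mul_le hε₀) _).trans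
      (pow_le_pow_of_le_one hY.le (by linarith [h.le_one_div]) (by omega))
  nlinarith [h.two_mul_le hq hε]

lemma edgeRate_mul_exp_le (h : LargeDegree q d ε Y) (hq : q ≠ 0) (hε₀ : 0 ≤ ε)
    (hε : ε ≤ 1 / 16) :
    edgeRate q d ((1 - ε) * Y) * exp (16 * (q + 1) * ((1 - ε) * Y))
      ≤ (1 - ε / 2) * edgeRate q d Y := by
  have hY := h.pos
  have hε1 : 0 ≤ 1 - ε := by linarith
  calc edgeRate q d ((1 - ε) * Y) * exp (16 * (q + 1) * ((1 - ε) * Y))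
      ≤ (1 - ε) * edgeRate q d Y * exp (16 * (q + 1) * Y) := by
        have hpow : (1 - ε) ^ q ≤ 1 - ε := pow_le_of_le_one hε1 (by linarith) hq
        rw [edgeRate, edgeRate, mul_pow, mul_left_comm]
        gcongr
        exact h.one_sub_mul_le hε₀
    _ = (1 - ε) * exp (16 * (q + 1) * Y) * edgeRate q d Y := by ring
    _ ≤ (1 - ε / 2) * edgeRate q d Y :=
        mul_le_mul_of_nonneg_right h.exp_le h.edgeRate_pos.le

lemma exp_mul_sq_overlapError_le (h : LargeDegree q d ε Y) (hk : (k / n : ℝ) ≤ Y) :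
    exp (k * (k / n) * overlapError q d Y ^ 2) ≤ exp (ε ^ 2 * Y ^ 2 / (128 * d) * n) := by
  have hd : (0 : ℝ) < d := Nat.cast_pos.2 h.degree_pos
  rcases Nat.eq_zero_or_pos n with rfl | hn
  · simp
  have hθ : overlapError q d Y ^ 2 ≤ ε ^ 2 / (128 * d) := by
    rw [le_div_iff₀ (by positivity)]
    linarith [h.mul_sq_overlapError_le]
  refine exp_le_exp.2 ?_
  calc (k : ℝ) * (k / n) * overlapError q d Y ^ 2
      = (k / n : ℝ) ^ 2 * n * overlapError q d Y ^ 2 := by field_simp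
    _ ≤ Y ^ 2 * n * (ε ^ 2 / (128 * d)) := by gcongr
    _ = ε ^ 2 * Y ^ 2 / (128 * d) * n := by ring

lemma mul_edgeRate_mul_le (h : LargeDegree q d ε Y) (hε₀ : 0 ≤ ε) (hε : ε ≤ 1 / 16) :
    10 * ((1 - ε / 2) * edgeRate q d Y) * ((1 - ε) * Y) ≤ 1 / 2 := by
  have hrate := h.edgeRate_pos.le
  have : (1 - ε / 2) * edgeRate q d Y * ((1 - ε) * Y) ≤ edgeRate q d Y * Y := by
    refine mul_le_mul ?_ (h.one_sub_mul_le hε₀) (h.one_sub_mul_pos hε).le hrate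
    exact mul_le_of_le_one_left hrate (by linarith)
  linarith [h.edgeRate_mul_le]

lemma eventually_exists_one_le_uniformProb_mul (h : LargeDegree q d ε Y) (hq : q ≠ 0)
    (hε₀ : 0 ≤ ε) (hε : ε ≤ 1 / 16) (hJ : Fintype.card J = q + 1) :
    ∀ᶠ n : ℕ in atTop, ∀ (I : Type*) [Fintype I], Fintype.card I * (q + 1) = d * n →
      ∃ k : ℕ, (1 - 2 * ε) * Y * n ≤ k ∧
        1 ≤ uniformProb (wordsOfContent (I × J) fun _ : Fin n => d)
            (fun w => k ≤ independenceNumber (edgesOf w))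
          * (4 * (d * n + 1) ^ (7 + 2 * d) * exp (ε ^ 2 * Y ^ 2 / (128 * d) * n)) := by
  have hp := h.one_sub_mul_pos hε
  have hpY := h.one_sub_mul_le hε₀
  have : Nontrivial J := Fintype.one_lt_card_iff_nontrivial.1 (by omega)
  have hp2 : (1 - ε) * Y ≤ 1 / 2 := by linarith [h.le_one_div]
  filter_upwards [eventually_exists_size_le_goodWeight (J := J) h.degree_pos hp hp2,
    eventually_gt_atTop 0] with n hn hn0 I _ hI
  have hnR : (0 : ℝ) < n := Nat.cast_pos.2 hn0
  obtain ⟨k, hk, hk', hgood⟩ := hn I (by rw [hJ, hI])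
  rw [hJ] at hk hgood
  refine ⟨k, ?_, ?_⟩
  · rw [← le_div_iff₀ hnR]
    exact (h.one_sub_two_mul_mul_le hq hε₀ hε).trans hk
  have hθ : overlapError q d ((1 - ε) * Y) ≤ overlapError q d Y := by
    unfold overlapError
    gcongr
  have hlog : (1 - ε / 2) * edgeRate q d Y + 11 / 10 + log ((1 - ε) * Y) ≤ 0 := by
    linarith [h.log_add_edgeRate_le, log_le_log hp hpY]
  refine (one_le_uniformProb_le_independenceNumber_edgesOf_mul (h.smallTilt hq hε₀ hε hk hk') hJ hI
    hθ h.overlapError_le (h.edgeRate_mul_exp_le hq hε₀ hε)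
    (h.mul_edgeRate_mul_le hε₀ hε) hlog (by positivity) hgood).trans ?_
  have hkn : (k : ℝ) ≤ d * n := by
    have hd : (1 : ℝ) ≤ d := Nat.one_le_cast.2 h.degree_pos
    rw [div_le_iff₀ hnR] at hk'
    exact hk'.trans (by gcongr; linarith)
  refine mul_le_mul_of_nonneg_left ?_ (uniformProb_nonneg _ _)
  refine (mul_le_mul_of_nonneg_left (h.exp_mul_sq_overlapError_le (hk'.trans hpY))
    (by positivity)).trans (mul_le_mul_of_nonneg_right ?_ (exp_nonneg _))
  calc ((k : ℝ) + 1) * (d * n + 1) ^ 4 * (2 * (d * n + 1) ^ (d + 1)) ^ 2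
      ≤ (d * n + 1) * (d * n + 1) ^ 4 * (2 * (d * n + 1 : ℝ) ^ (d + 1)) ^ 2 := by gcongr
    _ = 4 * (d * n + 1 : ℝ) ^ (7 + 2 * d) := by ring

end LargeDegree

end Tails

/-! ### Concentration around the threshold -/

section Concentration

variable {q d n k K : ℕ} {a ε δ Y : ℝ} {I J : Type*} [Fintype I] [Fintype J]

lemma tendsto_pow_mul_exp_neg_mul (hd : 0 < d) (ha : 0 < a) (K : ℕ) :
    Tendsto (fun n : ℕ => (d * n + 1 : ℝ) ^ K * exp (-(a * n))) atTop (nhds 0) := by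
  have hdR : (0 : ℝ) < d := Nat.cast_pos.2 hd
  have hlin : Tendsto (fun n : ℕ => (d * n + 1 : ℝ)) atTop atTop :=
    tendsto_atTop_add_const_right _ 1 (tendsto_natCast_atTop_atTop.const_mul_atTop hdR)
  have hlim := ((isLittleO_pow_exp_pos_mul_atTop K (div_pos ha hdR)).tendsto_div_nhds_zero.comp
    hlin).mul_const (exp (a / d))
  rw [zero_mul] at hlim
  refine hlim.congr fun n => ?_
  rw [Function.comp_apply, div_mul_eq_mul_div, mul_div_assoc, ← exp_sub]
  congr 2
  field_simp
  ring

lemma uniformProb_independenceNumber_edgesOf_add_le [Nonempty J]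
    (hIJ : Fintype.card I * Fintype.card J = d * n) {t : ℝ} (ht : 0 ≤ t) :
    uniformProb (wordsOfContent (I × J) fun _ : Fin n => d)
        (fun w => (𝔼 v ∈ wordsOfContent (I × J) fun _ : Fin n => d,
          (independenceNumber (edgesOf v) : ℝ)) + t ≤ independenceNumber (edgesOf w))
      ≤ exp (-(t ^ 2 / (32 * (d * n)))) := by
  refine (uniformProb_expect_add_le (b := 2)
    (fun w _ => abs_independenceNumber_edgesOf_comp_swap_sub_le w) ht).trans_eq ?_
  rw [Fintype.card_prod, hIJ]
  push_cast
  norm_num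

lemma uniformProb_independenceNumber_edgesOf_le_sub_le [Nonempty J]
    (hIJ : Fintype.card I * Fintype.card J = d * n) {t : ℝ} (ht : 0 ≤ t) :
    uniformProb (wordsOfContent (I × J) fun _ : Fin n => d)
        (fun w => (independenceNumber (edgesOf w) : ℝ)
          ≤ (𝔼 v ∈ wordsOfContent (I × J) fun _ : Fin n => d,
            (independenceNumber (edgesOf v) : ℝ)) - t)
      ≤ exp (-(t ^ 2 / (32 * (d * n)))) := by
  refine (uniformProb_le_expect_sub_le (b := 2)
    (fun w _ => abs_independenceNumber_edgesOf_comp_swap_sub_le w) ht).trans_eq ?_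
  rw [Fintype.card_prod, hIJ]
  push_cast
  norm_num

namespace LargeDegree

/-- Otherwise the concentration inequality contradicts the lower bound from the second moment. -/
lemma eventually_le_expect_independenceNumber (h : LargeDegree q d ε Y) (hq : q ≠ 0)
    (hε₀ : 0 < ε) (hε : ε ≤ 1 / 16) (hJ : Fintype.card J = q + 1) :
    ∀ᶠ n : ℕ in atTop, ∀ (I : Type*) [Fintype I], Fintype.card I * (q + 1) = d * n →
      (1 - 3 * ε) * Y * n ≤ 𝔼 w ∈ wordsOfContent (I × J) fun _ : Fin n => d,
        (independenceNumber (edgesOf w) : ℝ) := by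
  have hY := h.pos
  have hd : (0 : ℝ) < d := Nat.cast_pos.2 h.degree_pos
  have : Nonempty J := Fintype.card_pos_iff.1 (by omega)
  set a := ε ^ 2 * Y ^ 2 / (128 * d) with ha
  have hlim := (tendsto_pow_mul_exp_neg_mul h.degree_pos (show 0 < 3 * a by positivity)
    (7 + 2 * d)).const_mul 4
  rw [mul_zero] at hlim
  filter_upwards [h.eventually_exists_one_le_uniformProb_mul (J := J) hq hε₀.le hε hJ,
    hlim.eventually_lt_const one_pos] with n hn hsmall I _ hI
  obtain ⟨k, hk, hone⟩ := hn I hI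
  by_contra! hlt
  have hprob : uniformProb (wordsOfContent (I × J) fun _ : Fin n => d)
      (fun w => k ≤ independenceNumber (edgesOf w)) ≤ exp (-(4 * a * n)) := by
    refine (uniformProb_mono fun w _ hw => ?_).trans
      ((uniformProb_independenceNumber_edgesOf_add_le (I := I) (J := J) (by rw [hJ, hI])
        (show 0 ≤ ε * Y * n by positivity)).trans_eq ?_)
    · have : (k : ℝ) ≤ independenceNumber (edgesOf w) := Nat.cast_le.2 hw
      linarith
    · rw [ha]
      congr 2
      field_simp
      ring
  refine lt_irrefl (1 : ℝ) (hone.trans_lt ?_)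
  calc _ ≤ exp (-(4 * a * n)) * (4 * (d * n + 1) ^ (7 + 2 * d) * exp (a * n)) := by gcongr
    _ = 4 * ((d * n + 1) ^ (7 + 2 * d) * exp (-(3 * a * n))) := by
      rw [show -(3 * a * n) = -(4 * a * n) + a * n by ring, exp_add]
      ring
    _ < 1 := hsmall

lemma eventually_uniformProb_independenceNumber_edgesOf_lt_le (h : LargeDegree q d ε Y)
    (hq : q ≠ 0) (hε₀ : 0 < ε) (hε : ε ≤ 1 / 16) (hJ : Fintype.card J = q + 1) :
    ∀ᶠ n : ℕ in atTop, ∀ (I : Type*) [Fintype I], Fintype.card I * (q + 1) = d * n →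
      uniformProb (wordsOfContent (I × J) fun _ : Fin n => d)
          (fun w => independenceNumber (edgesOf w) < (1 - 4 * ε) * Y * n)
        ≤ exp (-(ε ^ 2 * Y ^ 2 / (32 * d) * n)) := by
  have hY := h.pos
  have : Nonempty J := Fintype.card_pos_iff.1 (by omega)
  filter_upwards [h.eventually_le_expect_independenceNumber (J := J) hq hε₀ hε hJ]
    with n hn I _ hI
  refine (uniformProb_mono fun w _ hw => ?_).trans
    ((uniformProb_independenceNumber_edgesOf_le_sub_le (I := I) (J := J) (by rw [hJ, hI])
      (show 0 ≤ ε * Y * n by positivity)).trans_eq ?_)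
  · linarith [hn I hI]
  · congr 2
    field_simp

lemma eventually_uniformProb_not_abs_le (h : LargeDegree q d ε Y) (hq : q ≠ 0) (hε₀ : 0 < ε)
    (hε : ε ≤ 1 / 16) (hδ : 4 * ε ≤ δ) (hJ : Fintype.card J = q + 1) :
    ∀ᶠ n : ℕ in atTop, ∀ (I : Type*) [Fintype I], Fintype.card I * (q + 1) = d * n →
      uniformProb (wordsOfContent (I × J) fun _ : Fin n => d)
          (fun w => ¬ |(independenceNumber (edgesOf w) : ℝ) - Y * n| ≤ δ * (Y * n))
        ≤ (d * n + 1) ^ 2 * exp (-(Y * n)) + exp (-(ε ^ 2 * Y ^ 2 / (32 * d) * n)) := by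
  filter_upwards [h.eventually_uniformProb_independenceNumber_edgesOf_lt_le (J := J) hq hε₀ hε hJ,
    eventually_ne_atTop 0] with n hlower hn I _ hI
  have hδ' : 2 ≤ δ * edgeRate q d Y := h.two_le_mul_edgeRate.trans
    (mul_le_mul_of_nonneg_right (by linarith) h.edgeRate_pos.le)
  refine (uniformProb_mono fun w _ hw => ?_).trans ((uniformProb_or_le _ _ _).trans (add_le_add
    (h.uniformProb_lt_independenceNumber_edgesOf_le hq hJ hI hn (by linarith) hδ')
    (hlower I hI)))
  have hscale : 4 * ε * (Y * n) ≤ δ * (Y * n) :=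
    mul_le_mul_of_nonneg_right hδ (mul_nonneg h.pos.le n.cast_nonneg)
  rw [abs_le, not_and_or, not_le, not_le] at hw
  exact hw.symm.imp (fun hw => by linarith) fun hw => by linarith

end LargeDegree

end Concentration

/-! ### Transfer to simple hypergraphs -/

section Transfer

variable {q d n : ℕ} {ε δ Y : ℝ} {I J : Type*} [Fintype I] [Fintype J]

lemma one_sub_uniformProb_mul_le_uniformProb_regularFamily [Nontrivial J]
    (hIJ : Fintype.card I * Fintype.card J = d * n)
    (hI : 13 * (Fintype.card J * d) ^ 2 < Fintype.card I) (P : Finset (Finset (Fin n)) → Prop) :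
    1 - uniformProb (wordsOfContent (I × J) fun _ : Fin n => d) (fun w => ¬ P (edgesOf w))
        * (2 * ((d * n : ℝ) ^ 2) ^ (12 * (Fintype.card J * d) ^ 2))
      ≤ uniformProb (regularFamily n (Fintype.card J) d) P := by
  have hdn : (0 : ℝ) < d * n := by
    rw [← Nat.cast_mul, ← hIJ]
    exact Nat.cast_pos.2 (Nat.mul_pos (by omega) Fintype.card_pos)
  set C : ℝ := 2 * ((d * n : ℝ) ^ 2) ^ (12 * (Fintype.card J * d) ^ 2)
  have hC : 0 < C := by positivity
  have hsimple := le_uniformProb_simpleWord hIJ hI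
  have hpos := (one_div_pos.2 hC).trans_le hsimple
  obtain ⟨w, hw, hw'⟩ := exists_of_uniformProb_ne_zero hpos.ne'
  have hbad : uniformProb (regularFamily n (Fintype.card J) d) (fun E => ¬ P E) * (1 / C)
      ≤ uniformProb (wordsOfContent (I × J) fun _ : Fin n => d) (fun w => ¬ P (edgesOf w)) :=
    (mul_le_mul_of_nonneg_left hsimple (uniformProb_nonneg _ _)).trans
      (uniformProb_regularFamily_mul_le hIJ _)
  rw [mul_one_div, div_le_iff₀ hC] at hbad
  linarith [uniformProb_add_uniformProb_not ⟨_, hw'.edgesOf_mem_regularFamily hw⟩ P]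

lemma tendsto_add_exp_neg_mul_pow (hd : 0 < d) {a b : ℝ} (ha : 0 < a) (hb : 0 < b) (K : ℕ) :
    Tendsto (fun n : ℕ => ((d * n + 1) ^ 2 * exp (-(a * n)) + exp (-(b * n)))
      * (2 * ((d * n : ℝ) ^ 2) ^ K)) atTop (nhds 0) := by
  have hlim := ((tendsto_pow_mul_exp_neg_mul hd ha (2 + 2 * K)).add
    (tendsto_pow_mul_exp_neg_mul hd hb (2 * K))).const_mul 2
  rw [add_zero, mul_zero] at hlim
  refine squeeze_zero (fun n => by positivity) (fun n => ?_) hlim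
  calc ((d * n + 1) ^ 2 * exp (-(a * n)) + exp (-(b * n))) * (2 * ((d * n : ℝ) ^ 2) ^ K)
      ≤ ((d * n + 1) ^ 2 * exp (-(a * n)) + exp (-(b * n))) * (2 * ((d * n + 1 : ℝ) ^ 2) ^ K) := by
        gcongr
        linarith
    _ = 2 * ((d * n + 1) ^ (2 + 2 * K) * exp (-(a * n))
          + (d * n + 1 : ℝ) ^ (2 * K) * exp (-(b * n))) := by
        rw [← pow_mul]
        ring

lemma LargeDegree.tendsto_uniformProb_regularFamily (h : LargeDegree q d ε Y) (hq : q ≠ 0)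
    (hε₀ : 0 < ε) (hε : ε ≤ 1 / 16) (hδ : 4 * ε ≤ δ) :
    Tendsto (fun n => uniformProb (regularFamily n (q + 1) d)
        fun E => |(independenceNumber E : ℝ) - Y * n| ≤ δ * (Y * n))
      (atTop ⊓ principal {n | q + 1 ∣ d * n}) (nhds 1) := by
  have hY := h.pos
  have hd := h.degree_pos
  have := Fin.nontrivial_iff_two_le.2 (show 2 ≤ q + 1 by omega)
  have hlim := (tendsto_add_exp_neg_mul_pow hd hY
    (show 0 < ε ^ 2 * Y ^ 2 / (32 * d) by positivity) (12 * ((q + 1) * d) ^ 2)).const_sub 1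
  rw [sub_zero] at hlim
  refine tendsto_of_tendsto_of_tendsto_of_le_of_le' (hlim.mono_left inf_le_left)
    tendsto_const_nhds ?_ (Eventually.of_forall fun _ => uniformProb_le_one _ _)
  rw [eventually_inf_principal]
  filter_upwards [h.eventually_uniformProb_not_abs_le hq hε₀ hε hδ (Fintype.card_fin _),
    eventually_gt_atTop (13 * ((q + 1) * d) ^ 2 * (q + 1))] with n hbad hn ⟨M, hM⟩
  have hMn : Fintype.card (Fin M) * (q + 1) = d * n := by rw [Fintype.card_fin, hM, mul_comm]
  have hMbig : 13 * ((q + 1) * d) ^ 2 < M := by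
    refine lt_of_mul_lt_mul_right (hn.trans_le ?_) (Nat.zero_le (q + 1))
    rw [mul_comm M, ← hM]
    exact Nat.le_mul_of_pos_left n hd
  have htransfer := one_sub_uniformProb_mul_le_uniformProb_regularFamily (I := Fin M)
    (J := Fin (q + 1)) (by rwa [Fintype.card_fin (q + 1)]) (by simpa only [Fintype.card_fin])
    fun E : Finset (Finset (Fin n)) => |(independenceNumber E : ℝ) - Y * n| ≤ δ * (Y * n)
  rw [Fintype.card_fin] at htransfer
  refine le_trans ?_ htransfer
  gcongr
  exact hbad (Fin M) hMn

end Transfer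

/-- For every integer `r ≥ 2` and every `ε > 0` there exists `d₀ = d₀(r, ε)` such that
for every fixed integer `d ≥ d₀`, w.h.p. (as `n → ∞` along `n` with `r ∣ d·n`)
`|α(H_r(n,d)) − Y·n| ≤ ε·Y·n` where `Y = (r log d/((r−1)d))^(1/(r−1))`. -/
theorem independence_number_of_random_regular_hypergraph
    (r : ℕ) (hr : 2 ≤ r) (ε : ℝ) (hε : 0 < ε) :
    ∃ d₀ : ℕ, ∀ d : ℕ, d₀ ≤ d →
      Filter.Tendsto
        (fun n : ℕ =>
          uniformProb (regularFamily n r d)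
            (fun E =>
              |(independenceNumber E : ℝ) -
                  ((r * Real.log d / (((r : ℝ) - 1) * d)) ^ ((1 : ℝ) / ((r : ℝ) - 1))) * n| ≤
                ε * (((r * Real.log d / (((r : ℝ) - 1) * d)) ^ ((1 : ℝ) / ((r : ℝ) - 1))) * n)))
        (Filter.atTop ⊓ Filter.principal {n : ℕ | r ∣ d * n}) (nhds 1) := by
  obtain ⟨q, rfl⟩ : ∃ q, r = q + 1 := ⟨r - 1, by omega⟩
  have hq : q ≠ 0 := by omega
  set η := min (ε / 4) (1 / 16)
  have hη : 0 < η := by positivity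
  have hηε : 4 * η ≤ ε := by linarith [min_le_left (ε / 4) (1 / 16)]
  obtain ⟨d₀, hd₀⟩ := eventually_atTop.1 (eventually_largeDegree hq hη)
  refine ⟨d₀, fun d hd => ?_⟩
  have hthreshold : (((q + 1 : ℕ) : ℝ) * log d / (((q + 1 : ℕ) - 1 : ℝ) * d))
      ^ (1 / ((q + 1 : ℕ) - 1 : ℝ)) = threshold q d := by
    rw [threshold, Nat.cast_add_one, add_sub_cancel_right]
  rw [hthreshold]
  exact (hd₀ d hd).tendsto_uniformProb_regularFamily hq hη (min_le_right _ _) hηε
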